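/- For every radius r with 0.85 ≤ r ≤ 1, there is a coloring of the sphere of radius r in ℝ³ with 7 colors avoiding unit distance; that is, a function f from {x ∈ ℝ³ : ‖x‖ = r} to a 7-element set such that f(x) ≠ f(y) whenever ‖x − y‖ = 1 (realized by a 21-tile quasi-scalable 7-tiling with 3-fold rotational symmetry). -/

import Mathlib

set_option maxRecDepth 100000

namespace Sph7

/-- An integer vector, stored with its coordinates shifted by `4096` so that they are natural
numbers; `T` caches a multiple of the coordinate sum. -/
structure V where
  X : Nat
  Y : Nat
  Z : Nat
  T : Nat
  hT : T = 4096 * (X + Y + Z)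

/-- Colour label of a facet: one colour, or two colours separated by a circle around `v`. -/
inductive Lab where
  | plain (k : Nat)
  | arc (v : V) (k l : Nat)

/-- A triangle, a number bounded by the norms in it, the indices of its neighbours, a label. -/
structure Facet where
  a : V
  b : V
  c : V
  h : Nat
  na : Nat
  nb : Nat
  nc : Nat
  lab : Lab

inductive Side where
  | all
  | ins (v : V)
  | out (v : V)

/-- A coloured piece of the sphere. -/
structure Pc where
  a : V
  b : V
  c : V
  h : Nat
  k : Nat
  side : Side

structure Cfg where
  sp : List V
  hi : Nat
  lo : Nat
  R2 : Nat
  K : Nat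

/-- Conjunction, in a form that the kernel evaluates quickly. -/
noncomputable def an (a b : Bool) : Bool := Bool.rec false b a

/-- Disjunction, in a form that the kernel evaluates quickly. -/
noncomputable def orr (a b : Bool) : Bool := Bool.rec b true a

noncomputable def allR {α : Type} (f : α → Bool) (l : List α) : Bool :=
  List.rec true (fun a _ ih => an (f a) ih) l

noncomputable def geN (K : Nat) (u v : V) : Bool :=
  V.rec (fun x y z t _ => V.rec (fun x' y' z' t' _ =>
    Nat.ble (Nat.add K (Nat.add t t'))
      (Nat.add (Nat.add (Nat.mul x x') (Nat.mul y y')) (Nat.add (Nat.mul z z') 50331648))) v) u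

noncomputable def ltN (K : Nat) (u v : V) : Bool := Bool.rec true false (geN K u v)

def dot : V → V → Int
  | ⟨x, y, z, t, _⟩, ⟨x', y', z', t', _⟩ =>
    Int.subNatNat
      (Nat.add (Nat.add (Nat.mul x x') (Nat.mul y y')) (Nat.add (Nat.mul z z') 50331648))
      (Nat.add t t')

def vEq : V → V → Bool
  | ⟨x, y, z, _, _⟩, ⟨x', y', z', _, _⟩ => Nat.beq x x' && (Nat.beq y y' && Nat.beq z z')

def co (n : Nat) : Int := Int.subNatNat n 4096

def det : V → V → V → Int
  | ⟨x, y, z, _, _⟩, ⟨x', y', z', _, _⟩, ⟨x'', y'', z'', _, _⟩ =>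
    co x * (co y' * co z'' - co z' * co y'') + co y * (co z' * co x'' - co x' * co z'')
      + co z * (co x' * co y'' - co y' * co x'')

def df (m n : Nat) : Int := Int.subNatNat m n

def orient : V → V → V → V → Int
  | ⟨x, y, z, _, _⟩, ⟨x₁, y₁, z₁, _, _⟩, ⟨x₂, y₂, z₂, _, _⟩, ⟨x₃, y₃, z₃, _, _⟩ =>
    df x₃ x * (df y₁ y * df z₂ z - df z₁ z * df y₂ y)
      + df y₃ y * (df z₁ z * df x₂ x - df x₁ x * df z₂ z)
      + df z₃ z * (df x₁ x * df y₂ y - df y₁ y * df x₂ x)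

/-- All nine pairs of vertices. -/
noncomputable def nine (f : V → V → Bool) (p q : Pc) : Bool :=
  Pc.rec (fun a b c _ _ _ => Pc.rec (fun a' b' c' _ _ _ =>
    an (f a a') (an (f b b') (an (f c c') (an (f a b') (an (f a c')
      (an (f b a') (an (f b c') (an (f c a') (f c b')))))))))  q) p

/-- `p = (m+1) t - m v` has angle with `s` less than the critical one. -/
def pm1 (g : Cfg) (v t s : V) (m : Int) : Bool :=
  decide (0 < (m + 1) * dot t s - m * dot v s) &&
  decide ((g.hi : Int) * g.hi * g.R2 *
      ((m + 1) * (m + 1) * dot t t - 2 * m * (m + 1) * dot t v + m * m * dot v v)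
    < 1000000 * (((m + 1) * dot t s - m * dot v s) * ((m + 1) * dot t s - m * dot v s)))

def pm (g : Cfg) (v t a b c : V) (m : Int) : Bool :=
  pm1 g v t a m && (pm1 g v t b m && pm1 g v t c m)

def pms (g : Cfg) (v a b c t : V) : Bool :=
  vEq t v || (pm g v t a b c 0 || (pm g v t a b c 1 || (pm g v t a b c 2 || pm g v t a b c 3)))

def ptest (g : Cfg) : Pc → Pc → Bool
  | ⟨a, b, c, _, k, _⟩, ⟨a', b', c', _, _, .ins v⟩ =>
    ((!vEq a v && (!vEq b v && !vEq c v)) || (Nat.blt 0 k && g.sp.any (vEq v))) &&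
      (pms g v a' b' c' a && (pms g v a' b' c' b && pms g v a' b' c' c))
  | _, _ => false

def q1 (v t s : V) : Bool :=
  decide (dot t s * dot v v ≤ dot t v * dot v s)

def q3 (v a b c t : V) : Bool :=
  decide (0 < dot t v) && (q1 v t a && (q1 v t b && q1 v t c))

def qout (g : Cfg) (v : V) (h : Nat) (s : V) : Bool :=
  decide (dot v s ≤ 0) ||
    decide (1000000 * (dot v s * dot v s) < (g.lo : Int) * g.lo * dot v v * (h * h))

def outTest (v : V) : Side → Bool
  | .out u => vEq u v
  | _ => false

def qtest (g : Cfg) (v : V) : Pc → Pc → Bool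
  | ⟨a, b, c, _, _, _⟩, ⟨a', b', c', h', _, s⟩ =>
    (outTest v s || (qout g v h' a' && (qout g v h' b' && qout g v h' c'))) &&
    (q3 v a' b' c' a && (q3 v a' b' c' b && q3 v a' b' c' c))

def special (g : Cfg) (p q : Pc) : Bool :=
  ptest g p q || g.sp.any (fun v => qtest g v p q)

noncomputable def thr (lo : Nat) (p q : Pc) : Nat :=
  Pc.rec (fun _ _ _ h _ _ => Pc.rec (fun _ _ _ h' _ _ =>
    Nat.div (Nat.add (Nat.mul lo (Nat.mul h h')) 999) 1000) q) p

noncomputable def pairTest (g : Cfg) (lo K : Nat) (p q : Pc) : Bool :=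
  orr (nine (ltN (thr lo p q)) p q) (orr (nine (geN K) p q)
    (special g p q || special g q p))

def pieces : Facet → List Pc
  | ⟨a, b, c, h, _, _, _, .plain k⟩ => [⟨a, b, c, h, k, .all⟩]
  | ⟨a, b, c, h, _, _, _, .arc v k l⟩ => [⟨a, b, c, h, k, .ins v⟩, ⟨a, b, c, h, l, .out v⟩]

noncomputable def consIf (k k' : Nat) (p : Pc) (l : List Pc) : List Pc :=
  Bool.rec l (p :: l) (Nat.beq k k')

/-- The pieces of colour `k`. -/
noncomputable def pcs (k : Nat) (L : List Facet) : List Pc :=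
  List.rec [] (fun F _ ih => Facet.rec (fun a b c h _ _ _ lab =>
    Lab.rec (fun k' => consIf k k' ⟨a, b, c, h, k', .all⟩ ih)
      (fun v k' l' => consIf k k' ⟨a, b, c, h, k', .ins v⟩
        (consIf k l' ⟨a, b, c, h, l', .out v⟩ ih)) lab) F) L

noncomputable def pairsTest (g : Cfg) (lo K : Nat) (L : List Pc) : Bool :=
  List.rec true (fun p l ih => an (allR (pairTest g lo K p) (p :: l)) ih) L

noncomputable def colTest (g : Cfg) (L : List Facet) (k : Nat) : Bool :=
  Cfg.rec (fun _ _ lo _ K => pairsTest g lo K (pcs k L)) g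

/-- `G` contains the edge `a b` and has `c` strictly below its plane. -/
def nbTest (G : Option Facet) (a b c : V) : Bool :=
  match G with
  | none => false
  | some ⟨a', b', c', _, _, _, _, _⟩ =>
    (vEq a a' || (vEq a b' || vEq a c')) && ((vEq b a' || (vEq b b' || vEq b c')) &&
      decide (orient a' b' c' c < 0))

noncomputable def facetTest (g : Cfg) (L : List Facet) : Facet → Bool
  | ⟨a, b, c, h, na, nb, nc, l⟩ =>
    (Nat.blt 0 h && (geN (h * h) a a && (geN (h * h) b b && (geN (h * h) c c &&
      (geN (h * h) a b && (geN (h * h) a c && geN (h * h) b c)))))) &&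
    ((!geN (g.R2 + 1) a a && (!geN (g.R2 + 1) b b && !geN (g.R2 + 1) c c)) &&
    (decide (0 < det a b c) &&
    ((nbTest L[na]? b c a && (nbTest L[nb]? a c b && nbTest L[nc]? a b c)) &&
    (match l with
      | .plain k => Nat.blt k 7
      | .arc _ k k' => Nat.blt k 7 && Nat.blt k' 7))))

noncomputable def facetsTest (g : Cfg) (L M : List Facet) : Bool := M.all (facetTest g L)

def spTest (L : List Facet) (v : V) : Bool :=
  L.any fun F => match F with
    | ⟨a, b, c, _, _, _, _, .plain 0⟩ => vEq a v || (vEq b v || vEq c v)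
    | _ => false

def cfgTest (g : Cfg) (L : List Facet) : Bool :=
  Nat.blt (g.hi * g.R2) (g.K * 1000) && (Nat.blt 0 g.lo && g.sp.all (spTest L))

/-! ### Semantics -/

abbrev E := EuclideanSpace ℝ (Fin 3)

/-- The real vector described by a `V`. -/
noncomputable def vec (v : V) : E := !₂[(v.X : ℝ) - 4096, (v.Y : ℝ) - 4096, (v.Z : ℝ) - 4096]

theorem an_iff (a b : Bool) : an a b = true ↔ a = true ∧ b = true := by
  cases a <;> cases b <;> simp [an]

theorem orr_iff (a b : Bool) : orr a b = true ↔ a = true ∨ b = true := by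
  cases a <;> cases b <;> simp [orr]

theorem allR_iff {α : Type} (f : α → Bool) (l : List α) :
    allR f l = true ↔ ∀ a ∈ l, f a = true := by
  induction l with
  | nil => simp [allR]
  | cons a l ih =>
    have : allR f (a :: l) = an (f a) (allR f l) := rfl
    rw [this, an_iff, ih]; simp

theorem inner_coord (x y : E) : inner ℝ x y = x 0 * y 0 + x 1 * y 1 + x 2 * y 2 := by
  simp [PiLp.inner_apply, Fin.sum_univ_three]; ring

theorem vec0 (v : V) : vec v 0 = (v.X : ℝ) - 4096 := by simp [vec]
theorem vec1 (v : V) : vec v 1 = (v.Y : ℝ) - 4096 := by simp [vec]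
theorem vec2 (v : V) : vec v 2 = (v.Z : ℝ) - 4096 := by simp [vec]

theorem cast_sub (A B : Nat) : ((Int.subNatNat A B : Int) : ℝ) = (A : ℝ) - B := by
  rw [Int.subNatNat_eq_coe]; push_cast; rfl

theorem dot_eq (u v : V) : ((dot u v : Int) : ℝ) = inner ℝ (vec u) (vec v) := by
  rw [inner_coord]
  simp only [vec0, vec1, vec2]
  obtain ⟨x, y, z, t, h⟩ := u
  obtain ⟨x', y', z', t', h'⟩ := v
  subst h h'
  unfold dot
  rw [cast_sub]
  simp only [Nat.add_eq, Nat.mul_eq]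
  push_cast
  ring

theorem geN_iff (K : Nat) (u v : V) : geN K u v = true ↔ (K : ℝ) ≤ inner ℝ (vec u) (vec v) := by
  rw [inner_coord]
  simp only [vec0, vec1, vec2]
  obtain ⟨x, y, z, t, h⟩ := u
  obtain ⟨x', y', z', t', h'⟩ := v
  subst h h'
  simp only [geN, Nat.add_eq, Nat.mul_eq, Nat.ble_eq]
  rw [← Nat.cast_le (α := ℝ)]
  push_cast
  constructor <;> intro h <;> linarith

theorem ltN_iff (K : Nat) (u v : V) : ltN K u v = true ↔ inner ℝ (vec u) (vec v) < (K : ℝ) := by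
  rw [← not_le, ← geN_iff]
  unfold ltN
  cases geN K u v <;> simp

theorem vEq_vec {u v : V} (h : vEq u v = true) : vec u = vec v := by
  obtain ⟨x, y, z, t, h⟩ := u
  obtain ⟨x', y', z', t', h'⟩ := v
  simp only [vEq, Bool.and_eq_true, Nat.beq_eq] at h
  obtain ⟨rfl, rfl, rfl⟩ := h
  rfl

/-- Nonnegative combinations of three vectors. -/
def InCone (a b c x : E) : Prop :=
  ∃ α β γ : ℝ, 0 ≤ α ∧ 0 ≤ β ∧ 0 ≤ γ ∧ x = α • a + β • b + γ • c

theorem cone_inner {a b c x : E} (hx : InCone a b c x) (y : E) (K : ℝ)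
    (ha : K ≤ inner ℝ a y) (hb : K ≤ inner ℝ b y) (hc : K ≤ inner ℝ c y) (hK : 0 ≤ K) 
    {ρ : ℝ} (hρ : 0 < ρ) (na : ‖a‖ ≤ ρ) (nb : ‖b‖ ≤ ρ) (nc : ‖c‖ ≤ ρ) :
    K * ‖x‖ ≤ ρ * inner ℝ x y := by
  obtain ⟨α, β, γ, h1, h2, h3, rfl⟩ := hx
  have hn : ‖α • a + β • b + γ • c‖ ≤ (α + β + γ) * ρ := by
    refine (norm_add₃_le).trans ?_
    simp only [norm_smul, Real.norm_eq_abs, abs_of_nonneg h1, abs_of_nonneg h2, abs_of_nonneg h3]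
    nlinarith
  have hi : (α + β + γ) * K ≤ inner ℝ (α • a + β • b + γ • c) y := by
    simp only [inner_add_left, real_inner_smul_left]
    nlinarith
  nlinarith

/-- Upper version. -/
theorem cone_inner_lt {a b c x : E} (hx : InCone a b c x) (hx0 : x ≠ 0) (y : E) (K : ℝ)
    (ha : inner ℝ a y < K) (hb : inner ℝ b y < K) (hc : inner ℝ c y < K) (hK : 0 ≤ K)
    {h : ℝ} (hh : 0 < h) (haa : h ^ 2 ≤ inner ℝ a a) (hbb : h ^ 2 ≤ inner ℝ b b)
    (hcc : h ^ 2 ≤ inner ℝ c c) (hab : h ^ 2 ≤ inner ℝ a b) (hac : h ^ 2 ≤ inner ℝ a c)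
    (hbc : h ^ 2 ≤ inner ℝ b c) : h * inner ℝ x y < K * ‖x‖ := by
  obtain ⟨α, β, γ, h1, h2, h3, rfl⟩ := hx
  have hs : 0 < α + β + γ := by
    rcases h1.lt_or_eq with h | h
    · linarith
    rcases h2.lt_or_eq with h' | h'
    · linarith
    rcases h3.lt_or_eq with h'' | h''
    · linarith
    exact absurd (by simp [← h, ← h', ← h'']) hx0
  have hn : h * (α + β + γ) ≤ ‖α • a + β • b + γ • c‖ := by
    apply le_of_sq_le_sq _ (norm_nonneg _)
    rw [← real_inner_self_eq_norm_sq]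
    simp only [inner_add_left, inner_add_right, real_inner_smul_left, real_inner_smul_right]
    rw [real_inner_comm a b, real_inner_comm a c, real_inner_comm b c] 
    nlinarith [mul_nonneg h1 h2, mul_nonneg h1 h3, mul_nonneg h2 h3, mul_nonneg h1 h1,
      mul_nonneg h2 h2, mul_nonneg h3 h3,
      mul_le_mul_of_nonneg_left hab (mul_nonneg h1 h2), mul_le_mul_of_nonneg_left hac (mul_nonneg h1 h3),
      mul_le_mul_of_nonneg_left hbc (mul_nonneg h2 h3), mul_le_mul_of_nonneg_left haa (mul_nonneg h1 h1),
      mul_le_mul_of_nonneg_left hbb (mul_nonneg h2 h2), mul_le_mul_of_nonneg_left hcc (mul_nonneg h3 h3)]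
  have hi : inner ℝ (α • a + β • b + γ • c) y < (α + β + γ) * K := by
    simp only [inner_add_left, real_inner_smul_left]
    by_contra hcon
    push Not at hcon
    have e1 := mul_le_mul_of_nonneg_left ha.le h1
    have e2 := mul_le_mul_of_nonneg_left hb.le h2
    have e3 := mul_le_mul_of_nonneg_left hc.le h3
    rcases h1.lt_or_eq with h | h
    · nlinarith [mul_lt_mul_of_pos_left ha h]
    rcases h2.lt_or_eq with h' | h'
    · nlinarith [mul_lt_mul_of_pos_left hb h']
    rcases h3.lt_or_eq with h'' | h''
    · nlinarith [mul_lt_mul_of_pos_left hc h'']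
    linarith
  calc _ < h * ((α + β + γ) * K) := mul_lt_mul_of_pos_left hi hh
    _ = K * (h * (α + β + γ)) := by ring
    _ ≤ _ := mul_le_mul_of_nonneg_left hn hK

structure PcOK (R2 : ℝ) (p : Pc) : Prop where
  hp : (0 : ℝ) < p.h
  aa : (p.h : ℝ) ^ 2 ≤ inner ℝ (vec p.a) (vec p.a)
  bb : (p.h : ℝ) ^ 2 ≤ inner ℝ (vec p.b) (vec p.b)
  cc : (p.h : ℝ) ^ 2 ≤ inner ℝ (vec p.c) (vec p.c)
  ab : (p.h : ℝ) ^ 2 ≤ inner ℝ (vec p.a) (vec p.b)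
  ac : (p.h : ℝ) ^ 2 ≤ inner ℝ (vec p.a) (vec p.c)
  bc : (p.h : ℝ) ^ 2 ≤ inner ℝ (vec p.b) (vec p.c)
  na : inner ℝ (vec p.a) (vec p.a) ≤ R2
  nb : inner ℝ (vec p.b) (vec p.b) ≤ R2
  nc : inner ℝ (vec p.c) (vec p.c) ≤ R2

/-- The side condition of a piece. -/
def Side.Sat (κ : ℝ) (x : E) : Side → Prop
  | .all => True
  | .ins v => κ * (‖vec v‖ * ‖x‖) ≤ inner ℝ (vec v) x
  | .out v => inner ℝ (vec v) x < κ * (‖vec v‖ * ‖x‖)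

def Pc.Mem (κ : ℝ) (p : Pc) (x : E) : Prop :=
  InCone (vec p.a) (vec p.b) (vec p.c) x ∧ p.side.Sat κ x

theorem norm_le_of_inner {R2 : ℝ} {u : E} (h : inner ℝ u u ≤ R2) : ‖u‖ ≤ √R2 := by
  rw [real_inner_self_eq_norm_sq] at h
  exact Real.le_sqrt_of_sq_le h

theorem nine_iff (f : V → V → Bool) (p q : Pc) : nine f p q = true ↔
    (f p.a q.a = true ∧ f p.b q.b = true ∧ f p.c q.c = true ∧ f p.a q.b = true ∧
      f p.a q.c = true ∧ f p.b q.a = true ∧ f p.b q.c = true ∧ f p.c q.a = true ∧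
      f p.c q.b = true) := by
  obtain ⟨a, b, c, h, k, s⟩ := p
  obtain ⟨a', b', c', h', k', s'⟩ := q
  simp only [nine, an_iff]

theorem PcOK.R2pos {R2 : ℝ} {p : Pc} (h : PcOK R2 p) : 0 < R2 :=
  lt_of_lt_of_le (pow_pos h.hp 2) (h.aa.trans h.na)

theorem PcOK.lower {R2 : ℝ} {p : Pc} (h : PcOK R2 p) {x : E}
    (hx : InCone (vec p.a) (vec p.b) (vec p.c) x) (y : E) (K : ℝ) (hK : 0 ≤ K)
    (ha : K ≤ inner ℝ (vec p.a) y) (hb : K ≤ inner ℝ (vec p.b) y)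
    (hc : K ≤ inner ℝ (vec p.c) y) : K * ‖x‖ ≤ √R2 * inner ℝ x y :=
  cone_inner hx y K ha hb hc hK (Real.sqrt_pos.2 h.R2pos) (norm_le_of_inner h.na)
    (norm_le_of_inner h.nb) (norm_le_of_inner h.nc)

theorem PcOK.upper {R2 : ℝ} {p : Pc} (h : PcOK R2 p) {x : E}
    (hx : InCone (vec p.a) (vec p.b) (vec p.c) x) (hx0 : x ≠ 0) (y : E) (K : ℝ) (hK : 0 ≤ K)
    (ha : inner ℝ (vec p.a) y < K) (hb : inner ℝ (vec p.b) y < K)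
    (hc : inner ℝ (vec p.c) y < K) : p.h * inner ℝ x y < K * ‖x‖ :=
  cone_inner_lt hx hx0 y K ha hb hc hK h.hp h.aa h.bb h.cc h.ab h.ac h.bc

section tests

variable {κ : ℝ} {g : Cfg} {p q : Pc} {x y : E}

theorem close_sound (hp : PcOK g.R2 p) (hq : PcOK g.R2 q)
    (hK : (g.hi : ℝ) * g.R2 < g.K * 1000) (hhi : κ ≤ g.hi / 1000)
    (hx : InCone (vec p.a) (vec p.b) (vec p.c) x) (hy : InCone (vec q.a) (vec q.b) (vec q.c) y)
    (hx0 : x ≠ 0) (hy0 : y ≠ 0) (h : nine (geN g.K) p q = true) :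
    κ * (‖x‖ * ‖y‖) < inner ℝ x y := by
  rw [nine_iff] at h
  simp only [geN_iff] at h
  obtain ⟨h1, h2, h3, h4, h5, h6, h7, h8, h9⟩ := h
  have hK0 : (0 : ℝ) ≤ g.K := Nat.cast_nonneg _
  have ea := hp.lower hx (vec q.a) g.K hK0 h1 h6 h8
  have eb := hp.lower hx (vec q.b) g.K hK0 h4 h2 h9
  have ec := hp.lower hx (vec q.c) g.K hK0 h5 h7 h3
  set ρ := √(g.R2 : ℝ) with hρ
  have hρ0 : 0 < ρ := Real.sqrt_pos.2 hp.R2pos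
  have hρ2 : ρ * ρ = g.R2 := Real.mul_self_sqrt hp.R2pos.le
  have nx : 0 < ‖x‖ := norm_pos_iff.2 hx0
  have ny : 0 < ‖y‖ := norm_pos_iff.2 hy0
  have key := hq.lower hy x (g.K * ‖x‖ / ρ) (by positivity)
    (by rw [div_le_iff₀ hρ0, real_inner_comm]; linarith)
    (by rw [div_le_iff₀ hρ0, real_inner_comm]; linarith)
    (by rw [div_le_iff₀ hρ0, real_inner_comm]; linarith)
  rw [real_inner_comm, ← hρ] at key
  have key2 : g.K * (‖x‖ * ‖y‖) ≤ g.R2 * inner ℝ x y := by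
    rw [← hρ2]
    have := mul_le_mul_of_nonneg_left key hρ0.le
    calc _ = ρ * (g.K * ‖x‖ / ρ * ‖y‖) := by field_simp
      _ ≤ _ := this
      _ = _ := by ring
  have hR : (0 : ℝ) < g.R2 := hp.R2pos
  have hn : 0 < ‖x‖ * ‖y‖ := by positivity
  have : κ * g.R2 < g.K := by nlinarith
  by_contra hcon
  push Not at hcon
  nlinarith

theorem far_sound (hp : PcOK g.R2 p) (hq : PcOK g.R2 q) (hlo : g.lo / 1000 ≤ κ)
    (hx : InCone (vec p.a) (vec p.b) (vec p.c) x) (hy : InCone (vec q.a) (vec q.b) (vec q.c) y)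
    (hx0 : x ≠ 0) (hy0 : y ≠ 0) (h : nine (ltN (thr g.lo p q)) p q = true) :
    inner ℝ x y < κ * (‖x‖ * ‖y‖) := by
  rw [nine_iff] at h
  simp only [ltN_iff] at h
  set K : ℝ := g.lo / 1000 * (p.h * q.h) with hKd
  have hK0 : 0 ≤ K := by positivity
  have conv : ∀ u v : V, inner ℝ (vec u) (vec v) < ((thr g.lo p q : ℕ) : ℝ) →
      inner ℝ (vec u) (vec v) < K := by
    intro u v huv
    rw [← dot_eq] at huv ⊢
    have h1 : dot u v < (thr g.lo p q : ℕ) := by exact_mod_cast huv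
    have h2 : thr g.lo p q = (g.lo * (p.h * q.h) + 999) / 1000 := by
      obtain ⟨a, b, c, h, k, s⟩ := p
      obtain ⟨a', b', c', h', k', s'⟩ := q
      rfl
    have h3 : 1000 * dot u v < (g.lo * (p.h * q.h) : ℕ) := by
      generalize g.lo * (p.h * q.h) = A at *
      omega
    have h4 : (1000 : ℝ) * dot u v < g.lo * (p.h * q.h) := by exact_mod_cast h3
    rw [hKd]; linarith
  obtain ⟨h1, h2, h3, h4, h5, h6, h7, h8, h9⟩ := h
  have hh : (0 : ℝ) < p.h := hp.hp
  have hh' : (0 : ℝ) < q.h := hq.hp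
  have ea := hp.upper hx hx0 (vec q.a) K hK0 (conv _ _ h1) (conv _ _ h6) (conv _ _ h8)
  have eb := hp.upper hx hx0 (vec q.b) K hK0 (conv _ _ h4) (conv _ _ h2) (conv _ _ h9)
  have ec := hp.upper hx hx0 (vec q.c) K hK0 (conv _ _ h5) (conv _ _ h7) (conv _ _ h3)
  have key := hq.upper hy hy0 x (K * ‖x‖ / p.h) (by positivity)
    (by rw [lt_div_iff₀ hh, real_inner_comm, mul_comm]; exact ea)
    (by rw [lt_div_iff₀ hh, real_inner_comm, mul_comm]; exact eb)
    (by rw [lt_div_iff₀ hh, real_inner_comm, mul_comm]; exact ec)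
  rw [real_inner_comm] at key
  have e : K * ‖x‖ / p.h * ‖y‖ = q.h * (g.lo / 1000 * (‖x‖ * ‖y‖)) := by
    rw [hKd]; field_simp
  rw [e] at key
  have := lt_of_mul_lt_mul_left key hh'.le
  have hn : 0 ≤ ‖x‖ * ‖y‖ := by positivity
  nlinarith

theorem pm1_sound {v t s : V} {m : Int} (h : pm1 g v t s m = true) :
    g.hi / 1000 * √(g.R2 : ℝ) * ‖((m : ℝ) + 1) • vec t - (m : ℝ) • vec v‖ <
      inner ℝ (vec s) (((m : ℝ) + 1) • vec t - (m : ℝ) • vec v) := by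
  simp only [pm1, Bool.and_eq_true, decide_eq_true_eq] at h
  obtain ⟨h1, h2⟩ := h
  have h1' : (0 : ℝ) < ((m : ℝ) + 1) * (dot t s : ℤ) - m * (dot v s : ℤ) := by exact_mod_cast h1
  have h2' : (g.hi : ℝ) * g.hi * g.R2 * (((m : ℝ) + 1) * (m + 1) * (dot t t : ℤ)
      - 2 * m * (m + 1) * (dot t v : ℤ) + m * m * (dot v v : ℤ))
    < 1000000 * ((((m : ℝ) + 1) * (dot t s : ℤ) - m * (dot v s : ℤ)) *
      (((m : ℝ) + 1) * (dot t s : ℤ) - m * (dot v s : ℤ))) := by exact_mod_cast h2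
  simp only [dot_eq] at h1' h2'
  set P : E := ((m : ℝ) + 1) • vec t - (m : ℝ) • vec v with hP
  have e1 : ((m : ℝ) + 1) * inner ℝ (vec t) (vec s) - m * inner ℝ (vec v) (vec s)
      = inner ℝ (vec s) P := by
    rw [hP, inner_sub_right, real_inner_smul_right, real_inner_smul_right,
      real_inner_comm (vec s), real_inner_comm (vec s)]
  have e2 : ((m : ℝ) + 1) * (m + 1) * inner ℝ (vec t) (vec t)
      - 2 * m * (m + 1) * inner ℝ (vec t) (vec v) + m * m * inner ℝ (vec v) (vec v)
      = ‖P‖ ^ 2 := by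
    rw [← real_inner_self_eq_norm_sq, hP]
    simp only [inner_sub_left, inner_sub_right, real_inner_smul_left, real_inner_smul_right]
    rw [real_inner_comm (vec t) (vec v)]
    ring
  rw [e1] at h1' h2'
  rw [e2] at h2'
  have hR : √(g.R2 : ℝ) * √(g.R2 : ℝ) = g.R2 := Real.mul_self_sqrt (Nat.cast_nonneg _)
  apply lt_of_pow_lt_pow_left₀ 2 h1'.le
  have : (g.hi / 1000 * √(g.R2 : ℝ) * ‖P‖) ^ 2 = (g.hi : ℝ) * g.hi * g.R2 * ‖P‖ ^ 2 / 1000000 := by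
    linear_combination ((g.hi : ℝ) ^ 2 * ‖P‖ ^ 2 / 1000000) * hR
  rw [this]
  linarith

theorem pm_sound {v t : V} {m : Int} (hm : 0 ≤ m) (hq : PcOK g.R2 q)
    (hhi : κ ≤ g.hi / 1000) (hκ : 0 ≤ κ)
    (hy : InCone (vec q.a) (vec q.b) (vec q.c) y) (hy0 : y ≠ 0)
    (hv : κ * (‖vec v‖ * ‖y‖) ≤ inner ℝ (vec v) y) (h : pm g v t q.a q.b q.c m = true) :
    κ * (‖vec t‖ * ‖y‖) < inner ℝ (vec t) y := by
  simp only [pm, Bool.and_eq_true] at h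
  obtain ⟨h1, h2, h3⟩ := h
  have f1 := pm1_sound h1
  have f2 := pm1_sound h2
  have f3 := pm1_sound h3
  set P : E := ((m : ℝ) + 1) • vec t - (m : ℝ) • vec v with hP
  set ρ := √(g.R2 : ℝ) with hρ
  have hρ0 : 0 < ρ := Real.sqrt_pos.2 hq.R2pos
  have ny : 0 < ‖y‖ := norm_pos_iff.2 hy0
  obtain ⟨K, hK, k1, k2, k3⟩ : ∃ K, g.hi / 1000 * ρ * ‖P‖ < K ∧ K ≤ inner ℝ (vec q.a) P ∧
      K ≤ inner ℝ (vec q.b) P ∧ K ≤ inner ℝ (vec q.c) P :=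
    ⟨_, lt_min f1 (lt_min f2 f3), min_le_left _ _, (min_le_right _ _).trans (min_le_left _ _),
      (min_le_right _ _).trans (min_le_right _ _)⟩
  have hη : 0 ≤ g.hi / 1000 * ρ * ‖P‖ := by positivity
  have key := hq.lower hy P K (hη.trans hK.le) k1 k2 k3
  have key2 : ρ * (κ * (‖P‖ * ‖y‖)) < ρ * inner ℝ y P := by
    refine lt_of_lt_of_le ?_ key
    have a1 := mul_lt_mul_of_pos_right hK ny
    have a2 : κ * (ρ * ‖P‖ * ‖y‖) ≤ g.hi / 1000 * (ρ * ‖P‖ * ‖y‖) :=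
      mul_le_mul_of_nonneg_right hhi (by positivity)
    linarith
  have key3 := lt_of_mul_lt_mul_left key2 hρ0.le
  have hm' : (0 : ℝ) ≤ m := by exact_mod_cast hm
  have e1 : ((m : ℝ) + 1) * inner ℝ (vec t) y = inner ℝ y P + m * inner ℝ (vec v) y := by
    rw [hP, inner_sub_right, real_inner_smul_right, real_inner_smul_right,
      real_inner_comm y (vec t), real_inner_comm y (vec v)]
    ring
  have e2 : ((m : ℝ) + 1) * ‖vec t‖ ≤ ‖P‖ + m * ‖vec v‖ := by
    have : ((m : ℝ) + 1) • vec t = P + (m : ℝ) • vec v := by rw [hP]; abel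
    have h4 := norm_add_le P ((m : ℝ) • vec v)
    rw [← this, norm_smul, norm_smul, Real.norm_eq_abs, Real.norm_eq_abs, abs_of_nonneg hm',
      abs_of_nonneg (by linarith)] at h4
    exact h4
  have e3 := mul_le_mul_of_nonneg_left e2 (mul_nonneg hκ ny.le)
  have e4 := mul_le_mul_of_nonneg_left hv hm'
  have : ((m : ℝ) + 1) * (κ * (‖vec t‖ * ‖y‖)) < ((m : ℝ) + 1) * inner ℝ (vec t) y := by
    rw [e1]; nlinarith
  exact lt_of_mul_lt_mul_left this (by linarith)

theorem pms_sound {v t : V} (hq : PcOK g.R2 q)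
    (hhi : κ ≤ g.hi / 1000) (hκ : 0 ≤ κ)
    (hy : InCone (vec q.a) (vec q.b) (vec q.c) y) (hy0 : y ≠ 0)
    (hv : κ * (‖vec v‖ * ‖y‖) ≤ inner ℝ (vec v) y) (h : pms g v q.a q.b q.c t = true) :
    vEq t v = true ∨ κ * (‖vec t‖ * ‖y‖) < inner ℝ (vec t) y := by
  simp only [pms, Bool.or_eq_true] at h
  rcases h with h | h | h | h | h
  · exact Or.inl h
  all_goals exact Or.inr (pm_sound (by norm_num) hq hhi hκ hy hy0 hv h)

/-- A combination of three vectors whose products with `y` exceed a multiple of their norms. -/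
theorem comb_sound {a b c : E} (hκ : 0 ≤ κ) (hx : InCone a b c x) 
    (ha : κ * (‖a‖ * ‖y‖) ≤ inner ℝ a y) (hb : κ * (‖b‖ * ‖y‖) ≤ inner ℝ b y)
    (hc : κ * (‖c‖ * ‖y‖) ≤ inner ℝ c y) (h : inner ℝ x y ≤ κ * (‖x‖ * ‖y‖)) :
    ∃ α β γ : ℝ, 0 ≤ α ∧ 0 ≤ β ∧ 0 ≤ γ ∧ x = α • a + β • b + γ • c ∧
      (α = 0 ∨ κ * (‖a‖ * ‖y‖) = inner ℝ a y) ∧ (β = 0 ∨ κ * (‖b‖ * ‖y‖) = inner ℝ b y) ∧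
      (γ = 0 ∨ κ * (‖c‖ * ‖y‖) = inner ℝ c y) := by
  obtain ⟨α, β, γ, h1, h2, h3, rfl⟩ := hx
  have hn : ‖α • a + β • b + γ • c‖ ≤ α * ‖a‖ + β * ‖b‖ + γ * ‖c‖ := by
    refine (norm_add₃_le).trans ?_
    simp only [norm_smul, Real.norm_eq_abs, abs_of_nonneg h1, abs_of_nonneg h2, abs_of_nonneg h3]
    exact le_rfl
  have hn2 := mul_le_mul_of_nonneg_left hn (mul_nonneg hκ (norm_nonneg y))
  simp only [inner_add_left, real_inner_smul_left] at h
  have e1 := mul_nonneg h1 (sub_nonneg.2 ha)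
  have e2 := mul_nonneg h2 (sub_nonneg.2 hb)
  have e3 := mul_nonneg h3 (sub_nonneg.2 hc)
  refine ⟨α, β, γ, h1, h2, h3, rfl, ?_, ?_, ?_⟩
  · have : α * (inner ℝ a y - κ * (‖a‖ * ‖y‖)) = 0 := by linarith
    rcases mul_eq_zero.1 this with h | h
    · exact Or.inl h
    · exact Or.inr (by linarith)
  · have : β * (inner ℝ b y - κ * (‖b‖ * ‖y‖)) = 0 := by linarith
    rcases mul_eq_zero.1 this with h | h
    · exact Or.inl h
    · exact Or.inr (by linarith)
  · have : γ * (inner ℝ c y - κ * (‖c‖ * ‖y‖)) = 0 := by linarith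
    rcases mul_eq_zero.1 this with h | h
    · exact Or.inl h
    · exact Or.inr (by linarith)

theorem ptest_sound (hq : PcOK g.R2 q)
    (hhi : κ ≤ g.hi / 1000) (hκ : 0 ≤ κ) (hx : p.Mem κ x) (hy : q.Mem κ y) (hx0 : x ≠ 0)
    (hy0 : y ≠ 0) (hnr : p.k ≠ 0 → ∀ v ∈ g.sp, ∀ l : ℝ, 0 ≤ l → x ≠ l • vec v)
    (h : ptest g p q = true) : κ * (‖x‖ * ‖y‖) < inner ℝ x y := by
  obtain ⟨a, b, c, hh, k, s⟩ := p
  obtain ⟨a', b', c', hh', k', s'⟩ := q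
  cases s' with
  | all => simp [ptest] at h
  | out v => simp [ptest] at h
  | ins v =>
    simp only [ptest, Bool.and_eq_true, Bool.or_eq_true, Bool.not_eq_true', List.any_eq_true] at h
    obtain ⟨h0, h1, h2, h3⟩ := h
    obtain ⟨hx, -⟩ := hx
    obtain ⟨hy, hv⟩ := hy
    simp only [Side.Sat] at hv
    have t1 := pms_sound hq hhi hκ hy hy0 hv h1
    have t2 := pms_sound hq hhi hκ hy hy0 hv h2
    have t3 := pms_sound hq hhi hκ hy hy0 hv h3
    have weak : ∀ t : V, (vEq t v = true ∨ κ * (‖vec t‖ * ‖y‖) < inner ℝ (vec t) y) →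
        κ * (‖vec t‖ * ‖y‖) ≤ inner ℝ (vec t) y := by
      rintro t (ht | ht)
      · rw [vEq_vec ht]; exact hv
      · exact ht.le
    by_contra hcon
    push Not at hcon
    obtain ⟨α, β, γ, p1, p2, p3, hxe, z1, z2, z3⟩ :=
      comb_sound hκ hx (weak _ t1) (weak _ t2) (weak _ t3) hcon
    have strong : ∀ (t : V) (α : ℝ), (vEq t v = true ∨ κ * (‖vec t‖ * ‖y‖) < inner ℝ (vec t) y) →
        (α = 0 ∨ κ * (‖vec t‖ * ‖y‖) = inner ℝ (vec t) y) → α = 0 ∨ vEq t v = true := by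
      rintro t α (ht | ht) (h' | h')
      · exact Or.inl h'
      · exact Or.inr ht
      · exact Or.inl h'
      · exact absurd h' ht.ne
    have u1 := strong _ _ t1 z1
    have u2 := strong _ _ t2 z2
    have u3 := strong _ _ t3 z3
    rcases h0 with ⟨n1, n2, n3⟩ | ⟨hk, w, hw, hwv⟩
    · apply hx0
      have : α = 0 := by simpa [n1] using u1
      have : β = 0 := by simpa [n2] using u2
      have : γ = 0 := by simpa [n3] using u3
      simp [*]
    · have hk0 : k ≠ 0 := by
        have : Nat.blt 0 k = true := hk
        simp only [Nat.blt_eq] at this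
        omega
      have sm : ∀ (t : V) (α : ℝ), (α = 0 ∨ vEq t v = true) → α • vec t = α • vec w := by
        rintro t α (h | h)
        · simp [h]
        · rw [vEq_vec h, vEq_vec hwv]
      refine hnr hk0 w hw (α + β + γ) (by positivity) ?_
      rw [hxe]
      simp only
      rw [sm _ _ u1, sm _ _ u2, sm _ _ u3, ← add_smul, ← add_smul]

theorem q1_sound {v t s : V} (h : q1 v t s = true) :
    inner ℝ (vec t) (vec s) * inner ℝ (vec v) (vec v) ≤
      inner ℝ (vec t) (vec v) * inner ℝ (vec v) (vec s) := by
  simp only [q1, decide_eq_true_eq] at h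
  simp only [← dot_eq]
  exact_mod_cast h

theorem q3_sound {v t a b c : V} (hy : InCone (vec a) (vec b) (vec c) y)
    (h : q3 v a b c t = true) : 0 < inner ℝ (vec t) (vec v) ∧
    inner ℝ (vec t) y * inner ℝ (vec v) (vec v) ≤ inner ℝ (vec t) (vec v) * inner ℝ (vec v) y := by
  simp only [q3, Bool.and_eq_true, decide_eq_true_eq] at h
  obtain ⟨h0, h1, h2, h3⟩ := h
  refine ⟨by rw [← dot_eq]; exact_mod_cast h0, ?_⟩
  have e1 := q1_sound h1
  have e2 := q1_sound h2
  have e3 := q1_sound h3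
  obtain ⟨α, β, γ, p1, p2, p3, rfl⟩ := hy
  simp only [inner_add_right, real_inner_smul_right] 
  have f1 := mul_le_mul_of_nonneg_left e1 p1
  have f2 := mul_le_mul_of_nonneg_left e2 p2
  have f3 := mul_le_mul_of_nonneg_left e3 p3
  linarith

theorem qout_sound {v s : V} {h : ℕ} (hh : (0 : ℝ) < h) (hlo : 0 < g.lo)
    (hv : 0 < ‖vec v‖) (H : qout g v h s = true) :
    inner ℝ (vec s) (vec v) < g.lo / 1000 * ‖vec v‖ * h := by
  simp only [qout, Bool.or_eq_true, decide_eq_true_eq] at H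
  have hl : (0 : ℝ) < g.lo := by exact_mod_cast hlo
  have hpos : 0 < g.lo / 1000 * ‖vec v‖ * h := by positivity
  rw [real_inner_comm]
  rcases H with H | H
  · have : inner ℝ (vec v) (vec s) ≤ 0 := by rw [← dot_eq]; exact_mod_cast H
    linarith
  · have H' : (1000000 : ℝ) * ((dot v s : ℤ) * (dot v s : ℤ)) < g.lo * g.lo * (dot v v : ℤ) * (h * h) := by
      exact_mod_cast H
    simp only [dot_eq, real_inner_self_eq_norm_sq] at H'
    apply lt_of_pow_lt_pow_left₀ 2 hpos.le
    have e : (g.lo / 1000 * ‖vec v‖ * h) ^ 2 = g.lo * g.lo * ‖vec v‖ ^ 2 * (h * h) / 1000000 := by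
      ring
    rw [e, sq]
    linarith

theorem qtest_sound {v : V} (hq : PcOK g.R2 q) (hlo : 0 < g.lo) (hlo' : g.lo / 1000 ≤ κ)
    (hx : p.Mem κ x) (hy : q.Mem κ y) (hx0 : x ≠ 0)
    (hy0 : y ≠ 0) (h : qtest g v p q = true) : inner ℝ x y < κ * (‖x‖ * ‖y‖) := by
  obtain ⟨a, b, c, hh, k, s⟩ := p
  obtain ⟨a', b', c', hh', k', s'⟩ := q
  unfold qtest at h
  rw [Bool.and_eq_true, Bool.and_eq_true, Bool.and_eq_true, Bool.or_eq_true, Bool.and_eq_true, Bool.and_eq_true] at h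
  obtain ⟨h0, h1, h2, h3⟩ := h
  obtain ⟨hx, -⟩ := hx
  obtain ⟨hy, hs⟩ := hy
  obtain ⟨a1, b1⟩ := q3_sound hy h1
  obtain ⟨a2, b2⟩ := q3_sound hy h2
  obtain ⟨a3, b3⟩ := q3_sound hy h3
  have hv : vec v ≠ 0 := by
    intro h; rw [h, inner_zero_right] at a1; exact lt_irrefl _ a1
  have nv : 0 < ‖vec v‖ := norm_pos_iff.2 hv
  have ny : 0 < ‖y‖ := norm_pos_iff.2 hy0
  have hvy : inner ℝ (vec v) y < κ * (‖vec v‖ * ‖y‖) := by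
    rcases h0 with h0 | ⟨o1, o2, o3⟩
    · cases s' with
      | all => simp [outTest] at h0
      | ins u => simp [outTest] at h0
      | out u =>
        simp only [outTest] at h0
        simp only [Side.Sat] at hs
        rwa [vEq_vec h0] at hs
    · have hh0 : (0 : ℝ) < hh' := hq.hp
      have key := hq.upper hy hy0 (vec v) (g.lo / 1000 * ‖vec v‖ * hh') (by positivity)
        (qout_sound hh0 hlo nv o1) (qout_sound hh0 hlo nv o2) (qout_sound hh0 hlo nv o3)
      simp only at key
      rw [real_inner_comm] at key
      have key' : (hh' : ℝ) * inner ℝ (vec v) y < hh' * (g.lo / 1000 * (‖vec v‖ * ‖y‖)) := by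
        linarith
      have k2 := lt_of_mul_lt_mul_left key' hh0.le
      have : g.lo / 1000 * (‖vec v‖ * ‖y‖) ≤ κ * (‖vec v‖ * ‖y‖) :=
        mul_le_mul_of_nonneg_right hlo' (by positivity)
      linarith
  have hxv : inner ℝ x y * inner ℝ (vec v) (vec v) ≤ inner ℝ x (vec v) * inner ℝ (vec v) y ∧
      0 < inner ℝ x (vec v) := by
    obtain ⟨α, β, γ, p1, p2, p3, rfl⟩ := hx
    simp only [inner_add_left, real_inner_smul_left]
    have f1 := mul_le_mul_of_nonneg_left b1 p1
    have f2 := mul_le_mul_of_nonneg_left b2 p2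
    have f3 := mul_le_mul_of_nonneg_left b3 p3
    refine ⟨by linarith, ?_⟩
    have g1 := mul_nonneg p1 a1.le
    have g2 := mul_nonneg p2 a2.le
    have g3 := mul_nonneg p3 a3.le
    rcases p1.lt_or_eq with h | h
    · have := mul_pos h a1; linarith
    rcases p2.lt_or_eq with h' | h'
    · have := mul_pos h' a2; linarith
    rcases p3.lt_or_eq with h'' | h''
    · have := mul_pos h'' a3; linarith
    exact absurd (by simp [← h, ← h', ← h'']) hx0
  obtain ⟨k1, k2⟩ := hxv
  rw [real_inner_self_eq_norm_sq] at k1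
  have k3 := mul_lt_mul_of_pos_left hvy k2
  have hκ : 0 ≤ κ := le_trans (by positivity) hlo'
  have k4 := mul_le_mul_of_nonneg_right (real_inner_le_norm x (vec v))
    (mul_nonneg hκ (mul_nonneg nv.le ny.le))
  have : ‖vec v‖ ^ 2 * inner ℝ x y < ‖vec v‖ ^ 2 * (κ * (‖x‖ * ‖y‖)) := by
    linarith
  exact lt_of_mul_lt_mul_left this (by positivity)

theorem special_sound (hq : PcOK g.R2 q) (hlo : 0 < g.lo) (hlo' : g.lo / 1000 ≤ κ)
    (hhi : κ ≤ g.hi / 1000) (hx : p.Mem κ x) (hy : q.Mem κ y) (hx0 : x ≠ 0)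
    (hy0 : y ≠ 0) (hnr : p.k ≠ 0 → ∀ v ∈ g.sp, ∀ l : ℝ, 0 ≤ l → x ≠ l • vec v)
    (h : special g p q = true) : inner ℝ x y ≠ κ * (‖x‖ * ‖y‖) := by
  have hκ : 0 ≤ κ := le_trans (by positivity) hlo'
  unfold special at h
  rw [Bool.or_eq_true, List.any_eq_true] at h
  rcases h with h | ⟨v, -, h⟩
  · exact (ptest_sound hq hhi hκ hx hy hx0 hy0 hnr h).ne'
  · exact (qtest_sound hq hlo hlo' hx hy hx0 hy0 h).ne

theorem pairTest_sound (hp : PcOK g.R2 p) (hq : PcOK g.R2 q) 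
    (hK : (g.hi : ℝ) * g.R2 < g.K * 1000) (hlo : 0 < g.lo) (hlo' : g.lo / 1000 ≤ κ)
    (hhi : κ ≤ g.hi / 1000) (hx : p.Mem κ x) (hy : q.Mem κ y) (hx0 : x ≠ 0)
    (hy0 : y ≠ 0) (hnr : p.k ≠ 0 → ∀ v ∈ g.sp, ∀ l : ℝ, 0 ≤ l → x ≠ l • vec v)
    (hnr' : q.k ≠ 0 → ∀ v ∈ g.sp, ∀ l : ℝ, 0 ≤ l → y ≠ l • vec v)
    (h : pairTest g g.lo g.K p q = true) : inner ℝ x y ≠ κ * (‖x‖ * ‖y‖) := by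
  unfold pairTest at h
  rw [orr_iff, orr_iff, Bool.or_eq_true] at h
  rcases h with h | h | h | h
  · exact (far_sound hp hq hlo' hx.1 hy.1 hx0 hy0 h).ne
  · exact (close_sound hp hq hK hhi hx.1 hy.1 hx0 hy0 h).ne'
  · exact special_sound hq hlo hlo' hhi hx hy hx0 hy0 hnr h
  · rw [real_inner_comm, mul_comm ‖x‖]
    exact special_sound hp hlo hlo' hhi hy hx hy0 hx0 hnr' h

end tests

/-! ### The triangles cover the sphere -/

def detR (u v w : E) : ℝ :=
  u 0 * (v 1 * w 2 - v 2 * w 1) + u 1 * (v 2 * w 0 - v 0 * w 2) + u 2 * (v 0 * w 1 - v 1 * w 0)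

def numR (a b c x : E) : ℝ := detR x b c + detR a x c + detR a b x

theorem det_eq (a b c : V) : ((det a b c : ℤ) : ℝ) = detR (vec a) (vec b) (vec c) := by
  obtain ⟨x, y, z, t, h⟩ := a
  obtain ⟨x', y', z', t', h'⟩ := b
  obtain ⟨x'', y'', z'', t'', h''⟩ := c
  unfold det detR
  simp only [vec0, vec1, vec2, co]
  push_cast [cast_sub]
  rfl

theorem orient_eq (a b c p : V) : ((orient a b c p : ℤ) : ℝ) =
    numR (vec a) (vec b) (vec c) (vec p) - detR (vec a) (vec b) (vec c) := by
  obtain ⟨x, y, z, t, h⟩ := a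
  obtain ⟨x', y', z', t', h'⟩ := b
  obtain ⟨x'', y'', z'', t'', h''⟩ := c
  obtain ⟨x₃, y₃, z₃, t₃, h₃⟩ := p
  unfold orient numR detR
  simp only [vec0, vec1, vec2, df]
  push_cast [cast_sub]
  ring

theorem numR_comb (a b c u v w : E) (α β γ : ℝ) :
    numR a b c (α • u + β • v + γ • w) = α * numR a b c u + β * numR a b c v + γ * numR a b c w := by
  simp only [numR, detR, PiLp.add_apply, PiLp.smul_apply, smul_eq_mul]
  ring

theorem numR_a (a b c : E) : numR a b c a = detR a b c := by
  simp only [numR, detR]; ring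

theorem numR_b (a b c : E) : numR a b c b = detR a b c := by
  simp only [numR, detR]; ring

theorem numR_c (a b c : E) : numR a b c c = detR a b c := by
  simp only [numR, detR]; ring

theorem cramer (a b c x : E) (h : detR a b c ≠ 0) :
    x = (detR x b c / detR a b c) • a + (detR a x c / detR a b c) • b
      + (detR a b x / detR a b c) • c := by
  have key : detR a b c • x = detR x b c • a + detR a x c • b + detR a b x • c := by
    ext i
    fin_cases i <;> simp [detR] <;> ring
  have := congrArg (fun z => (detR a b c)⁻¹ • z) key
  simp only [smul_smul, inv_mul_cancel₀ h, one_smul, smul_add] at this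
  simpa only [div_eq_inv_mul] using this

theorem nb_coeff {L : List Facet} {F : Facet} {a b c : V} {x : E} {α β γ μ : ℝ} {n : ℕ}
    (hL : ∀ G ∈ L, 0 < detR (vec G.a) (vec G.b) (vec G.c))
    (hx : x = α • vec a + β • vec b + γ • vec c) (hμ : μ = α + β + γ)
    (hmax : ∀ G ∈ L, numR (vec G.a) (vec G.b) (vec G.c) x ≤ μ * detR (vec G.a) (vec G.b) (vec G.c))
    (h : nbTest L[n]? a b c = true) : 0 ≤ γ := by
  cases hG : L[n]? with
  | none => rw [hG] at h; simp [nbTest] at h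
  | some G =>
    rw [hG] at h
    have hmem : G ∈ L := List.mem_of_getElem? hG
    have h1 := hmax G hmem
    have h2 := hL G hmem
    obtain ⟨a', b', c', _, _, _, _, _⟩ := G
    unfold nbTest at h
    simp only [Bool.and_eq_true, Bool.or_eq_true, decide_eq_true_eq] at h
    obtain ⟨ha, hb, ho⟩ := h
    simp only at h1 h2
    have ho' : ((orient a' b' c' c : ℤ) : ℝ) < 0 := by exact_mod_cast ho
    rw [orient_eq] at ho'
    have vert : ∀ t : V, (vEq t a' = true ∨ vEq t b' = true ∨ vEq t c' = true) →
        numR (vec a') (vec b') (vec c') (vec t) = detR (vec a') (vec b') (vec c') := by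
      rintro t (h | h | h)
      · rw [vEq_vec h, numR_a]
      · rw [vEq_vec h, numR_b]
      · rw [vEq_vec h, numR_c]
    rw [hx, numR_comb, vert a ha, vert b hb, hμ] at h1
    by_contra hneg
    push Not at hneg
    nlinarith [mul_pos_of_neg_of_neg hneg ho']

structure FOK (g : Cfg) (L : List Facet) (F : Facet) : Prop where
  pc : ∀ (k : ℕ) (s : Side), PcOK g.R2 ⟨F.a, F.b, F.c, F.h, k, s⟩
  det : 0 < detR (vec F.a) (vec F.b) (vec F.c)
  na : nbTest L[F.na]? F.b F.c F.a = true
  nb : nbTest L[F.nb]? F.a F.c F.b = true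
  nc : nbTest L[F.nc]? F.a F.b F.c = true
  col : match F.lab with
    | .plain k => k < 7
    | .arc _ k l => k < 7 ∧ l < 7

theorem facetTest_sound {g : Cfg} {L : List Facet} {F : Facet} (h : facetTest g L F = true) :
    FOK g L F := by
  obtain ⟨a, b, c, hh, na, nb, nc, lab⟩ := F
  unfold facetTest at h
  simp only [Bool.and_eq_true, decide_eq_true_eq, geN_iff, Bool.not_eq_true'] at h
  obtain ⟨⟨h0, h1, h2, h3, h4, h5, h6⟩, ⟨n1, n2, n3⟩, hd, ⟨m1, m2, m3⟩, hl⟩ := h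
  have up : ∀ u : V, geN (g.R2 + 1) u u = false → inner ℝ (vec u) (vec u) ≤ (g.R2 : ℝ) := by
    intro u hu
    have h1 : ¬ (((g.R2 + 1 : ℕ) : ℝ) ≤ inner ℝ (vec u) (vec u)) := by
      rw [← geN_iff, hu]; simp
    rw [← dot_eq] at h1 ⊢
    have h2 : ¬ (((g.R2 + 1 : ℕ) : ℤ) ≤ dot u u) := by
      intro h; exact h1 (by exact_mod_cast h)
    have h3 : dot u u ≤ (g.R2 : ℤ) := by push_cast at h2; omega
    exact_mod_cast h3
  have hh0 : 0 < hh := by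
    have : Nat.blt 0 hh = true := h0
    simpa only [Nat.blt_eq] using this
  push_cast at h1 h2 h3 h4 h5 h6
  rw [← sq] at h1 h2 h3 h4 h5 h6
  refine ⟨fun k s => ⟨by exact_mod_cast hh0, h1, h2, h3, h4, h5, h6, up _ n1, up _ n2, up _ n3⟩,
    ?_, m1, m2, m3, ?_⟩
  · rw [← det_eq]; exact_mod_cast hd
  · cases lab with
    | plain k => simpa only [Nat.blt_eq] using hl
    | arc v k l => simpa only [Nat.blt_eq, Bool.and_eq_true] using hl

theorem cover {g : Cfg} {L : List Facet} (hne : L ≠ []) (hL : ∀ F ∈ L, FOK g L F) (x : E) :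
    ∃ F ∈ L, InCone (vec F.a) (vec F.b) (vec F.c) x := by
  obtain ⟨F, hF, hmax⟩ := Set.exists_max_image {F | F ∈ L}
    (fun G => numR (vec G.a) (vec G.b) (vec G.c) x / detR (vec G.a) (vec G.b) (vec G.c))
    (List.finite_toSet L) (List.exists_mem_of_ne_nil L hne)
  refine ⟨F, hF, ?_⟩
  have hd := (hL F hF).det
  have hx := cramer (vec F.a) (vec F.b) (vec F.c) x hd.ne'
  set α := detR x (vec F.b) (vec F.c) / detR (vec F.a) (vec F.b) (vec F.c)
  set β := detR (vec F.a) x (vec F.c) / detR (vec F.a) (vec F.b) (vec F.c)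
  set γ := detR (vec F.a) (vec F.b) x / detR (vec F.a) (vec F.b) (vec F.c)
  have hμ : numR (vec F.a) (vec F.b) (vec F.c) x / detR (vec F.a) (vec F.b) (vec F.c)
      = α + β + γ := by
    simp only [numR, add_div]; rfl
  have hdet : ∀ G ∈ L, 0 < detR (vec G.a) (vec G.b) (vec G.c) := fun G hG => (hL G hG).det
  have hm : ∀ G ∈ L, numR (vec G.a) (vec G.b) (vec G.c) x ≤
      (α + β + γ) * detR (vec G.a) (vec G.b) (vec G.c) := by
    intro G hG
    have := hmax G hG
    simp only [hμ] at this
    rwa [div_le_iff₀ (hdet G hG)] at this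
  refine ⟨α, β, γ, ?_, ?_, ?_, hx⟩
  · exact nb_coeff (F := F) (α := β) (β := γ) hdet (by rw [hx]; abel) (by ring) hm (hL F hF).na
  · exact nb_coeff (F := F) (α := α) (β := γ) hdet (by rw [hx]; abel) (by ring) hm (hL F hF).nb
  · exact nb_coeff (F := F) (α := α) (β := β) hdet hx rfl hm (hL F hF).nc

theorem consIf_mem (k k' : ℕ) (p r : Pc) (l : List Pc) :
    r ∈ consIf k k' p l ↔ (k = k' ∧ r = p) ∨ r ∈ l := by
  unfold consIf
  cases h : Nat.beq k k' with
  | true => simp [Nat.eq_of_beq_eq_true h]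
  | false => simp [Nat.ne_of_beq_eq_false h]

theorem mem_pcs {k : ℕ} {p : Pc} {F : Facet} {L : List Facet} (hF : F ∈ L) (hp : p ∈ pieces F)
    (hk : p.k = k) : p ∈ pcs k L := by
  induction L with
  | nil => simp at hF
  | cons G L ih =>
    obtain ⟨a, b, c, h, na, nb, nc, lab⟩ := G
    cases lab with
    | plain k' =>
      have e : pcs k (⟨a, b, c, h, na, nb, nc, .plain k'⟩ :: L)
          = consIf k k' ⟨a, b, c, h, k', .all⟩ (pcs k L) := rfl
      rw [e, consIf_mem]
      rcases List.mem_cons.1 hF with rfl | hF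
      · simp only [pieces, List.mem_singleton] at hp
        subst hp
        exact Or.inl ⟨hk.symm, rfl⟩
      · exact Or.inr (ih hF)
    | arc v k' l' =>
      have e : pcs k (⟨a, b, c, h, na, nb, nc, .arc v k' l'⟩ :: L)
          = consIf k k' ⟨a, b, c, h, k', .ins v⟩
            (consIf k l' ⟨a, b, c, h, l', .out v⟩ (pcs k L)) := rfl
      rw [e, consIf_mem, consIf_mem]
      rcases List.mem_cons.1 hF with rfl | hF
      · simp only [pieces, List.mem_cons, List.not_mem_nil, or_false] at hp
        rcases hp with rfl | rfl
        · exact Or.inl ⟨hk.symm, rfl⟩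
        · exact Or.inr (Or.inl ⟨hk.symm, rfl⟩)
      · exact Or.inr (Or.inr (ih hF))

theorem pairsTest_sound {g : Cfg} {lo K : ℕ} {L : List Pc} (h : pairsTest g lo K L = true)
    {p q : Pc} (hp : p ∈ L) (hq : q ∈ L) :
    pairTest g lo K p q = true ∨ pairTest g lo K q p = true := by
  induction L with
  | nil => simp at hp
  | cons r L ih =>
    have e : pairsTest g lo K (r :: L)
      = an (allR (pairTest g lo K r) (r :: L)) (pairsTest g lo K L) := rfl
    rw [e, an_iff, allR_iff] at h
    rcases List.mem_cons.1 hp with rfl | hp'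
    · exact Or.inl (h.1 q hq)
    · rcases List.mem_cons.1 hq with rfl | hq'
      · exact Or.inr (h.1 p hp)
      · exact ih h.2 hp' hq'

theorem pieces_cover (κ : ℝ) {F : Facet} {x : E}
    (hx : InCone (vec F.a) (vec F.b) (vec F.c) x) : ∃ p ∈ pieces F, p.Mem κ x := by
  obtain ⟨a, b, c, h, na, nb, nc, lab⟩ := F
  cases lab with
  | plain k => exact ⟨⟨a, b, c, h, k, .all⟩, by simp [pieces], hx, trivial⟩
  | arc v k l =>
    rcases le_or_gt (κ * (‖vec v‖ * ‖x‖)) (inner ℝ (vec v) x) with hv | hv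
    · exact ⟨⟨a, b, c, h, k, .ins v⟩, by simp [pieces], hx, hv⟩
    · exact ⟨⟨a, b, c, h, l, .out v⟩, by simp [pieces], hx, hv⟩

theorem pieces_ok {g : Cfg} {L : List Facet} {F : Facet} (h : FOK g L F) {p : Pc}
    (hp : p ∈ pieces F) : PcOK g.R2 p ∧ p.k < 7 := by
  obtain ⟨a, b, c, hh, na, nb, nc, lab⟩ := F
  have h1 := h.pc
  have h2 := h.col
  cases lab with
  | plain k =>
    simp only [pieces, List.mem_singleton] at hp
    subst hp
    exact ⟨h1 _ _, h2⟩
  | arc v k l =>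
    simp only [pieces, List.mem_cons, List.not_mem_nil, or_false] at hp
    rcases hp with rfl | rfl
    · exact ⟨h1 _ _, h2.1⟩
    · exact ⟨h1 _ _, h2.2⟩

theorem spTest_sound {L : List Facet} {v : V} (h : spTest L v = true) (κ : ℝ) (l : ℝ)
    (hl : 0 ≤ l) : ∃ F ∈ L, ∃ p ∈ pieces F, p.k = 0 ∧ p.Mem κ (l • vec v) := by
  unfold spTest at h
  rw [List.any_eq_true] at h
  obtain ⟨F, hF, h⟩ := h
  refine ⟨F, hF, ?_⟩
  obtain ⟨a, b, c, hh, na, nb, nc, lab⟩ := F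
  cases lab with
  | arc v k l => simp at h
  | plain k =>
    cases k with
    | succ k => simp at h
    | zero =>
      simp only [Bool.or_eq_true] at h
      refine ⟨⟨a, b, c, hh, 0, .all⟩, by simp [pieces], rfl, ?_, trivial⟩
      rcases h with h | h | h
      · exact ⟨l, 0, 0, hl, le_rfl, le_rfl, by simp [vEq_vec h]⟩
      · exact ⟨0, l, 0, le_rfl, hl, le_rfl, by simp [vEq_vec h]⟩
      · exact ⟨0, 0, l, le_rfl, le_rfl, hl, by simp [vEq_vec h]⟩

theorem coloring_of_tests (g : Cfg) (L : List Facet) (hne : L ≠ []) (hc : cfgTest g L = true)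
    (hf : ∀ F ∈ L, facetTest g L F = true) (hp : ∀ k < 7, colTest g L k = true) (κ : ℝ)
    (hlo' : (g.lo : ℝ) / 1000 ≤ κ) (hhi : κ ≤ g.hi / 1000) :
    ∃ f : E → Fin 7, ∀ x y : E, x ≠ 0 → y ≠ 0 → inner ℝ x y = κ * (‖x‖ * ‖y‖) → f x ≠ f y := by
  classical
  have hF : ∀ F ∈ L, FOK g L F := fun F h => facetTest_sound (hf F h)
  have hex : ∀ x : E, ∃ k : ℕ, ∃ F ∈ L, ∃ p ∈ pieces F, p.k = k ∧ p.Mem κ x := by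
    intro x
    obtain ⟨F, hFL, hx⟩ := cover hne hF x
    obtain ⟨p, hp, hm⟩ := pieces_cover κ hx
    exact ⟨p.k, F, hFL, p, hp, rfl, hm⟩
  have hlt : ∀ x, Nat.find (hex x) < 7 := by
    intro x
    obtain ⟨F, hFL, p, hp, hk, -⟩ := Nat.find_spec (hex x)
    rw [← hk]
    exact (pieces_ok (hF F hFL) hp).2
  unfold cfgTest at hc
  rw [Bool.and_eq_true, Bool.and_eq_true, List.all_eq_true] at hc
  obtain ⟨hc1, hc2, hc3⟩ := hc
  have hlo : 0 < g.lo := by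
    have : Nat.blt 0 g.lo = true := hc2
    simpa only [Nat.blt_eq] using this
  have hK : (g.hi : ℝ) * g.R2 < g.K * 1000 := by
    rw [Nat.blt_eq] at hc1
    exact_mod_cast hc1
  have hray : ∀ x : E, Nat.find (hex x) ≠ 0 → ∀ v ∈ g.sp, ∀ l : ℝ, 0 ≤ l → x ≠ l • vec v := by
    intro x hx0 v hv l hl hxe
    apply hx0
    rw [Nat.find_eq_zero]
    rw [hxe]
    exact spTest_sound (hc3 v hv) κ l hl
  refine ⟨fun x => ⟨Nat.find (hex x), hlt x⟩, ?_⟩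
  intro x y hx0 hy0 hxy hfe
  have hfe' : Nat.find (hex x) = Nat.find (hex y) := by simpa using hfe
  obtain ⟨F, hFL, p, hpF, hpk, hpx⟩ := Nat.find_spec (hex x)
  obtain ⟨G, hGL, q, hqG, hqk, hqy⟩ := Nat.find_spec (hex y)
  have hpok := (pieces_ok (hF F hFL) hpF).1
  have hqok := (pieces_ok (hF G hGL) hqG).1
  have hct := hp _ (hlt x)
  have hct' : pairsTest g g.lo g.K (pcs (Nat.find (hex x)) L) = true := hct
  have hpm := mem_pcs hFL hpF hpk
  have hqm := mem_pcs hGL hqG (hqk.trans hfe'.symm)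
  have r1 := hray x
  have r2 := hray y
  rw [← hpk] at r1
  rw [← hqk] at r2
  rcases pairsTest_sound hct' hpm hqm with h | h
  · exact pairTest_sound hpok hqok hK hlo hlo' hhi hpx hqy hx0 hy0 r1 r2 h hxy
  · refine pairTest_sound hqok hpok hK hlo hlo' hhi hqy hpx hy0 hx0 r2 r1 h ?_
    rw [real_inner_comm, hxy, mul_comm ‖x‖]


def a0 : V := ⟨117, 4202, 3696, 32829440, rfl⟩
def a1 : V := ⟨127, 3601, 4148, 32260096, rfl⟩
def a2 : V := ⟨165, 4462, 3454, 33099776, rfl⟩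
def a3 : V := ⟨204, 3477, 3412, 29052928, rfl⟩
def a4 : V := ⟨206, 3778, 3220, 29507584, rfl⟩
def a5 : V := ⟨240, 4661, 4995, 40534016, rfl⟩
def a6 : V := ⟨247, 5161, 3870, 38002688, rfl⟩
def a7 : V := ⟨249, 4058, 2999, 29925376, rfl⟩
def a8 : V := ⟨286, 2995, 4615, 32342016, rfl⟩
def a9 : V := ⟨333, 2883, 3487, 27455488, rfl⟩
def a10 : V := ⟨334, 5355, 3581, 37969920, rfl⟩
def a11 : V := ⟨350, 3122, 3087, 26865664, rfl⟩
def a12 : V := ⟨417, 3375, 2700, 26591232, rfl⟩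
def a13 : V := ⟨443, 5708, 4344, 42987520, rfl⟩
def a14 : V := ⟨451, 3674, 2504, 27152384, rfl⟩
def a15 : V := ⟨476, 3299, 2592, 26079232, rfl⟩
def a16 : V := ⟨485, 5605, 3269, 38334464, rfl⟩
def a17 : V := ⟨507, 3601, 2400, 26656768, rfl⟩
def a18 : V := ⟨540, 5928, 4078, 43196416, rfl⟩
def a19 : V := ⟨546, 5886, 4536, 44924928, rfl⟩
def a20 : V := ⟨574, 5901, 3517, 40927232, rfl⟩
def a21 : V := ⟨575, 2452, 5046, 33067008, rfl⟩
def a22 : V := ⟨590, 2757, 2714, 24825856, rfl⟩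
def a23 : V := ⟨648, 6115, 4280, 45232128, rfl⟩
def a24 : V := ⟨669, 4883, 2190, 31711232, rfl⟩
def a25 : V := ⟨677, 5839, 2967, 38842368, rfl⟩
def a26 : V := ⟨741, 3040, 2190, 24457216, rfl⟩
def a27 : V := ⟨750, 6146, 4870, 48193536, rfl⟩
def a28 : V := ⟨760, 1913, 4420, 29052928, rfl⟩
def a29 : V := ⟨760, 3354, 2017, 25112576, rfl⟩
def a30 : V := ⟨773, 2241, 2863, 24072192, rfl⟩
def a31 : V := ⟨781, 2498, 5664, 36630528, rfl⟩
def a32 : V := ⟨839, 6399, 3794, 45187072, rfl⟩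
def a33 : V := ⟨861, 6388, 4629, 48652288, rfl⟩
def a34 : V := ⟨911, 2499, 2278, 23298048, rfl⟩
def a35 : V := ⟨957, 6076, 5589, 51699712, rfl⟩
def a36 : V := ⟨1039, 6676, 4136, 48541696, rfl⟩
def a37 : V := ⟨1061, 2232, 2276, 22810624, rfl⟩
def a38 : V := ⟨1085, 2591, 6256, 40681472, rfl⟩
def a39 : V := ⟨1114, 1453, 3749, 25870336, rfl⟩
def a40 : V := ⟨1134, 2799, 1741, 23240704, rfl⟩
def a41 : V := ⟨1135, 3124, 1589, 23953408, rfl⟩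
def a42 : V := ⟨1218, 6813, 3517, 47300608, rfl⟩
def a43 : V := ⟨1241, 6284, 2345, 40427520, rfl⟩
def a44 : V := ⟨1284, 6915, 4477, 51920896, rfl⟩
def a45 : V := ⟨1290, 5929, 6279, 55287808, rfl⟩
def a46 : V := ⟨1375, 3435, 6953, 48181248, rfl⟩
def a47 : V := ⟨1387, 4231, 7036, 51830784, rfl⟩
def a48 : V := ⟨1430, 2272, 1737, 22278144, rfl⟩
def a49 : V := ⟨1431, 2264, 6450, 41553920, rfl⟩
def a50 : V := ⟨1453, 3749, 1114, 25870336, rfl⟩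
def a51 : V := ⟨1461, 2722, 6774, 44879872, rfl⟩
def a52 : V := ⟨1471, 1789, 6042, 38100992, rfl⟩
def a53 : V := ⟨1507, 5022, 7001, 55418880, rfl⟩
def a54 : V := ⟨1589, 1135, 3124, 23953408, rfl⟩
def a55 : V := ⟨1711, 5721, 6866, 58564608, rfl⟩
def a56 : V := ⟨1737, 1430, 2272, 22278144, rfl⟩
def a57 : V := ⟨1741, 1134, 2799, 23240704, rfl⟩
def a58 : V := ⟨1787, 1787, 1787, 21958656, rfl⟩
def a59 : V := ⟨1789, 6042, 1471, 38100992, rfl⟩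
def a60 : V := ⟨1822, 1967, 6605, 42573824, rfl⟩
def a61 : V := ⟨1828, 7384, 4302, 55353344, rfl⟩
def a62 : V := ⟨1886, 2344, 6933, 45723648, rfl⟩
def a63 : V := ⟨1913, 4420, 760, 29052928, rfl⟩
def a64 : V := ⟨1955, 3111, 7328, 50765824, rfl⟩
def a65 : V := ⟨1967, 6605, 1822, 42573824, rfl⟩
def a66 : V := ⟨1985, 2749, 7215, 48943104, rfl⟩
def a67 : V := ⟨2017, 760, 3354, 25112576, rfl⟩
def a68 : V := ⟨2190, 669, 4883, 31711232, rfl⟩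
def a69 : V := ⟨2190, 741, 3040, 24457216, rfl⟩
def a70 : V := ⟨2232, 2276, 1061, 22810624, rfl⟩
def a71 : V := ⟨2241, 2863, 773, 24072192, rfl⟩
def a72 : V := ⟨2264, 6450, 1431, 41553920, rfl⟩
def a73 : V := ⟨2272, 1737, 1430, 22278144, rfl⟩
def a74 : V := ⟨2276, 1061, 2232, 22810624, rfl⟩
def a75 : V := ⟨2278, 911, 2499, 23298048, rfl⟩
def a76 : V := ⟨2344, 6933, 1886, 45723648, rfl⟩
def a77 : V := ⟨2345, 1241, 6284, 40427520, rfl⟩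
def a78 : V := ⟨2400, 507, 3601, 26656768, rfl⟩
def a79 : V := ⟨2449, 7741, 4119, 58609664, rfl⟩
def a80 : V := ⟨2452, 5046, 575, 33067008, rfl⟩
def a81 : V := ⟨2483, 5995, 7225, 64319488, rfl⟩
def a82 : V := ⟨2498, 5664, 781, 36630528, rfl⟩
def a83 : V := ⟨2499, 2278, 911, 23298048, rfl⟩
def a84 : V := ⟨2504, 451, 3674, 27152384, rfl⟩
def a85 : V := ⟨2591, 6256, 1085, 40681472, rfl⟩
def a86 : V := ⟨2592, 476, 3299, 26079232, rfl⟩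
def a87 : V := ⟨2612, 2823, 7585, 53329920, rfl⟩
def a88 : V := ⟨2700, 417, 3375, 26591232, rfl⟩
def a89 : V := ⟨2707, 7343, 5974, 65634304, rfl⟩
def a90 : V := ⟨2714, 590, 2757, 24825856, rfl⟩
def a91 : V := ⟨2722, 6774, 1461, 44879872, rfl⟩
def a92 : V := ⟨2749, 7215, 1985, 48943104, rfl⟩
def a93 : V := ⟨2757, 2714, 590, 24825856, rfl⟩
def a94 : V := ⟨2799, 1741, 1134, 23240704, rfl⟩
def a95 : V := ⟨2823, 7585, 2612, 53329920, rfl⟩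
def a96 : V := ⟨2863, 773, 2241, 24072192, rfl⟩
def a97 : V := ⟨2883, 3487, 333, 27455488, rfl⟩
def a98 : V := ⟨2938, 7839, 3289, 57614336, rfl⟩
def a99 : V := ⟨2967, 677, 5839, 38842368, rfl⟩
def a100 : V := ⟨2995, 4615, 286, 32342016, rfl⟩
def a101 : V := ⟨2999, 249, 4058, 29925376, rfl⟩
def a102 : V := ⟨3040, 2190, 741, 24457216, rfl⟩
def a103 : V := ⟨3082, 7963, 3947, 61407232, rfl⟩
def a104 : V := ⟨3087, 350, 3122, 26865664, rfl⟩
def a105 : V := ⟨3111, 7328, 1955, 50765824, rfl⟩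
def a106 : V := ⟨3122, 3087, 350, 26865664, rfl⟩
def a107 : V := ⟨3124, 1589, 1135, 23953408, rfl⟩
def a108 : V := ⟨3172, 4584, 7957, 64360448, rfl⟩
def a109 : V := ⟨3220, 206, 3778, 29507584, rfl⟩
def a110 : V := ⟨3269, 485, 5605, 38334464, rfl⟩
def a111 : V := ⟨3289, 2938, 7839, 57614336, rfl⟩
def a112 : V := ⟨3299, 2592, 476, 26079232, rfl⟩
def a113 : V := ⟨3335, 6174, 7428, 69373952, rfl⟩
def a114 : V := ⟨3354, 2017, 760, 25112576, rfl⟩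
def a115 : V := ⟨3375, 2700, 417, 26591232, rfl⟩
def a116 : V := ⟨3412, 204, 3477, 29052928, rfl⟩
def a117 : V := ⟨3435, 6953, 1375, 48181248, rfl⟩
def a118 : V := ⟨3454, 165, 4462, 33099776, rfl⟩
def a119 : V := ⟨3477, 3412, 204, 29052928, rfl⟩
def a120 : V := ⟨3487, 333, 2883, 27455488, rfl⟩
def a121 : V := ⟨3517, 574, 5901, 40927232, rfl⟩
def a122 : V := ⟨3517, 1218, 6813, 47300608, rfl⟩
def a123 : V := ⟨3572, 6417, 7311, 70860800, rfl⟩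
def a124 : V := ⟨3581, 334, 5355, 37969920, rfl⟩
def a125 : V := ⟨3601, 2400, 507, 26656768, rfl⟩
def a126 : V := ⟨3601, 4148, 127, 32260096, rfl⟩
def a127 : V := ⟨3611, 8049, 4464, 66043904, rfl⟩
def a128 : V := ⟨3674, 2504, 451, 27152384, rfl⟩
def a129 : V := ⟨3696, 117, 4202, 32829440, rfl⟩
def a130 : V := ⟨3749, 1114, 1453, 25870336, rfl⟩
def a131 : V := ⟨3778, 3220, 206, 29507584, rfl⟩
def a132 : V := ⟨3794, 839, 6399, 45187072, rfl⟩
def a133 : V := ⟨3803, 5807, 7700, 70901760, rfl⟩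
def a134 : V := ⟨3870, 247, 5161, 38002688, rfl⟩
def a135 : V := ⟨3909, 7016, 6823, 72695808, rfl⟩
def a136 : V := ⟨3947, 3082, 7963, 61407232, rfl⟩
def a137 : V := ⟨4056, 6485, 7304, 73093120, rfl⟩
def a138 : V := ⟨4058, 2999, 249, 29925376, rfl⟩
def a139 : V := ⟨4062, 6032, 7596, 72458240, rfl⟩
def a140 : V := ⟨4078, 540, 5928, 43196416, rfl⟩
def a141 : V := ⟨4119, 2449, 7741, 58609664, rfl⟩
def a142 : V := ⟨4136, 1039, 6676, 48541696, rfl⟩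
def a143 : V := ⟨4148, 127, 3601, 32260096, rfl⟩
def a144 : V := ⟨4156, 7999, 4968, 70135808, rfl⟩
def a145 : V := ⟨4202, 3696, 117, 32829440, rfl⟩
def a146 : V := ⟨4231, 7036, 1387, 51830784, rfl⟩
def a147 : V := ⟨4254, 7486, 6214, 73539584, rfl⟩
def a148 : V := ⟨4267, 5312, 7903, 71606272, rfl⟩
def a149 : V := ⟨4279, 7728, 5762, 72781824, rfl⟩
def a150 : V := ⟨4280, 648, 6115, 45232128, rfl⟩
def a151 : V := ⟨4280, 5296, 7907, 71610368, rfl⟩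
def a152 : V := ⟨4302, 1828, 7384, 55353344, rfl⟩
def a153 : V := ⟨4302, 7910, 5283, 71659520, rfl⟩
def a154 : V := ⟨4344, 443, 5708, 42987520, rfl⟩
def a155 : V := ⟨4420, 760, 1913, 29052928, rfl⟩
def a156 : V := ⟨4462, 3454, 165, 33099776, rfl⟩
def a157 : V := ⟨4464, 3611, 8049, 66043904, rfl⟩
def a158 : V := ⟨4477, 1284, 6915, 51920896, rfl⟩
def a159 : V := ⟨4536, 546, 5886, 44924928, rfl⟩
def a160 : V := ⟨4540, 6518, 7248, 74981376, rfl⟩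
def a161 : V := ⟨4549, 5513, 7809, 73199616, rfl⟩
def a162 : V := ⟨4562, 5496, 7814, 73203712, rfl⟩
def a163 : V := ⟨4584, 7957, 3172, 64360448, rfl⟩
def a164 : V := ⟨4609, 5981, 7586, 74448896, rfl⟩
def a165 : V := ⟨4615, 286, 2995, 32342016, rfl⟩
def a166 : V := ⟨4629, 861, 6388, 48652288, rfl⟩
def a167 : V := ⟨4661, 4995, 240, 40534016, rfl⟩
def a168 : V := ⟨4668, 4737, 8003, 71303168, rfl⟩
def a169 : V := ⟨4737, 8003, 4668, 71303168, rfl⟩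
def a170 : V := ⟨4870, 750, 6146, 48193536, rfl⟩
def a171 : V := ⟨4883, 2190, 669, 31711232, rfl⟩
def a172 : V := ⟨4911, 7914, 4969, 72884224, rfl⟩
def a173 : V := ⟨4968, 4156, 7999, 70135808, rfl⟩
def a174 : V := ⟨4969, 4911, 7914, 72884224, rfl⟩
def a175 : V := ⟨4977, 7652, 5701, 75079680, rfl⟩
def a176 : V := ⟨4995, 240, 4661, 40534016, rfl⟩
def a177 : V := ⟨5009, 7256, 6372, 76337152, rfl⟩
def a178 : V := ⟨5022, 7001, 1507, 55418880, rfl⟩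
def a179 : V := ⟨5046, 575, 2452, 33067008, rfl⟩
def a180 : V := ⟨5067, 5415, 7745, 74657792, rfl⟩
def a181 : V := ⟨5147, 5895, 7510, 75988992, rfl⟩
def a182 : V := ⟨5161, 3870, 247, 38002688, rfl⟩
def a183 : V := ⟨5283, 4302, 7910, 71659520, rfl⟩
def a184 : V := ⟨5296, 7907, 4280, 71610368, rfl⟩
def a185 : V := ⟨5312, 7903, 4267, 71606272, rfl⟩
def a186 : V := ⟨5355, 3581, 334, 37969920, rfl⟩
def a187 : V := ⟨5415, 7745, 5067, 74657792, rfl⟩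
def a188 : V := ⟨5436, 5449, 7614, 75771904, rfl⟩
def a189 : V := ⟨5449, 7614, 5436, 75771904, rfl⟩
def a190 : V := ⟨5496, 7814, 4562, 73203712, rfl⟩
def a191 : V := ⟨5513, 7809, 4549, 73199616, rfl⟩
def a192 : V := ⟨5589, 957, 6076, 51699712, rfl⟩
def a193 : V := ⟨5605, 3269, 485, 38334464, rfl⟩
def a194 : V := ⟨5664, 781, 2498, 36630528, rfl⟩
def a195 : V := ⟨5701, 4977, 7652, 75079680, rfl⟩
def a196 : V := ⟨5708, 4344, 443, 42987520, rfl⟩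
def a197 : V := ⟨5721, 6866, 1711, 58564608, rfl⟩
def a198 : V := ⟨5757, 6881, 6439, 78139392, rfl⟩
def a199 : V := ⟨5762, 4279, 7728, 72781824, rfl⟩
def a200 : V := ⟨5807, 7700, 3803, 70901760, rfl⟩
def a201 : V := ⟨5839, 2967, 677, 38842368, rfl⟩
def a202 : V := ⟨5886, 4536, 546, 44924928, rfl⟩
def a203 : V := ⟨5895, 7510, 5147, 75988992, rfl⟩
def a204 : V := ⟨5901, 3517, 574, 40927232, rfl⟩
def a205 : V := ⟨5928, 4078, 540, 43196416, rfl⟩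
def a206 : V := ⟨5929, 6279, 1290, 55287808, rfl⟩
def a207 : V := ⟨5974, 2707, 7343, 65634304, rfl⟩
def a208 : V := ⟨5981, 7586, 4609, 74448896, rfl⟩
def a209 : V := ⟨5995, 7225, 2483, 64319488, rfl⟩
def a210 : V := ⟨6032, 7596, 4062, 72458240, rfl⟩
def a211 : V := ⟨6042, 1471, 1789, 38100992, rfl⟩
def a212 : V := ⟨6076, 5589, 957, 51699712, rfl⟩
def a213 : V := ⟨6115, 4280, 648, 45232128, rfl⟩
def a214 : V := ⟨6146, 4870, 750, 48193536, rfl⟩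
def a215 : V := ⟨6174, 7428, 3335, 69373952, rfl⟩
def a216 : V := ⟨6214, 4254, 7486, 73539584, rfl⟩
def a217 : V := ⟨6256, 1085, 2591, 40681472, rfl⟩
def a218 : V := ⟨6279, 1290, 5929, 55287808, rfl⟩
def a219 : V := ⟨6284, 2345, 1241, 40427520, rfl⟩
def a220 : V := ⟨6372, 5009, 7256, 76337152, rfl⟩
def a221 : V := ⟨6388, 4629, 861, 48652288, rfl⟩
def a222 : V := ⟨6399, 3794, 839, 45187072, rfl⟩
def a223 : V := ⟨6405, 6405, 6405, 78704640, rfl⟩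
def a224 : V := ⟨6417, 7311, 3572, 70860800, rfl⟩
def a225 : V := ⟨6439, 5757, 6881, 78139392, rfl⟩
def a226 : V := ⟨6450, 1431, 2264, 41553920, rfl⟩
def a227 : V := ⟨6485, 7304, 4056, 73093120, rfl⟩
def a228 : V := ⟨6518, 7248, 4540, 74981376, rfl⟩
def a229 : V := ⟨6605, 1822, 1967, 42573824, rfl⟩
def a230 : V := ⟨6676, 4136, 1039, 48541696, rfl⟩
def a231 : V := ⟨6774, 1461, 2722, 44879872, rfl⟩
def a232 : V := ⟨6813, 3517, 1218, 47300608, rfl⟩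
def a233 : V := ⟨6823, 3909, 7016, 72695808, rfl⟩
def a234 : V := ⟨6866, 1711, 5721, 58564608, rfl⟩
def a235 : V := ⟨6881, 6439, 5757, 78139392, rfl⟩
def a236 : V := ⟨6915, 4477, 1284, 51920896, rfl⟩
def a237 : V := ⟨6933, 1886, 2344, 45723648, rfl⟩
def a238 : V := ⟨6953, 1375, 3435, 48181248, rfl⟩
def a239 : V := ⟨7001, 1507, 5022, 55418880, rfl⟩
def a240 : V := ⟨7016, 6823, 3909, 72695808, rfl⟩
def a241 : V := ⟨7036, 1387, 4231, 51830784, rfl⟩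
def a242 : V := ⟨7215, 1985, 2749, 48943104, rfl⟩
def a243 : V := ⟨7225, 2483, 5995, 64319488, rfl⟩
def a244 : V := ⟨7248, 4540, 6518, 74981376, rfl⟩
def a245 : V := ⟨7256, 6372, 5009, 76337152, rfl⟩
def a246 : V := ⟨7304, 4056, 6485, 73093120, rfl⟩
def a247 : V := ⟨7311, 3572, 6417, 70860800, rfl⟩
def a248 : V := ⟨7328, 1955, 3111, 50765824, rfl⟩
def a249 : V := ⟨7343, 5974, 2707, 65634304, rfl⟩
def a250 : V := ⟨7384, 4302, 1828, 55353344, rfl⟩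
def a251 : V := ⟨7428, 3335, 6174, 69373952, rfl⟩
def a252 : V := ⟨7486, 6214, 4254, 73539584, rfl⟩
def a253 : V := ⟨7510, 5147, 5895, 75988992, rfl⟩
def a254 : V := ⟨7585, 2612, 2823, 53329920, rfl⟩
def a255 : V := ⟨7586, 4609, 5981, 74448896, rfl⟩
def a256 : V := ⟨7596, 4062, 6032, 72458240, rfl⟩
def a257 : V := ⟨7614, 5436, 5449, 75771904, rfl⟩
def a258 : V := ⟨7652, 5701, 4977, 75079680, rfl⟩
def a259 : V := ⟨7700, 3803, 5807, 70901760, rfl⟩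
def a260 : V := ⟨7728, 5762, 4279, 72781824, rfl⟩
def a261 : V := ⟨7741, 4119, 2449, 58609664, rfl⟩
def a262 : V := ⟨7745, 5067, 5415, 74657792, rfl⟩
def a263 : V := ⟨7809, 4549, 5513, 73199616, rfl⟩
def a264 : V := ⟨7814, 4562, 5496, 73203712, rfl⟩
def a265 : V := ⟨7839, 3289, 2938, 57614336, rfl⟩
def a266 : V := ⟨7903, 4267, 5312, 71606272, rfl⟩
def a267 : V := ⟨7907, 4280, 5296, 71610368, rfl⟩
def a268 : V := ⟨7910, 5283, 4302, 71659520, rfl⟩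
def a269 : V := ⟨7914, 4969, 4911, 72884224, rfl⟩
def a270 : V := ⟨7957, 3172, 4584, 64360448, rfl⟩
def a271 : V := ⟨7963, 3947, 3082, 61407232, rfl⟩
def a272 : V := ⟨7999, 4968, 4156, 70135808, rfl⟩
def a273 : V := ⟨8003, 4668, 4737, 71303168, rfl⟩
def a274 : V := ⟨8049, 4464, 3611, 66043904, rfl⟩

def aL0 : List Facet := [
  ⟨a1, a0, a3, 3961, 1, 8, 2, .plain 5⟩,
  ⟨a3, a0, a4, 3961, 6, 11, 0, .plain 5⟩,
  ⟨a0, a1, a5, 3878, 7, 3, 0, .plain 1⟩,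
  ⟨a0, a5, a6, 3878, 15, 4, 2, .plain 1⟩,
  ⟨a2, a0, a6, 3939, 3, 10, 5, .plain 1⟩,
  ⟨a0, a2, a7, 3967, 31, 6, 4, .arc a91 2 5⟩,
  ⟨a4, a0, a7, 3967, 5, 13, 1, .arc a91 2 5⟩,
  ⟨a5, a1, a8, 3812, 9, 45, 2, .plain 1⟩,
  ⟨a1, a3, a9, 3937, 12, 9, 0, .plain 5⟩,
  ⟨a8, a1, a9, 3918, 8, 39, 7, .plain 5⟩,
  ⟨a2, a6, a10, 3947, 16, 19, 4, .plain 2⟩,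
  ⟨a3, a4, a11, 3970, 14, 12, 1, .plain 5⟩,
  ⟨a9, a3, a11, 3976, 11, 26, 8, .plain 5⟩,
  ⟨a4, a7, a12, 3963, 17, 14, 6, .arc a91 2 5⟩,
  ⟨a11, a4, a12, 3970, 13, 18, 11, .plain 5⟩,
  ⟨a6, a5, a13, 3901, 23, 16, 3, .plain 1⟩,
  ⟨a10, a6, a13, 3955, 15, 22, 10, .arc a51 1 0⟩,
  ⟨a12, a7, a14, 3963, 32, 20, 13, .arc a91 2 5⟩,
  ⟨a11, a12, a15, 3981, 21, 27, 14, .plain 5⟩,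
  ⟨a2, a10, a16, 3908, 25, 30, 10, .plain 2⟩,
  ⟨a12, a14, a17, 3991, 33, 21, 17, .arc a91 2 5⟩,
  ⟨a15, a12, a17, 3991, 20, 36, 18, .arc a91 2 5⟩,
  ⟨a10, a13, a18, 3955, 29, 24, 16, .arc a51 1 0⟩,
  ⟨a13, a5, a19, 3885, 38, 28, 15, .plain 1⟩,
  ⟨a10, a18, a20, 3961, 48, 25, 22, .plain 0⟩,
  ⟨a16, a10, a20, 3977, 24, 34, 19, .plain 0⟩,
  ⟨a9, a11, a22, 3957, 27, 43, 12, .plain 5⟩,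
  ⟨a11, a15, a22, 3978, 37, 26, 18, .plain 5⟩,
  ⟨a13, a19, a23, 3986, 51, 29, 23, .arc a51 1 0⟩,
  ⟨a18, a13, a23, 3986, 28, 47, 22, .arc a51 1 0⟩,
  ⟨a2, a16, a24, 3870, 35, 31, 19, .plain 2⟩,
  ⟨a7, a2, a24, 3870, 30, 32, 5, .plain 2⟩,
  ⟨a14, a7, a24, 3897, 31, 33, 17, .plain 2⟩,
  ⟨a17, a14, a24, 3891, 32, 41, 20, .plain 2⟩,
  ⟨a16, a20, a25, 3980, 49, 35, 25, .plain 0⟩,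
  ⟨a24, a16, a25, 3890, 34, 65, 30, .plain 2⟩,
  ⟨a15, a17, a26, 3974, 42, 37, 21, .arc a91 2 5⟩,
  ⟨a22, a15, a26, 3976, 36, 52, 27, .plain 5⟩,
  ⟨a19, a5, a27, 3841, 54, 50, 23, .plain 1⟩,
  ⟨a8, a9, a28, 3873, 44, 40, 9, .plain 5⟩,
  ⟨a21, a8, a28, 3909, 39, 80, 46, .plain 5⟩,
  ⟨a17, a24, a29, 3848, 76, 42, 33, .plain 2⟩,
  ⟨a26, a17, a29, 3974, 41, 60, 36, .arc a91 2 5⟩,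
  ⟨a9, a22, a30, 3937, 53, 44, 26, .plain 5⟩,
  ⟨a28, a9, a30, 3838, 43, 59, 39, .plain 5⟩,
  ⟨a5, a8, a31, 3645, 46, 71, 7, .plain 1⟩,
  ⟨a8, a21, a31, 3899, 81, 45, 40, .plain 1⟩,
  ⟨a18, a23, a32, 3975, 57, 48, 29, .plain 0⟩,
  ⟨a20, a18, a32, 3975, 47, 49, 24, .plain 0⟩,
  ⟨a25, a20, a32, 3935, 48, 63, 34, .plain 0⟩,
  ⟨a19, a27, a33, 3977, 55, 51, 38, .arc a51 1 0⟩,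
  ⟨a23, a19, a33, 3977, 50, 56, 28, .arc a51 1 0⟩,
  ⟨a22, a26, a34, 3976, 61, 53, 37, .plain 5⟩,
  ⟨a30, a22, a34, 3973, 52, 58, 43, .plain 5⟩,
  ⟨a27, a5, a35, 3816, 70, 55, 38, .plain 1⟩,
  ⟨a33, a27, a35, 3935, 54, 67, 50, .plain 4⟩,
  ⟨a23, a33, a36, 3969, 68, 57, 51, .plain 0⟩,
  ⟨a32, a23, a36, 3969, 56, 64, 47, .plain 0⟩,
  ⟨a30, a34, a37, 3973, 75, 88, 53, .plain 5⟩,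
  ⟨a28, a30, a39, 3838, 86, 107, 44, .plain 5⟩,
  ⟨a26, a29, a40, 3967, 62, 61, 42, .arc a91 2 5⟩,
  ⟨a34, a26, a40, 3973, 60, 74, 52, .plain 5⟩,
  ⟨a40, a29, a41, 3967, 77, 112, 60, .arc a91 2 5⟩,
  ⟨a25, a32, a42, 3902, 64, 66, 49, .plain 0⟩,
  ⟨a32, a36, a42, 3973, 69, 63, 57, .plain 0⟩,
  ⟨a24, a25, a43, 3852, 66, 93, 35, .plain 2⟩,
  ⟨a25, a42, a43, 3895, 124, 65, 63, .plain 0⟩,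
  ⟨a33, a35, a44, 3870, 147, 68, 55, .plain 4⟩,
  ⟨a36, a33, a44, 3970, 67, 69, 56, .plain 0⟩,
  ⟨a42, a36, a44, 3941, 68, 95, 64, .plain 0⟩,
  ⟨a35, a5, a45, 3717, 85, 146, 54, .plain 1⟩,
  ⟨a5, a31, a46, 3561, 72, 73, 45, .plain 1⟩,
  ⟨a31, a38, a46, 3815, 79, 71, 82, .plain 1⟩,
  ⟨a5, a46, a47, 3561, 101, 84, 71, .plain 1⟩,
  ⟨a34, a40, a48, 3961, 114, 75, 61, .plain 5⟩,
  ⟨a37, a34, a48, 3961, 74, 91, 58, .plain 5⟩,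
  ⟨a29, a24, a50, 3803, 99, 77, 41, .plain 2⟩,
  ⟨a41, a29, a50, 3908, 76, 113, 62, .plain 2⟩,
  ⟨a38, a49, a51, 3973, 97, 79, 83, .plain 3⟩,
  ⟨a46, a38, a51, 3919, 78, 100, 72, .plain 1⟩,
  ⟨a21, a28, a52, 3797, 109, 81, 40, .plain 3⟩,
  ⟨a31, a21, a52, 3857, 80, 82, 46, .plain 3⟩,
  ⟨a38, a31, a52, 3929, 81, 83, 72, .plain 3⟩,
  ⟨a49, a38, a52, 3947, 82, 94, 78, .plain 3⟩,
  ⟨a5, a47, a53, 3621, 185, 85, 73, .plain 1⟩,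
  ⟨a45, a5, a53, 3621, 84, 87, 70, .plain 1⟩,
  ⟨a39, a30, a54, 3875, 90, 105, 59, .plain 5⟩,
  ⟨a45, a53, a55, 3911, 134, 148, 85, .plain 1⟩,
  ⟨a30, a37, a56, 3877, 92, 89, 58, .plain 5⟩,
  ⟨a30, a56, a57, 3862, 122, 90, 88, .plain 5⟩,
  ⟨a54, a30, a57, 3862, 89, 106, 86, .plain 5⟩,
  ⟨a37, a48, a58, 3938, 111, 92, 75, .plain 5⟩,
  ⟨a56, a37, a58, 3930, 91, 119, 88, .plain 5⟩,
  ⟨a24, a43, a59, 3800, 102, 98, 65, .plain 2⟩,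
  ⟨a49, a52, a60, 3970, 128, 96, 83, .plain 3⟩,
  ⟨a42, a44, a61, 3916, 150, 132, 69, .plain 0⟩,
  ⟨a49, a60, a62, 3972, 129, 97, 94, .plain 0⟩,
  ⟨a51, a49, a62, 3972, 96, 103, 78, .plain 0⟩,
  ⟨a24, a59, a63, 3754, 133, 99, 93, .plain 2⟩,
  ⟨a50, a24, a63, 3754, 98, 115, 76, .plain 2⟩,
  ⟨a46, a51, a64, 3956, 104, 101, 79, .plain 6⟩,
  ⟨a47, a46, a64, 3894, 100, 184, 73, .plain 6⟩,
  ⟨a59, a43, a65, 3929, 125, 117, 93, .plain 2⟩,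
  ⟨a51, a62, a66, 3970, 143, 104, 97, .plain 0⟩,
  ⟨a64, a51, a66, 3956, 103, 142, 100, .plain 6⟩,
  ⟨a39, a54, a67, 3908, 106, 108, 86, .plain 3⟩,
  ⟨a54, a57, a67, 3967, 110, 105, 90, .arc a51 3 6⟩,
  ⟨a28, a39, a68, 3754, 108, 109, 59, .plain 3⟩,
  ⟨a39, a67, a68, 3803, 131, 107, 105, .plain 3⟩,
  ⟨a52, a28, a68, 3754, 107, 127, 80, .plain 3⟩,
  ⟨a67, a57, a69, 3967, 123, 130, 106, .arc a51 3 6⟩,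
  ⟨a58, a48, a70, 3930, 116, 118, 91, .plain 4⟩,
  ⟨a40, a41, a71, 3862, 113, 114, 62, .plain 4⟩,
  ⟨a41, a50, a71, 3875, 115, 112, 77, .plain 4⟩,
  ⟨a48, a40, a71, 3862, 112, 116, 74, .plain 4⟩,
  ⟨a50, a63, a71, 3838, 165, 113, 99, .plain 4⟩,
  ⟨a70, a48, a71, 3877, 114, 136, 111, .plain 4⟩,
  ⟨a59, a65, a72, 3970, 126, 139, 102, .plain 2⟩,
  ⟨a58, a70, a73, 3938, 137, 120, 111, .plain 4⟩,
  ⟨a56, a58, a74, 3938, 120, 121, 92, .plain 6⟩,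
  ⟨a58, a73, a74, 3930, 162, 119, 118, .plain 6⟩,
  ⟨a56, a74, a75, 3961, 163, 122, 119, .plain 6⟩,
  ⟨a57, a56, a75, 3961, 121, 123, 89, .plain 6⟩,
  ⟨a69, a57, a75, 3973, 122, 152, 110, .plain 6⟩,
  ⟨a43, a42, a76, 3745, 159, 125, 66, .plain 0⟩,
  ⟨a65, a43, a76, 3883, 124, 126, 102, .plain 0⟩,
  ⟨a72, a65, a76, 3972, 125, 154, 117, .plain 0⟩,
  ⟨a52, a68, a77, 3800, 169, 128, 109, .plain 3⟩,
  ⟨a60, a52, a77, 3929, 127, 129, 94, .plain 3⟩,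
  ⟨a62, a60, a77, 3883, 128, 209, 96, .plain 0⟩,
  ⟨a67, a69, a78, 3974, 141, 131, 110, .arc a51 3 6⟩,
  ⟨a68, a67, a78, 3848, 130, 138, 108, .plain 3⟩,
  ⟨a42, a61, a79, 3824, 151, 167, 95, .plain 0⟩,
  ⟨a63, a59, a80, 3797, 135, 170, 98, .plain 2⟩,
  ⟨a55, a53, a81, 3876, 187, 149, 87, .plain 6⟩,
  ⟨a80, a59, a82, 3857, 140, 171, 133, .plain 2⟩,
  ⟨a70, a71, a83, 3973, 157, 137, 116, .plain 4⟩,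
  ⟨a73, a70, a83, 3961, 136, 158, 118, .plain 4⟩,
  ⟨a68, a78, a84, 3891, 145, 173, 131, .plain 3⟩,
  ⟨a59, a72, a85, 3947, 155, 140, 117, .plain 2⟩,
  ⟨a82, a59, a85, 3929, 139, 199, 135, .plain 2⟩,
  ⟨a78, a69, a86, 3974, 153, 144, 130, .arc a51 3 6⟩,
  ⟨a64, a66, a87, 3963, 143, 186, 104, .plain 6⟩,
  ⟨a66, a62, a87, 3925, 211, 142, 103, .plain 0⟩,
  ⟨a78, a86, a88, 3991, 179, 145, 141, .arc a51 3 6⟩,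
  ⟨a84, a78, a88, 3991, 144, 174, 138, .arc a51 3 6⟩,
  ⟨a35, a45, a89, 3686, 148, 147, 70, .plain 4⟩,
  ⟨a44, a35, a89, 3686, 146, 150, 67, .plain 4⟩,
  ⟨a45, a55, a89, 3713, 149, 146, 87, .plain 4⟩,
  ⟨a55, a81, a89, 3713, 214, 148, 134, .plain 4⟩,
  ⟨a61, a44, a89, 3711, 147, 151, 95, .plain 4⟩,
  ⟨a79, a61, a89, 3763, 150, 222, 132, .plain 4⟩,
  ⟨a69, a75, a90, 3976, 164, 153, 123, .plain 6⟩,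
  ⟨a86, a69, a90, 3976, 152, 178, 141, .plain 6⟩,
  ⟨a72, a76, a91, 3972, 156, 155, 126, .plain 0⟩,
  ⟨a85, a72, a91, 3973, 154, 200, 139, .plain 2⟩,
  ⟨a91, a76, a92, 3970, 160, 180, 154, .plain 0⟩,
  ⟨a83, a71, a93, 3973, 166, 175, 136, .plain 4⟩,
  ⟨a73, a83, a94, 3961, 176, 161, 137, .plain 4⟩,
  ⟨a76, a42, a95, 3741, 168, 160, 124, .plain 0⟩,
  ⟨a92, a76, a95, 3925, 159, 181, 156, .plain 0⟩,
  ⟨a73, a94, a96, 3862, 183, 162, 158, .plain 6⟩,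
  ⟨a74, a73, a96, 3877, 161, 163, 120, .plain 6⟩,
  ⟨a75, a74, a96, 3973, 162, 164, 121, .plain 6⟩,
  ⟨a90, a75, a96, 3973, 163, 205, 152, .plain 6⟩,
  ⟨a71, a63, a97, 3838, 172, 166, 115, .plain 4⟩,
  ⟨a93, a71, a97, 3937, 165, 182, 157, .plain 4⟩,
  ⟨a42, a79, a98, 3737, 177, 168, 132, .plain 0⟩,
  ⟨a95, a42, a98, 3737, 167, 283, 159, .plain 0⟩,
  ⟨a77, a68, a99, 3852, 190, 210, 127, .plain 3⟩,
  ⟨a63, a80, a100, 3909, 171, 172, 133, .plain 4⟩,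
  ⟨a80, a82, a100, 3899, 297, 170, 135, .plain 3⟩,
  ⟨a97, a63, a100, 3873, 170, 220, 165, .plain 4⟩,
  ⟨a68, a84, a101, 3897, 174, 202, 138, .plain 3⟩,
  ⟨a84, a88, a101, 3963, 189, 173, 145, .arc a51 3 6⟩,
  ⟨a83, a93, a102, 3976, 193, 176, 157, .plain 4⟩,
  ⟨a94, a83, a102, 3973, 175, 195, 158, .plain 4⟩,
  ⟨a98, a79, a103, 3941, 223, 284, 167, .plain 0⟩,
  ⟨a86, a90, a104, 3978, 206, 179, 153, .plain 6⟩,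
  ⟨a88, a86, a104, 3981, 178, 188, 144, .plain 6⟩,
  ⟨a91, a92, a105, 3956, 181, 201, 156, .plain 5⟩,
  ⟨a92, a95, a105, 3963, 286, 180, 160, .plain 5⟩,
  ⟨a93, a97, a106, 3957, 204, 192, 166, .plain 4⟩,
  ⟨a96, a94, a107, 3862, 196, 228, 161, .plain 6⟩,
  ⟨a47, a64, a108, 3730, 186, 185, 101, .plain 6⟩,
  ⟨a53, a47, a108, 3730, 184, 187, 84, .plain 6⟩,
  ⟨a64, a87, a108, 3738, 191, 184, 142, .plain 6⟩,
  ⟨a81, a53, a108, 3749, 185, 194, 134, .plain 6⟩,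
  ⟨a88, a104, a109, 3970, 198, 189, 179, .plain 6⟩,
  ⟨a101, a88, a109, 3963, 188, 225, 174, .arc a51 3 6⟩,
  ⟨a99, a68, a110, 3890, 203, 208, 169, .plain 3⟩,
  ⟨a108, a87, a111, 3771, 212, 239, 186, .plain 6⟩,
  ⟨a93, a106, a112, 3978, 197, 193, 182, .plain 4⟩,
  ⟨a102, a93, a112, 3976, 192, 217, 175, .plain 4⟩,
  ⟨a81, a108, a113, 3807, 234, 213, 187, .plain 6⟩,
  ⟨a94, a102, a114, 3967, 219, 196, 176, .arc a231 1 4⟩,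
  ⟨a107, a94, a114, 3967, 195, 229, 183, .arc a231 1 4⟩,
  ⟨a112, a106, a115, 3981, 231, 218, 192, .plain 4⟩,
  ⟨a109, a104, a116, 3970, 207, 226, 188, .plain 6⟩,
  ⟨a82, a85, a117, 3815, 200, 296, 140, .plain 3⟩,
  ⟨a85, a91, a117, 3919, 201, 199, 155, .plain 3⟩,
  ⟨a91, a105, a117, 3956, 256, 200, 180, .plain 5⟩,
  ⟨a68, a101, a118, 3870, 227, 203, 173, .plain 3⟩,
  ⟨a110, a68, a118, 3870, 202, 215, 190, .plain 3⟩,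
  ⟨a106, a97, a119, 3976, 221, 230, 182, .plain 4⟩,
  ⟨a90, a96, a120, 3937, 270, 206, 164, .plain 6⟩,
  ⟨a104, a90, a120, 3957, 205, 207, 178, .plain 6⟩,
  ⟨a116, a104, a120, 3976, 206, 250, 198, .plain 6⟩,
  ⟨a99, a110, a121, 3980, 216, 232, 190, .plain 0⟩,
  ⟨a62, a77, a122, 3745, 210, 211, 129, .plain 0⟩,
  ⟨a77, a99, a122, 3895, 233, 209, 169, .plain 0⟩,
  ⟨a87, a62, a122, 3741, 209, 212, 143, .plain 0⟩,
  ⟨a111, a87, a122, 3737, 211, 247, 191, .plain 0⟩,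
  ⟨a81, a113, a123, 3913, 235, 214, 194, .plain 4⟩,
  ⟨a89, a81, a123, 3779, 213, 238, 149, .plain 4⟩,
  ⟨a110, a118, a124, 3908, 237, 216, 203, .plain 3⟩,
  ⟨a121, a110, a124, 3977, 215, 245, 208, .plain 0⟩,
  ⟨a102, a112, a125, 3974, 218, 219, 193, .arc a231 1 4⟩,
  ⟨a112, a115, a125, 3991, 224, 217, 197, .arc a231 1 4⟩,
  ⟨a114, a102, a125, 3974, 217, 308, 195, .arc a231 1 4⟩,
  ⟨a97, a100, a126, 3918, 299, 221, 172, .plain 4⟩,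
  ⟨a119, a97, a126, 3937, 220, 253, 204, .plain 4⟩,
  ⟨a79, a89, a127, 3763, 252, 223, 151, .plain 4⟩,
  ⟨a103, a79, a127, 3900, 222, 285, 177, .plain 4⟩,
  ⟨a125, a115, a128, 3991, 242, 309, 218, .arc a231 1 4⟩,
  ⟨a101, a109, a129, 3967, 226, 227, 189, .arc a51 3 6⟩,
  ⟨a109, a116, a129, 3961, 251, 225, 198, .plain 6⟩,
  ⟨a118, a101, a129, 3967, 225, 236, 202, .arc a51 3 6⟩,
  ⟨a96, a107, a130, 3875, 229, 269, 183, .plain 6⟩,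
  ⟨a107, a114, a130, 3908, 311, 228, 196, .plain 1⟩,
  ⟨a106, a119, a131, 3970, 254, 231, 204, .plain 4⟩,
  ⟨a115, a106, a131, 3970, 230, 241, 197, .plain 4⟩,
  ⟨a99, a121, a132, 3935, 246, 233, 208, .plain 0⟩,
  ⟨a122, a99, a132, 3902, 232, 249, 210, .plain 0⟩,
  ⟨a113, a108, a133, 3818, 258, 235, 194, .plain 6⟩,
  ⟨a123, a113, a133, 3963, 234, 243, 213, .arc a51 6 3⟩,
  ⟨a118, a129, a134, 3939, 321, 237, 227, .plain 2⟩,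
  ⟨a124, a118, a134, 3947, 236, 266, 215, .plain 3⟩,
  ⟨a89, a123, a135, 3781, 240, 257, 214, .plain 4⟩,
  ⟨a108, a111, a136, 3817, 248, 272, 191, .plain 6⟩,
  ⟨a135, a123, a137, 3955, 244, 277, 238, .plain 3⟩,
  ⟨a115, a131, a138, 3963, 255, 242, 231, .arc a231 1 4⟩,
  ⟨a128, a115, a138, 3963, 241, 310, 224, .arc a231 1 4⟩,
  ⟨a123, a133, a139, 3963, 280, 244, 235, .arc a51 6 3⟩,
  ⟨a137, a123, a139, 3970, 243, 278, 240, .plain 3⟩,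
  ⟨a121, a124, a140, 3961, 267, 246, 216, .plain 0⟩,
  ⟨a132, a121, a140, 3975, 245, 261, 232, .plain 0⟩,
  ⟨a111, a122, a141, 3737, 264, 248, 212, .plain 0⟩,
  ⟨a136, a111, a141, 3941, 247, 273, 239, .plain 0⟩,
  ⟨a122, a132, a142, 3973, 262, 274, 233, .plain 0⟩,
  ⟨a116, a120, a143, 3937, 292, 251, 207, .plain 6⟩,
  ⟨a129, a116, a143, 3961, 250, 320, 226, .plain 6⟩,
  ⟨a127, a89, a144, 3768, 260, 304, 222, .plain 4⟩,
  ⟨a119, a126, a145, 3961, 300, 254, 221, .plain 4⟩,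
  ⟨a131, a119, a145, 3961, 253, 255, 230, .plain 4⟩,
  ⟨a138, a131, a145, 3967, 254, 271, 241, .arc a231 1 4⟩,
  ⟨a117, a105, a146, 3894, 287, 298, 201, .plain 5⟩,
  ⟨a89, a135, a147, 3842, 327, 259, 238, .plain 4⟩,
  ⟨a133, a108, a148, 3875, 263, 279, 234, .plain 6⟩,
  ⟨a89, a147, a149, 3829, 317, 260, 257, .plain 4⟩,
  ⟨a144, a89, a149, 3771, 259, 265, 252, .plain 4⟩,
  ⟨a132, a140, a150, 3975, 268, 262, 246, .plain 0⟩,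
  ⟨a142, a132, a150, 3969, 261, 293, 249, .plain 0⟩,
  ⟨a148, a108, a151, 3889, 302, 281, 258, .plain 6⟩,
  ⟨a141, a122, a152, 3824, 275, 381, 247, .plain 0⟩,
  ⟨a144, a149, a153, 3954, 318, 305, 260, .plain 4⟩,
  ⟨a124, a134, a154, 3955, 323, 267, 237, .arc a231 2 0⟩,
  ⟨a140, a124, a154, 3955, 266, 268, 245, .arc a231 2 0⟩,
  ⟨a150, a140, a154, 3986, 267, 276, 261, .arc a231 2 0⟩,
  ⟨a96, a130, a155, 3838, 313, 270, 228, .plain 6⟩,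
  ⟨a120, a96, a155, 3838, 269, 291, 205, .plain 6⟩,
  ⟨a138, a145, a156, 3967, 337, 312, 255, .arc a231 1 4⟩,
  ⟨a108, a136, a157, 3817, 273, 301, 239, .plain 6⟩,
  ⟨a136, a141, a157, 3900, 383, 272, 248, .plain 5⟩,
  ⟨a122, a142, a158, 3941, 295, 275, 249, .plain 0⟩,
  ⟨a152, a122, a158, 3916, 274, 382, 264, .plain 0⟩,
  ⟨a150, a154, a159, 3986, 324, 294, 268, .arc a231 2 0⟩,
  ⟨a135, a137, a160, 3947, 278, 326, 240, .plain 3⟩,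
  ⟨a137, a139, a160, 3963, 289, 277, 244, .plain 3⟩,
  ⟨a133, a148, a161, 3958, 282, 280, 258, .arc a51 6 3⟩,
  ⟨a139, a133, a161, 3958, 279, 288, 243, .arc a51 6 3⟩,
  ⟨a148, a151, a162, 3991, 303, 282, 263, .arc a51 6 3⟩,
  ⟨a161, a148, a162, 3991, 281, 290, 279, .arc a51 6 3⟩,
  ⟨a95, a98, a163, 3771, 284, 286, 168, .plain 5⟩,
  ⟨a98, a103, a163, 3817, 285, 283, 177, .plain 5⟩,
  ⟨a103, a127, a163, 3817, 306, 284, 223, .plain 5⟩,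
  ⟨a105, a95, a163, 3738, 283, 287, 181, .plain 5⟩,
  ⟨a146, a105, a163, 3730, 286, 329, 256, .plain 5⟩,
  ⟨a139, a161, a164, 3965, 290, 289, 280, .plain 3⟩,
  ⟨a160, a139, a164, 3963, 288, 334, 278, .plain 3⟩,
  ⟨a161, a162, a164, 3981, 333, 288, 282, .plain 3⟩,
  ⟨a120, a155, a165, 3873, 331, 292, 270, .plain 6⟩,
  ⟨a143, a120, a165, 3918, 291, 322, 250, .plain 6⟩,
  ⟨a142, a150, a166, 3969, 294, 295, 262, .plain 0⟩,
  ⟨a150, a159, a166, 3977, 307, 293, 276, .arc a231 2 0⟩,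
  ⟨a158, a142, a166, 3970, 293, 353, 274, .plain 0⟩,
  ⟨a82, a117, a167, 3561, 298, 297, 199, .plain 3⟩,
  ⟨a100, a82, a167, 3645, 296, 299, 171, .plain 3⟩,
  ⟨a117, a146, a167, 3561, 330, 296, 256, .plain 3⟩,
  ⟨a126, a100, a167, 3812, 297, 300, 220, .plain 3⟩,
  ⟨a145, a126, a167, 3878, 299, 336, 253, .plain 3⟩,
  ⟨a108, a157, a168, 3832, 315, 302, 272, .plain 6⟩,
  ⟨a151, a108, a168, 3856, 301, 303, 263, .plain 6⟩,
  ⟨a162, a151, a168, 3961, 302, 316, 281, .arc a51 6 3⟩,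
  ⟨a127, a144, a169, 3917, 305, 306, 252, .plain 5⟩,
  ⟨a144, a153, a169, 3963, 314, 304, 265, .arc a91 5 2⟩,
  ⟨a163, a127, a169, 3832, 304, 340, 285, .plain 5⟩,
  ⟨a166, a159, a170, 3977, 325, 354, 294, .arc a231 2 0⟩,
  ⟨a114, a125, a171, 3848, 309, 311, 219, .plain 1⟩,
  ⟨a125, a128, a171, 3891, 310, 308, 224, .plain 1⟩,
  ⟨a128, a138, a171, 3897, 312, 309, 242, .plain 1⟩,
  ⟨a130, a114, a171, 3803, 308, 313, 229, .plain 1⟩,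
  ⟨a138, a156, a171, 3870, 357, 310, 271, .plain 1⟩,
  ⟨a155, a130, a171, 3754, 311, 394, 269, .plain 1⟩,
  ⟨a169, a153, a172, 3963, 319, 348, 305, .arc a91 5 2⟩,
  ⟨a168, a157, a173, 3917, 385, 338, 301, .plain 6⟩,
  ⟨a162, a168, a174, 3961, 339, 332, 303, .arc a51 6 3⟩,
  ⟨a149, a147, a175, 3948, 328, 318, 259, .plain 2⟩,
  ⟨a153, a149, a175, 3955, 317, 319, 265, .plain 2⟩,
  ⟨a172, a153, a175, 3955, 318, 345, 314, .plain 2⟩,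
  ⟨a129, a143, a176, 3878, 322, 321, 251, .plain 2⟩,
  ⟨a134, a129, a176, 3878, 320, 323, 236, .plain 2⟩,
  ⟨a143, a165, a176, 3812, 359, 320, 292, .plain 2⟩,
  ⟨a154, a134, a176, 3901, 321, 324, 266, .plain 2⟩,
  ⟨a159, a154, a176, 3885, 323, 325, 276, .plain 2⟩,
  ⟨a170, a159, a176, 3841, 324, 355, 307, .plain 2⟩,
  ⟨a135, a160, a177, 3902, 365, 327, 277, .plain 3⟩,
  ⟨a147, a135, a177, 3906, 326, 328, 257, .plain 3⟩,
  ⟨a175, a147, a177, 3948, 327, 346, 317, .plain 2⟩,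
  ⟨a146, a163, a178, 3730, 390, 330, 287, .plain 5⟩,
  ⟨a167, a146, a178, 3621, 329, 379, 298, .plain 3⟩,
  ⟨a165, a155, a179, 3909, 395, 358, 291, .plain 6⟩,
  ⟨a162, a174, a180, 3967, 343, 333, 316, .plain 3⟩,
  ⟨a164, a162, a180, 3964, 332, 335, 290, .plain 3⟩,
  ⟨a160, a164, a181, 3947, 335, 364, 289, .plain 3⟩,
  ⟨a164, a180, a181, 3964, 344, 334, 333, .plain 3⟩,
  ⟨a145, a167, a182, 3878, 362, 337, 300, .plain 3⟩,
  ⟨a156, a145, a182, 3939, 336, 342, 271, .plain 3⟩,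
  ⟨a168, a173, a183, 3963, 367, 339, 315, .arc a51 6 3⟩,
  ⟨a174, a168, a183, 3963, 338, 360, 316, .arc a51 6 3⟩,
  ⟨a163, a169, a184, 3856, 350, 341, 306, .plain 5⟩,
  ⟨a163, a184, a185, 3889, 351, 369, 340, .plain 5⟩,
  ⟨a156, a182, a186, 3947, 363, 356, 337, .plain 1⟩,
  ⟨a180, a174, a188, 3962, 361, 344, 332, .plain 3⟩,
  ⟨a181, a180, a188, 3981, 343, 422, 335, .plain 3⟩,
  ⟨a172, a175, a189, 3961, 346, 347, 319, .plain 2⟩,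
  ⟨a175, a177, a189, 3924, 366, 345, 328, .plain 2⟩,
  ⟨a187, a172, a189, 3962, 345, 373, 349, .plain 2⟩,
  ⟨a169, a172, a190, 3961, 349, 350, 314, .arc a91 5 2⟩,
  ⟨a172, a187, a190, 3967, 388, 348, 347, .plain 2⟩,
  ⟨a184, a169, a190, 3961, 348, 351, 340, .arc a91 5 2⟩,
  ⟨a185, a184, a190, 3991, 350, 352, 341, .arc a91 5 2⟩,
  ⟨a185, a190, a191, 3991, 389, 370, 351, .arc a91 5 2⟩,
  ⟨a158, a166, a192, 3870, 354, 384, 295, .plain 5⟩,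
  ⟨a166, a170, a192, 3935, 355, 353, 307, .plain 5⟩,
  ⟨a170, a176, a192, 3816, 407, 354, 325, .plain 2⟩,
  ⟨a156, a186, a193, 3908, 375, 357, 342, .plain 1⟩,
  ⟨a171, a156, a193, 3870, 356, 371, 312, .plain 1⟩,
  ⟨a165, a179, a194, 3899, 396, 359, 331, .plain 2⟩,
  ⟨a176, a165, a194, 3645, 358, 453, 322, .plain 2⟩,
  ⟨a174, a183, a195, 3955, 368, 361, 339, .plain 3⟩,
  ⟨a188, a174, a195, 3961, 360, 411, 343, .plain 3⟩,
  ⟨a182, a167, a196, 3901, 372, 363, 336, .plain 3⟩,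
  ⟨a186, a182, a196, 3955, 362, 377, 342, .arc a91 3 0⟩,
  ⟨a160, a181, a198, 3841, 424, 365, 334, .plain 3⟩,
  ⟨a177, a160, a198, 3855, 364, 366, 326, .plain 3⟩,
  ⟨a189, a177, a198, 3896, 365, 374, 346, .plain 2⟩,
  ⟨a183, a173, a199, 3954, 386, 368, 338, .plain 5⟩,
  ⟨a195, a183, a199, 3955, 367, 404, 360, .plain 3⟩,
  ⟨a163, a185, a200, 3875, 370, 402, 341, .plain 5⟩,
  ⟨a185, a191, a200, 3958, 393, 369, 352, .arc a91 5 2⟩,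
  ⟨a171, a193, a201, 3890, 376, 409, 357, .plain 1⟩,
  ⟨a196, a167, a202, 3885, 401, 398, 362, .plain 3⟩,
  ⟨a187, a189, a203, 3981, 374, 387, 347, .plain 2⟩,
  ⟨a189, a198, a203, 3867, 443, 373, 366, .plain 2⟩,
  ⟨a193, a186, a204, 3977, 378, 376, 356, .plain 0⟩,
  ⟨a201, a193, a204, 3980, 375, 416, 371, .plain 0⟩,
  ⟨a186, a196, a205, 3955, 399, 378, 363, .arc a91 3 0⟩,
  ⟨a204, a186, a205, 3961, 377, 417, 375, .plain 0⟩,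
  ⟨a167, a178, a206, 3621, 380, 397, 330, .plain 3⟩,
  ⟨a178, a197, a206, 3911, 477, 379, 391, .plain 3⟩,
  ⟨a141, a152, a207, 3763, 382, 383, 264, .plain 5⟩,
  ⟨a152, a158, a207, 3711, 384, 381, 275, .plain 5⟩,
  ⟨a157, a141, a207, 3763, 381, 385, 273, .plain 5⟩,
  ⟨a158, a192, a207, 3686, 408, 382, 353, .plain 5⟩,
  ⟨a173, a157, a207, 3768, 383, 386, 315, .plain 5⟩,
  ⟨a199, a173, a207, 3771, 385, 405, 367, .plain 5⟩,
  ⟨a187, a203, a208, 3964, 428, 388, 373, .plain 2⟩,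
  ⟨a190, a187, a208, 3964, 387, 389, 349, .plain 2⟩,
  ⟨a191, a190, a208, 3981, 388, 392, 352, .plain 2⟩,
  ⟨a178, a163, a209, 3749, 403, 391, 329, .plain 5⟩,
  ⟨a197, a178, a209, 3876, 390, 476, 380, .plain 5⟩,
  ⟨a191, a208, a210, 3965, 429, 393, 389, .plain 2⟩,
  ⟨a200, a191, a210, 3958, 392, 419, 370, .arc a91 5 2⟩,
  ⟨a155, a171, a211, 3754, 410, 395, 313, .plain 1⟩,
  ⟨a179, a155, a211, 3797, 394, 396, 331, .plain 1⟩,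
  ⟨a194, a179, a211, 3857, 395, 406, 358, .plain 1⟩,
  ⟨a167, a206, a212, 3717, 479, 400, 379, .plain 3⟩,
  ⟨a196, a202, a213, 3986, 414, 399, 372, .arc a91 3 0⟩,
  ⟨a205, a196, a213, 3986, 398, 418, 377, .arc a91 3 0⟩,
  ⟨a167, a212, a214, 3816, 415, 401, 397, .plain 3⟩,
  ⟨a202, a167, a214, 3841, 400, 413, 372, .plain 3⟩,
  ⟨a163, a200, a215, 3818, 421, 403, 369, .plain 5⟩,
  ⟨a209, a163, a215, 3807, 402, 420, 390, .plain 5⟩,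
  ⟨a195, a199, a216, 3948, 405, 412, 368, .plain 3⟩,
  ⟨a199, a207, a216, 3829, 439, 404, 386, .plain 5⟩,
  ⟨a194, a211, a217, 3929, 426, 454, 396, .plain 1⟩,
  ⟨a192, a176, a218, 3717, 456, 408, 355, .plain 2⟩,
  ⟨a207, a192, a218, 3686, 407, 441, 384, .plain 5⟩,
  ⟨a171, a201, a219, 3852, 437, 410, 371, .plain 1⟩,
  ⟨a211, a171, a219, 3800, 409, 431, 394, .plain 1⟩,
  ⟨a188, a195, a220, 3924, 412, 423, 361, .plain 3⟩,
  ⟨a195, a216, a220, 3948, 440, 411, 404, .plain 3⟩,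
  ⟨a202, a214, a221, 3977, 415, 414, 401, .arc a91 3 0⟩,
  ⟨a213, a202, a221, 3977, 413, 433, 398, .arc a91 3 0⟩,
  ⟨a214, a212, a221, 3935, 446, 413, 400, .plain 6⟩,
  ⟨a201, a204, a222, 3935, 417, 436, 376, .plain 0⟩,
  ⟨a204, a205, a222, 3975, 418, 416, 378, .plain 0⟩,
  ⟨a205, a213, a222, 3975, 434, 417, 399, .plain 0⟩,
  ⟨a200, a210, a224, 3963, 427, 421, 393, .arc a91 5 2⟩,
  ⟨a209, a215, a224, 3913, 421, 478, 403, .plain 6⟩,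
  ⟨a215, a200, a224, 3963, 419, 420, 402, .arc a91 5 2⟩,
  ⟨a181, a188, a225, 3867, 423, 424, 344, .plain 3⟩,
  ⟨a188, a220, a225, 3896, 466, 422, 411, .plain 3⟩,
  ⟨a198, a181, a225, 3841, 422, 425, 364, .plain 3⟩,
  ⟨a223, a198, a225, 3878, 424, 444, 442, .plain 3⟩,
  ⟨a217, a211, a226, 3947, 432, 435, 406, .plain 1⟩,
  ⟨a224, a210, a227, 3970, 430, 458, 419, .plain 2⟩,
  ⟨a208, a203, a228, 3947, 445, 429, 387, .plain 2⟩,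
  ⟨a210, a208, a228, 3963, 428, 430, 392, .plain 2⟩,
  ⟨a227, a210, a228, 3963, 429, 459, 427, .plain 2⟩,
  ⟨a211, a219, a229, 3929, 451, 432, 410, .plain 1⟩,
  ⟨a226, a211, a229, 3970, 431, 450, 426, .plain 1⟩,
  ⟨a213, a221, a230, 3969, 447, 434, 414, .plain 0⟩,
  ⟨a222, a213, a230, 3969, 433, 438, 418, .plain 0⟩,
  ⟨a217, a226, a231, 3973, 452, 455, 426, .plain 1⟩,
  ⟨a201, a222, a232, 3902, 438, 437, 416, .plain 0⟩,
  ⟨a219, a201, a232, 3895, 436, 449, 409, .plain 0⟩,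
  ⟨a222, a230, a232, 3973, 448, 436, 434, .plain 0⟩,
  ⟨a216, a207, a233, 3842, 471, 440, 405, .plain 5⟩,
  ⟨a220, a216, a233, 3906, 439, 465, 412, .plain 1⟩,
  ⟨a207, a218, a234, 3713, 457, 463, 408, .plain 5⟩,
  ⟨a198, a223, a235, 3878, 444, 443, 425, .plain 2⟩,
  ⟨a203, a198, a235, 3841, 442, 445, 374, .plain 2⟩,
  ⟨a223, a225, a235, 3878, 488, 442, 425, .plain 1⟩,
  ⟨a228, a203, a235, 3841, 443, 467, 428, .plain 2⟩,
  ⟨a221, a212, a236, 3870, 481, 447, 415, .plain 6⟩,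
  ⟨a230, a221, a236, 3970, 446, 448, 433, .plain 0⟩,
  ⟨a232, a230, a236, 3941, 447, 482, 438, .plain 0⟩,
  ⟨a219, a232, a237, 3745, 489, 451, 437, .plain 0⟩,
  ⟨a226, a229, a237, 3972, 451, 452, 432, .plain 0⟩,
  ⟨a229, a219, a237, 3883, 449, 450, 431, .plain 0⟩,
  ⟨a231, a226, a237, 3972, 450, 462, 435, .plain 0⟩,
  ⟨a176, a194, a238, 3561, 454, 460, 359, .plain 2⟩,
  ⟨a194, a217, a238, 3815, 455, 453, 406, .plain 2⟩,
  ⟨a217, a231, a238, 3919, 474, 454, 435, .plain 2⟩,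
  ⟨a218, a176, a239, 3621, 461, 457, 407, .plain 2⟩,
  ⟨a234, a218, a239, 3911, 456, 464, 441, .plain 2⟩,
  ⟨a224, a227, a240, 3955, 459, 480, 427, .plain 2⟩,
  ⟨a227, a228, a240, 3947, 468, 458, 430, .plain 2⟩,
  ⟨a176, a238, a241, 3561, 475, 461, 453, .plain 2⟩,
  ⟨a239, a176, a241, 3621, 460, 522, 456, .plain 2⟩,
  ⟨a231, a237, a242, 3970, 490, 473, 452, .plain 0⟩,
  ⟨a207, a234, a243, 3713, 464, 470, 441, .plain 5⟩,
  ⟨a234, a239, a243, 3876, 524, 463, 457, .plain 4⟩,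
  ⟨a220, a233, a244, 3902, 469, 466, 440, .plain 1⟩,
  ⟨a225, a220, a244, 3855, 465, 487, 423, .plain 1⟩,
  ⟨a228, a235, a245, 3855, 497, 468, 445, .plain 2⟩,
  ⟨a240, a228, a245, 3902, 467, 485, 459, .plain 2⟩,
  ⟨a244, a233, a246, 3947, 472, 493, 465, .plain 1⟩,
  ⟨a207, a243, a247, 3779, 484, 471, 463, .plain 5⟩,
  ⟨a233, a207, a247, 3781, 470, 472, 439, .plain 5⟩,
  ⟨a246, a233, a247, 3955, 471, 494, 469, .plain 1⟩,
  ⟨a231, a242, a248, 3956, 491, 474, 462, .plain 4⟩,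
  ⟨a238, a231, a248, 3956, 473, 475, 455, .plain 4⟩,
  ⟨a241, a238, a248, 3894, 474, 523, 460, .plain 4⟩,
  ⟨a197, a209, a249, 3713, 478, 477, 391, .plain 6⟩,
  ⟨a206, a197, a249, 3713, 476, 479, 380, .plain 6⟩,
  ⟨a209, a224, a249, 3779, 480, 476, 420, .plain 6⟩,
  ⟨a212, a206, a249, 3686, 477, 481, 397, .plain 6⟩,
  ⟨a224, a240, a249, 3781, 486, 478, 458, .plain 6⟩,
  ⟨a236, a212, a249, 3686, 479, 483, 446, .plain 6⟩,
  ⟨a232, a236, a250, 3916, 483, 504, 448, .plain 0⟩,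
  ⟨a236, a249, a250, 3711, 505, 482, 481, .plain 6⟩,
  ⟨a247, a243, a251, 3913, 526, 500, 470, .plain 5⟩,
  ⟨a240, a245, a252, 3906, 499, 486, 468, .plain 2⟩,
  ⟨a249, a240, a252, 3842, 485, 502, 480, .plain 6⟩,
  ⟨a225, a244, a253, 3841, 492, 488, 466, .plain 1⟩,
  ⟨a235, a225, a253, 3841, 487, 496, 444, .plain 1⟩,
  ⟨a237, a232, a254, 3741, 513, 490, 449, .plain 0⟩,
  ⟨a242, a237, a254, 3925, 489, 491, 462, .plain 0⟩,
  ⟨a248, a242, a254, 3963, 490, 525, 473, .plain 4⟩,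
  ⟨a253, a244, a255, 3947, 495, 506, 487, .plain 1⟩,
  ⟨a244, a246, a256, 3963, 494, 495, 469, .plain 1⟩,
  ⟨a246, a247, a256, 3970, 501, 493, 472, .plain 1⟩,
  ⟨a255, a244, a256, 3963, 493, 508, 492, .plain 1⟩,
  ⟨a235, a253, a257, 3867, 507, 497, 488, .plain 1⟩,
  ⟨a245, a235, a257, 3896, 496, 498, 467, .plain 1⟩,
  ⟨a245, a257, a258, 3924, 519, 499, 497, .plain 1⟩,
  ⟨a252, a245, a258, 3948, 498, 503, 485, .plain 1⟩,
  ⟨a247, a251, a259, 3963, 528, 501, 484, .arc a231 4 1⟩,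
  ⟨a256, a247, a259, 3963, 500, 509, 494, .arc a231 4 1⟩,
  ⟨a249, a252, a260, 3829, 503, 533, 486, .plain 6⟩,
  ⟨a252, a258, a260, 3948, 517, 502, 499, .plain 1⟩,
  ⟨a232, a250, a261, 3824, 505, 512, 482, .plain 0⟩,
  ⟨a250, a249, a261, 3763, 541, 504, 483, .plain 6⟩,
  ⟨a253, a255, a262, 3964, 511, 507, 492, .plain 1⟩,
  ⟨a257, a253, a262, 3981, 506, 518, 496, .plain 1⟩,
  ⟨a255, a256, a263, 3965, 509, 510, 495, .plain 1⟩,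
  ⟨a256, a259, a263, 3958, 514, 508, 501, .arc a231 4 1⟩,
  ⟨a255, a263, a264, 3981, 515, 511, 508, .plain 1⟩,
  ⟨a262, a255, a264, 3964, 510, 520, 506, .plain 1⟩,
  ⟨a232, a261, a265, 3737, 531, 513, 504, .plain 0⟩,
  ⟨a254, a232, a265, 3737, 512, 527, 489, .plain 0⟩,
  ⟨a263, a259, a266, 3958, 529, 515, 509, .arc a231 4 1⟩,
  ⟨a264, a263, a266, 3991, 514, 516, 510, .arc a231 4 1⟩,
  ⟨a264, a266, a267, 3991, 530, 535, 515, .arc a231 4 1⟩,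
  ⟨a260, a258, a268, 3955, 521, 534, 503, .plain 1⟩,
  ⟨a257, a262, a269, 3962, 520, 519, 507, .plain 1⟩,
  ⟨a258, a257, a269, 3961, 518, 521, 498, .plain 1⟩,
  ⟨a262, a264, a269, 3967, 538, 518, 511, .plain 1⟩,
  ⟨a268, a258, a269, 3955, 519, 537, 517, .plain 1⟩,
  ⟨a239, a241, a270, 3730, 523, 524, 461, .plain 4⟩,
  ⟨a241, a248, a270, 3730, 525, 522, 475, .plain 4⟩,
  ⟨a243, a239, a270, 3749, 522, 526, 464, .plain 4⟩,
  ⟨a248, a254, a270, 3738, 527, 523, 491, .plain 4⟩,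
  ⟨a251, a243, a270, 3807, 524, 528, 484, .plain 4⟩,
  ⟨a254, a265, a270, 3771, 532, 525, 513, .plain 4⟩,
  ⟨a259, a251, a270, 3818, 526, 529, 500, .plain 4⟩,
  ⟨a266, a259, a270, 3875, 528, 530, 514, .plain 4⟩,
  ⟨a267, a266, a270, 3889, 529, 536, 516, .plain 4⟩,
  ⟨a265, a261, a271, 3941, 543, 532, 512, .plain 0⟩,
  ⟨a270, a265, a271, 3817, 531, 542, 527, .plain 4⟩,
  ⟨a249, a260, a272, 3771, 534, 540, 502, .plain 6⟩,
  ⟨a260, a268, a272, 3954, 539, 533, 517, .plain 6⟩,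
  ⟨a264, a267, a273, 3961, 536, 538, 516, .arc a231 4 1⟩,
  ⟨a267, a270, a273, 3856, 545, 535, 530, .plain 4⟩,
  ⟨a268, a269, a273, 3963, 538, 539, 521, .arc a231 4 1⟩,
  ⟨a269, a264, a273, 3961, 535, 537, 520, .arc a231 4 1⟩,
  ⟨a272, a268, a273, 3963, 537, 544, 534, .arc a231 4 1⟩,
  ⟨a249, a272, a274, 3768, 544, 541, 533, .plain 6⟩,
  ⟨a261, a249, a274, 3763, 540, 543, 505, .plain 6⟩,
  ⟨a270, a271, a274, 3817, 543, 545, 532, .plain 4⟩,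
  ⟨a271, a261, a274, 3900, 541, 542, 531, .plain 6⟩,
  ⟨a272, a273, a274, 3917, 545, 540, 539, .plain 4⟩,
  ⟨a273, a270, a274, 3832, 542, 544, 536, .plain 4⟩]
def aL : List Facet := aL0
def ag : Cfg := ⟨[a51, a91, a231], 500, 432, 16004795, 8002398⟩
def b0 : V := ⟨98, 4177, 4014, 33951744, rfl⟩
def b1 : V := ⟨116, 3730, 4246, 33144832, rfl⟩
def b2 : V := ⟨118, 4399, 3805, 34086912, rfl⟩
def b3 : V := ⟨130, 3842, 3642, 31186944, rfl⟩
def b4 : V := ⟨132, 3561, 4059, 31752192, rfl⟩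
def b5 : V := ⟨149, 4075, 3445, 31412224, rfl⟩
def b6 : V := ⟨155, 3992, 4770, 36524032, rfl⟩
def b7 : V := ⟨197, 3289, 4476, 32612352, rfl⟩
def b8 : V := ⟨213, 3241, 3660, 29138944, rfl⟩
def b9 : V := ⟨233, 3512, 3238, 28602368, rfl⟩
def b10 : V := ⟨249, 3755, 3054, 28909568, rfl⟩
def b11 : V := ⟨256, 4698, 5040, 40935424, rfl⟩
def b12 : V := ⟨256, 5028, 3474, 35872768, rfl⟩
def b13 : V := ⟨345, 5174, 3221, 35799040, rfl⟩
def b14 : V := ⟨348, 5454, 3771, 39211008, rfl⟩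
def b15 : V := ⟨385, 2660, 3689, 27582464, rfl⟩
def b16 : V := ⟨394, 2883, 3189, 26484736, rfl⟩
def b17 : V := ⟨408, 3595, 5561, 39174144, rfl⟩
def b18 : V := ⟨410, 3207, 2823, 26378240, rfl⟩
def b19 : V := ⟨420, 3461, 2653, 26763264, rfl⟩
def b20 : V := ⟨432, 2519, 4390, 30068736, rfl⟩
def b21 : V := ⟨439, 5614, 3528, 39243776, rfl⟩
def b22 : V := ⟨460, 2883, 5239, 35151872, rfl⟩
def b23 : V := ⟨473, 3128, 2706, 25833472, rfl⟩
def b24 : V := ⟨481, 3384, 2540, 26234880, rfl⟩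
def b25 : V := ⟨504, 5855, 4116, 42905600, rfl⟩
def b26 : V := ⟨543, 2452, 4914, 32395264, rfl⟩
def b27 : V := ⟨576, 5539, 2859, 36757504, rfl⟩
def b28 : V := ⟨600, 6029, 3885, 43065344, rfl⟩
def b29 : V := ⟨613, 2613, 2805, 24702976, rfl⟩
def b30 : V := ⟨633, 4756, 2205, 31105024, rfl⟩
def b31 : V := ⟨648, 2948, 2424, 24657920, rfl⟩
def b32 : V := ⟨651, 3210, 2267, 25100288, rfl⟩
def b33 : V := ⟨665, 6129, 4404, 45867008, rfl⟩
def b34 : V := ⟨687, 5981, 3189, 40374272, rfl⟩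
def b35 : V := ⟨718, 6201, 4489, 46727168, rfl⟩
def b36 : V := ⟨750, 4708, 6200, 47751168, rfl⟩
def b37 : V := ⟨765, 1937, 3602, 25821184, rfl⟩
def b38 : V := ⟨767, 6312, 4182, 46125056, rfl⟩
def b39 : V := ⟨817, 1814, 4291, 28352512, rfl⟩
def b40 : V := ⟨817, 2126, 2928, 24047616, rfl⟩
def b41 : V := ⟨822, 6387, 4270, 47017984, rfl⟩
def b42 : V := ⟨843, 2420, 2480, 23523328, rfl⟩
def b43 : V := ⟨862, 4127, 6450, 46854144, rfl⟩
def b44 : V := ⟨878, 5875, 2521, 37986304, rfl⟩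
def b45 : V := ⟨908, 2539, 5943, 38461440, rfl⟩
def b46 : V := ⟨922, 3013, 1916, 23965696, rfl⟩
def b47 : V := ⟨928, 2745, 2061, 23486464, rfl⟩
def b48 : V := ⟨929, 6497, 3642, 45334528, rfl⟩
def b49 : V := ⟨971, 6473, 4862, 50405376, rfl⟩
def b50 : V := ⟨1040, 1677, 3195, 24215552, rfl⟩
def b51 : V := ⟨1057, 6429, 2947, 42733568, rfl⟩
def b52 : V := ⟨1084, 6668, 4657, 50827264, rfl⟩
def b53 : V := ⟨1171, 6824, 4033, 49266688, rfl⟩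
def b54 : V := ⟨1183, 2628, 6410, 41865216, rfl⟩
def b55 : V := ⟨1249, 1916, 2324, 22482944, rfl⟩
def b56 : V := ⟨1255, 6121, 6052, 55001088, rfl⟩
def b57 : V := ⟨1274, 3620, 1302, 25378816, rfl⟩
def b58 : V := ⟨1302, 1274, 3620, 25378816, rfl⟩
def b59 : V := ⟨1318, 2337, 1818, 22417408, rfl⟩
def b60 : V := ⟨1335, 6908, 3410, 47730688, rfl⟩
def b61 : V := ⟨1340, 5425, 6672, 55037952, rfl⟩
def b62 : V := ⟨1363, 2115, 6243, 39817216, rfl⟩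
def b63 : V := ⟨1374, 1464, 2806, 23117824, rfl⟩
def b64 : V := ⟨1379, 6788, 5268, 55029760, rfl⟩
def b65 : V := ⟨1464, 2806, 1374, 23117824, rfl⟩
def b66 : V := ⟨1465, 3659, 7077, 49975296, rfl⟩
def b67 : V := ⟨1470, 3195, 6976, 47681536, rfl⟩
def b68 : V := ⟨1512, 2744, 6834, 45424640, rfl⟩
def b69 : V := ⟨1576, 4657, 7151, 54820864, rfl⟩
def b70 : V := ⟨1670, 2178, 6632, 42926080, rfl⟩
def b71 : V := ⟨1677, 3195, 1040, 24215552, rfl⟩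
def b72 : V := ⟨1686, 7273, 4406, 54743040, rfl⟩
def b73 : V := ⟨1750, 6478, 1900, 41484288, rfl⟩
def b74 : V := ⟨1787, 1787, 1787, 21958656, rfl⟩
def b75 : V := ⟨1808, 3246, 7265, 50458624, rfl⟩
def b76 : V := ⟨1814, 4291, 817, 28352512, rfl⟩
def b77 : V := ⟨1818, 1318, 2337, 22417408, rfl⟩
def b78 : V := ⟨1827, 5564, 7044, 59125760, rfl⟩
def b79 : V := ⟨1900, 1750, 6478, 41484288, rfl⟩
def b80 : V := ⟨1916, 922, 3013, 23965696, rfl⟩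
def b81 : V := ⟨1916, 2324, 1249, 22482944, rfl⟩
def b82 : V := ⟨1937, 3602, 765, 25821184, rfl⟩
def b83 : V := ⟨2014, 2270, 6982, 46145536, rfl⟩
def b84 : V := ⟨2061, 928, 2745, 23486464, rfl⟩
def b85 : V := ⟨2115, 6243, 1363, 39817216, rfl⟩
def b86 : V := ⟨2126, 2928, 817, 24047616, rfl⟩
def b87 : V := ⟨2178, 6632, 1670, 42926080, rfl⟩
def b88 : V := ⟨2198, 2851, 7390, 50950144, rfl⟩
def b89 : V := ⟨2205, 633, 4756, 31105024, rfl⟩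
def b90 : V := ⟨2267, 651, 3210, 25100288, rfl⟩
def b91 : V := ⟨2270, 6982, 2014, 46145536, rfl⟩
def b92 : V := ⟨2324, 1249, 1916, 22482944, rfl⟩
def b93 : V := ⟨2337, 1818, 1318, 22417408, rfl⟩
def b94 : V := ⟨2420, 2480, 843, 23523328, rfl⟩
def b95 : V := ⟨2424, 648, 2948, 24657920, rfl⟩
def b96 : V := ⟨2448, 7741, 4125, 58630144, rfl⟩
def b97 : V := ⟨2452, 4914, 543, 32395264, rfl⟩
def b98 : V := ⟨2480, 843, 2420, 23523328, rfl⟩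
def b99 : V := ⟨2519, 4390, 432, 30068736, rfl⟩
def b100 : V := ⟨2521, 878, 5875, 37986304, rfl⟩
def b101 : V := ⟨2539, 5943, 908, 38461440, rfl⟩
def b102 : V := ⟨2540, 481, 3384, 26234880, rfl⟩
def b103 : V := ⟨2566, 7650, 5109, 62771200, rfl⟩
def b104 : V := ⟨2613, 2805, 613, 24702976, rfl⟩
def b105 : V := ⟨2623, 6078, 7242, 65302528, rfl⟩
def b106 : V := ⟨2628, 6410, 1183, 41865216, rfl⟩
def b107 : V := ⟨2653, 420, 3461, 26763264, rfl⟩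
def b108 : V := ⟨2660, 3689, 385, 27582464, rfl⟩
def b109 : V := ⟨2706, 473, 3128, 25833472, rfl⟩
def b110 : V := ⟨2744, 6834, 1512, 45424640, rfl⟩
def b111 : V := ⟨2745, 2061, 928, 23486464, rfl⟩
def b112 : V := ⟨2778, 7339, 6031, 66142208, rfl⟩
def b113 : V := ⟨2805, 613, 2613, 24702976, rfl⟩
def b114 : V := ⟨2806, 1374, 1464, 23117824, rfl⟩
def b115 : V := ⟨2823, 410, 3207, 26378240, rfl⟩
def b116 : V := ⟨2851, 7390, 2198, 50950144, rfl⟩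
def b117 : V := ⟨2859, 576, 5539, 36757504, rfl⟩
def b118 : V := ⟨2883, 3189, 394, 26484736, rfl⟩
def b119 : V := ⟨2883, 5239, 460, 35151872, rfl⟩
def b120 : V := ⟨2928, 817, 2126, 24047616, rfl⟩
def b121 : V := ⟨2947, 1057, 6429, 42733568, rfl⟩
def b122 : V := ⟨2948, 2424, 648, 24657920, rfl⟩
def b123 : V := ⟨3013, 1916, 922, 23965696, rfl⟩
def b124 : V := ⟨3021, 3031, 7799, 56733696, rfl⟩
def b125 : V := ⟨3031, 7799, 3021, 56733696, rfl⟩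
def b126 : V := ⟨3054, 249, 3755, 28909568, rfl⟩
def b127 : V := ⟨3121, 6971, 6701, 68784128, rfl⟩
def b128 : V := ⟨3128, 2706, 473, 25833472, rfl⟩
def b129 : V := ⟨3189, 394, 2883, 26484736, rfl⟩
def b130 : V := ⟨3189, 687, 5981, 40374272, rfl⟩
def b131 : V := ⟨3195, 1040, 1677, 24215552, rfl⟩
def b132 : V := ⟨3195, 6976, 1470, 47681536, rfl⟩
def b133 : V := ⟨3207, 2823, 410, 26378240, rfl⟩
def b134 : V := ⟨3210, 2267, 651, 25100288, rfl⟩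
def b135 : V := ⟨3221, 345, 5174, 35799040, rfl⟩
def b136 : V := ⟨3238, 233, 3512, 28602368, rfl⟩
def b137 : V := ⟨3241, 3660, 213, 29138944, rfl⟩
def b138 : V := ⟨3246, 7265, 1808, 50458624, rfl⟩
def b139 : V := ⟨3256, 8000, 3857, 61902848, rfl⟩
def b140 : V := ⟨3289, 4476, 197, 32612352, rfl⟩
def b141 : V := ⟨3338, 7646, 5776, 68648960, rfl⟩
def b142 : V := ⟨3354, 4663, 7985, 65544192, rfl⟩
def b143 : V := ⟨3384, 2540, 481, 26234880, rfl⟩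
def b144 : V := ⟨3410, 1335, 6908, 47730688, rfl⟩
def b145 : V := ⟨3445, 149, 4075, 31412224, rfl⟩
def b146 : V := ⟨3461, 2653, 420, 26763264, rfl⟩
def b147 : V := ⟨3474, 256, 5028, 35872768, rfl⟩
def b148 : V := ⟨3506, 6476, 7256, 70606848, rfl⟩
def b149 : V := ⟨3512, 3238, 233, 28602368, rfl⟩
def b150 : V := ⟨3528, 439, 5614, 39243776, rfl⟩
def b151 : V := ⟨3561, 4059, 132, 31752192, rfl⟩
def b152 : V := ⟨3576, 8019, 4678, 66654208, rfl⟩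
def b153 : V := ⟨3595, 5561, 408, 39174144, rfl⟩
def b154 : V := ⟨3602, 765, 1937, 25821184, rfl⟩
def b155 : V := ⟨3620, 1302, 1274, 25378816, rfl⟩
def b156 : V := ⟨3642, 130, 3842, 31186944, rfl⟩
def b157 : V := ⟨3642, 929, 6497, 45334528, rfl⟩
def b158 : V := ⟨3659, 7077, 1465, 49975296, rfl⟩
def b159 : V := ⟨3660, 213, 3241, 29138944, rfl⟩
def b160 : V := ⟨3689, 385, 2660, 27582464, rfl⟩
def b161 : V := ⟨3705, 6671, 7132, 71712768, rfl⟩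
def b162 : V := ⟨3730, 4246, 116, 33144832, rfl⟩
def b163 : V := ⟨3755, 3054, 249, 28909568, rfl⟩
def b164 : V := ⟨3771, 348, 5454, 39211008, rfl⟩
def b165 : V := ⟨3805, 118, 4399, 34086912, rfl⟩
def b166 : V := ⟨3831, 6254, 7453, 71835648, rfl⟩
def b167 : V := ⟨3842, 3642, 130, 31186944, rfl⟩
def b168 : V := ⟨3854, 7063, 6768, 72437760, rfl⟩
def b169 : V := ⟨3857, 3256, 8000, 61902848, rfl⟩
def b170 : V := ⟨3885, 600, 6029, 43065344, rfl⟩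
def b171 : V := ⟨3920, 7848, 5471, 70610944, rfl⟩
def b172 : V := ⟨3992, 4770, 155, 36524032, rfl⟩
def b173 : V := ⟨4007, 7397, 6353, 72732672, rfl⟩
def b174 : V := ⟨4014, 98, 4177, 33951744, rfl⟩
def b175 : V := ⟨4029, 7744, 5736, 71716864, rfl⟩
def b176 : V := ⟨4033, 1171, 6824, 49266688, rfl⟩
def b177 : V := ⟨4041, 6442, 7336, 72986624, rfl⟩
def b178 : V := ⟨4059, 132, 3561, 31752192, rfl⟩
def b179 : V := ⟨4075, 3445, 149, 31412224, rfl⟩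
def b180 : V := ⟨4116, 504, 5855, 42905600, rfl⟩
def b181 : V := ⟨4125, 2448, 7741, 58630144, rfl⟩
def b182 : V := ⟨4127, 6450, 862, 46854144, rfl⟩
def b183 : V := ⟨4173, 5963, 7633, 72781824, rfl⟩
def b184 : V := ⟨4177, 4014, 98, 33951744, rfl⟩
def b185 : V := ⟨4182, 767, 6312, 46125056, rfl⟩
def b186 : V := ⟨4246, 116, 3730, 33144832, rfl⟩
def b187 : V := ⟨4270, 822, 6387, 47017984, rfl⟩
def b188 : V := ⟨4291, 817, 1814, 28352512, rfl⟩
def b189 : V := ⟨4328, 7900, 5312, 71843840, rfl⟩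
def b190 : V := ⟨4390, 432, 2519, 30068736, rfl⟩
def b191 : V := ⟨4395, 6141, 7521, 73961472, rfl⟩
def b192 : V := ⟨4399, 3805, 118, 34086912, rfl⟩
def b193 : V := ⟨4404, 665, 6129, 45867008, rfl⟩
def b194 : V := ⟨4406, 1686, 7273, 54743040, rfl⟩
def b195 : V := ⟨4450, 7797, 5572, 72986624, rfl⟩
def b196 : V := ⟨4454, 7639, 5917, 73768960, rfl⟩
def b197 : V := ⟨4476, 197, 3289, 32612352, rfl⟩
def b198 : V := ⟨4489, 718, 6201, 46727168, rfl⟩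
def b199 : V := ⟨4513, 5606, 7777, 73302016, rfl⟩
def b200 : V := ⟨4551, 5561, 7790, 73326592, rfl⟩
def b201 : V := ⟨4657, 1084, 6668, 50827264, rfl⟩
def b202 : V := ⟨4657, 7151, 1576, 54820864, rfl⟩
def b203 : V := ⟨4663, 7985, 3354, 65544192, rfl⟩
def b204 : V := ⟨4667, 6807, 6981, 75591680, rfl⟩
def b205 : V := ⟨4678, 3576, 8019, 66654208, rfl⟩
def b206 : V := ⟨4698, 5040, 256, 40935424, rfl⟩
def b207 : V := ⟨4708, 6200, 750, 47751168, rfl⟩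
def b208 : V := ⟨4746, 5771, 7670, 74493952, rfl⟩
def b209 : V := ⟨4756, 2205, 633, 31105024, rfl⟩
def b210 : V := ⟨4761, 7911, 5097, 72781824, rfl⟩
def b211 : V := ⟨4770, 155, 3992, 36524032, rfl⟩
def b212 : V := ⟨4777, 7178, 6553, 75808768, rfl⟩
def b213 : V := ⟨4785, 5725, 7684, 74522624, rfl⟩
def b214 : V := ⟨4827, 5197, 7871, 73297920, rfl⟩
def b215 : V := ⟨4848, 6655, 7077, 76103680, rfl⟩
def b216 : V := ⟨4862, 971, 6473, 50405376, rfl⟩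
def b217 : V := ⟨4873, 7485, 6073, 75493376, rfl⟩
def b218 : V := ⟨4898, 7809, 5350, 73961472, rfl⟩
def b219 : V := ⟨4914, 543, 2452, 32395264, rfl⟩
def b220 : V := ⟨5028, 3474, 256, 35872768, rfl⟩
def b221 : V := ⟨5040, 256, 4698, 40935424, rfl⟩
def b222 : V := ⟨5071, 5348, 7768, 74493952, rfl⟩
def b223 : V := ⟨5075, 6289, 7295, 76427264, rfl⟩
def b224 : V := ⟨5097, 4761, 7911, 72781824, rfl⟩
def b225 : V := ⟨5109, 2566, 7650, 62771200, rfl⟩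
def b226 : V := ⟨5174, 3221, 345, 35799040, rfl⟩
def b227 : V := ⟨5197, 7871, 4827, 73297920, rfl⟩
def b228 : V := ⟨5239, 460, 2883, 35151872, rfl⟩
def b229 : V := ⟨5261, 7592, 5652, 75796480, rfl⟩
def b230 : V := ⟨5268, 1379, 6788, 55029760, rfl⟩
def b231 : V := ⟨5270, 7062, 6510, 77176832, rfl⟩
def b232 : V := ⟨5288, 5891, 7466, 76369920, rfl⟩
def b233 : V := ⟨5312, 4328, 7900, 71843840, rfl⟩
def b234 : V := ⟨5348, 7768, 5071, 74493952, rfl⟩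
def b235 : V := ⟨5350, 4898, 7809, 73961472, rfl⟩
def b236 : V := ⟨5425, 6672, 1340, 55037952, rfl⟩
def b237 : V := ⟨5454, 3771, 348, 39211008, rfl⟩
def b238 : V := ⟨5471, 3920, 7848, 70610944, rfl⟩
def b239 : V := ⟨5539, 2859, 576, 36757504, rfl⟩
def b240 : V := ⟨5561, 408, 3595, 39174144, rfl⟩
def b241 : V := ⟨5561, 7790, 4551, 73326592, rfl⟩
def b242 : V := ⟨5564, 7044, 1827, 59125760, rfl⟩
def b243 : V := ⟨5572, 4450, 7797, 72986624, rfl⟩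
def b244 : V := ⟨5605, 7316, 5928, 77205504, rfl⟩
def b245 : V := ⟨5606, 7777, 4513, 73302016, rfl⟩
def b246 : V := ⟨5614, 3528, 439, 39243776, rfl⟩
def b247 : V := ⟨5652, 5261, 7592, 75796480, rfl⟩
def b248 : V := ⟨5725, 7684, 4785, 74522624, rfl⟩
def b249 : V := ⟨5736, 4029, 7744, 71716864, rfl⟩
def b250 : V := ⟨5771, 7670, 4746, 74493952, rfl⟩
def b251 : V := ⟨5776, 3338, 7646, 68648960, rfl⟩
def b252 : V := ⟨5855, 4116, 504, 42905600, rfl⟩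
def b253 : V := ⟨5875, 2521, 878, 37986304, rfl⟩
def b254 : V := ⟨5891, 7466, 5288, 76369920, rfl⟩
def b255 : V := ⟨5917, 4454, 7639, 73768960, rfl⟩
def b256 : V := ⟨5928, 5605, 7316, 77205504, rfl⟩
def b257 : V := ⟨5943, 908, 2539, 38461440, rfl⟩
def b258 : V := ⟨5963, 7633, 4173, 72781824, rfl⟩
def b259 : V := ⟨5981, 3189, 687, 40374272, rfl⟩
def b260 : V := ⟨6029, 3885, 600, 43065344, rfl⟩
def b261 : V := ⟨6031, 2778, 7339, 66142208, rfl⟩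
def b262 : V := ⟨6052, 1255, 6121, 55001088, rfl⟩
def b263 : V := ⟨6073, 4873, 7485, 75493376, rfl⟩
def b264 : V := ⟨6078, 7242, 2623, 65302528, rfl⟩
def b265 : V := ⟨6121, 6052, 1255, 55001088, rfl⟩
def b266 : V := ⟨6129, 4404, 665, 45867008, rfl⟩
def b267 : V := ⟨6141, 7521, 4395, 73961472, rfl⟩
def b268 : V := ⟨6200, 750, 4708, 47751168, rfl⟩
def b269 : V := ⟨6201, 4489, 718, 46727168, rfl⟩
def b270 : V := ⟨6243, 1363, 2115, 39817216, rfl⟩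
def b271 : V := ⟨6254, 7453, 3831, 71835648, rfl⟩
def b272 : V := ⟨6289, 7295, 5075, 76427264, rfl⟩
def b273 : V := ⟨6312, 4182, 767, 46125056, rfl⟩
def b274 : V := ⟨6353, 4007, 7397, 72732672, rfl⟩
def b275 : V := ⟨6387, 4270, 822, 47017984, rfl⟩
def b276 : V := ⟨6405, 6405, 6405, 78704640, rfl⟩
def b277 : V := ⟨6410, 1183, 2628, 41865216, rfl⟩
def b278 : V := ⟨6429, 2947, 1057, 42733568, rfl⟩
def b279 : V := ⟨6442, 7336, 4041, 72986624, rfl⟩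
def b280 : V := ⟨6450, 862, 4127, 46854144, rfl⟩
def b281 : V := ⟨6473, 4862, 971, 50405376, rfl⟩
def b282 : V := ⟨6476, 7256, 3506, 70606848, rfl⟩
def b283 : V := ⟨6478, 1900, 1750, 41484288, rfl⟩
def b284 : V := ⟨6497, 3642, 929, 45334528, rfl⟩
def b285 : V := ⟨6510, 5270, 7062, 77176832, rfl⟩
def b286 : V := ⟨6553, 4777, 7178, 75808768, rfl⟩
def b287 : V := ⟨6632, 1670, 2178, 42926080, rfl⟩
def b288 : V := ⟨6655, 7077, 4848, 76103680, rfl⟩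
def b289 : V := ⟨6668, 4657, 1084, 50827264, rfl⟩
def b290 : V := ⟨6671, 7132, 3705, 71712768, rfl⟩
def b291 : V := ⟨6672, 1340, 5425, 55037952, rfl⟩
def b292 : V := ⟨6701, 3121, 6971, 68784128, rfl⟩
def b293 : V := ⟨6768, 3854, 7063, 72437760, rfl⟩
def b294 : V := ⟨6788, 5268, 1379, 55029760, rfl⟩
def b295 : V := ⟨6807, 6981, 4667, 75591680, rfl⟩
def b296 : V := ⟨6824, 4033, 1171, 49266688, rfl⟩
def b297 : V := ⟨6834, 1512, 2744, 45424640, rfl⟩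
def b298 : V := ⟨6908, 3410, 1335, 47730688, rfl⟩
def b299 : V := ⟨6971, 6701, 3121, 68784128, rfl⟩
def b300 : V := ⟨6976, 1470, 3195, 47681536, rfl⟩
def b301 : V := ⟨6981, 4667, 6807, 75591680, rfl⟩
def b302 : V := ⟨6982, 2014, 2270, 46145536, rfl⟩
def b303 : V := ⟨7044, 1827, 5564, 59125760, rfl⟩
def b304 : V := ⟨7062, 6510, 5270, 77176832, rfl⟩
def b305 : V := ⟨7063, 6768, 3854, 72437760, rfl⟩
def b306 : V := ⟨7077, 1465, 3659, 49975296, rfl⟩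
def b307 : V := ⟨7077, 4848, 6655, 76103680, rfl⟩
def b308 : V := ⟨7132, 3705, 6671, 71712768, rfl⟩
def b309 : V := ⟨7151, 1576, 4657, 54820864, rfl⟩
def b310 : V := ⟨7178, 6553, 4777, 75808768, rfl⟩
def b311 : V := ⟨7242, 2623, 6078, 65302528, rfl⟩
def b312 : V := ⟨7256, 3506, 6476, 70606848, rfl⟩
def b313 : V := ⟨7265, 1808, 3246, 50458624, rfl⟩
def b314 : V := ⟨7273, 4406, 1686, 54743040, rfl⟩
def b315 : V := ⟨7295, 5075, 6289, 76427264, rfl⟩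
def b316 : V := ⟨7316, 5928, 5605, 77205504, rfl⟩
def b317 : V := ⟨7336, 4041, 6442, 72986624, rfl⟩
def b318 : V := ⟨7339, 6031, 2778, 66142208, rfl⟩
def b319 : V := ⟨7390, 2198, 2851, 50950144, rfl⟩
def b320 : V := ⟨7397, 6353, 4007, 72732672, rfl⟩
def b321 : V := ⟨7453, 3831, 6254, 71835648, rfl⟩
def b322 : V := ⟨7466, 5288, 5891, 76369920, rfl⟩
def b323 : V := ⟨7485, 6073, 4873, 75493376, rfl⟩
def b324 : V := ⟨7521, 4395, 6141, 73961472, rfl⟩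
def b325 : V := ⟨7592, 5652, 5261, 75796480, rfl⟩
def b326 : V := ⟨7633, 4173, 5963, 72781824, rfl⟩
def b327 : V := ⟨7639, 5917, 4454, 73768960, rfl⟩
def b328 : V := ⟨7646, 5776, 3338, 68648960, rfl⟩
def b329 : V := ⟨7650, 5109, 2566, 62771200, rfl⟩
def b330 : V := ⟨7670, 4746, 5771, 74493952, rfl⟩
def b331 : V := ⟨7684, 4785, 5725, 74522624, rfl⟩
def b332 : V := ⟨7741, 4125, 2448, 58630144, rfl⟩
def b333 : V := ⟨7744, 5736, 4029, 71716864, rfl⟩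
def b334 : V := ⟨7768, 5071, 5348, 74493952, rfl⟩
def b335 : V := ⟨7777, 4513, 5606, 73302016, rfl⟩
def b336 : V := ⟨7790, 4551, 5561, 73326592, rfl⟩
def b337 : V := ⟨7797, 5572, 4450, 72986624, rfl⟩
def b338 : V := ⟨7799, 3021, 3031, 56733696, rfl⟩
def b339 : V := ⟨7809, 5350, 4898, 73961472, rfl⟩
def b340 : V := ⟨7848, 5471, 3920, 70610944, rfl⟩
def b341 : V := ⟨7871, 4827, 5197, 73297920, rfl⟩
def b342 : V := ⟨7900, 5312, 4328, 71843840, rfl⟩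
def b343 : V := ⟨7911, 5097, 4761, 72781824, rfl⟩
def b344 : V := ⟨7985, 3354, 4663, 65544192, rfl⟩
def b345 : V := ⟨8000, 3857, 3256, 61902848, rfl⟩
def b346 : V := ⟨8019, 4678, 3576, 66654208, rfl⟩

def bL0 : List Facet := [
  ⟨b0, b2, b3, 3978, 3, 1, 13, .arc b110 2 5⟩,
  ⟨b0, b3, b4, 3975, 7, 2, 0, .plain 5⟩,
  ⟨b1, b0, b4, 3975, 1, 5, 4, .plain 5⟩,
  ⟨b3, b2, b5, 3978, 14, 9, 0, .arc b110 2 5⟩,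
  ⟨b0, b1, b6, 3961, 6, 12, 2, .plain 1⟩,
  ⟨b1, b4, b7, 3983, 8, 6, 2, .plain 5⟩,
  ⟨b6, b1, b7, 3963, 5, 21, 4, .plain 1⟩,
  ⟨b4, b3, b8, 3976, 10, 8, 1, .plain 5⟩,
  ⟨b7, b4, b8, 3957, 7, 18, 5, .plain 5⟩,
  ⟨b3, b5, b9, 3977, 11, 10, 3, .arc b110 2 5⟩,
  ⟨b8, b3, b9, 3976, 9, 19, 7, .plain 5⟩,
  ⟨b9, b5, b10, 3977, 41, 23, 9, .arc b110 2 5⟩,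
  ⟨b0, b6, b11, 3914, 22, 13, 4, .plain 1⟩,
  ⟨b2, b0, b11, 3896, 12, 16, 0, .plain 1⟩,
  ⟨b5, b2, b12, 3942, 17, 15, 3, .plain 2⟩,
  ⟨b5, b12, b13, 3918, 28, 40, 14, .plain 2⟩,
  ⟨b2, b11, b14, 3860, 33, 17, 13, .plain 1⟩,
  ⟨b12, b2, b14, 3926, 16, 27, 14, .plain 1⟩,
  ⟨b7, b8, b15, 3933, 20, 26, 8, .plain 5⟩,
  ⟨b8, b9, b16, 3973, 24, 20, 10, .plain 5⟩,
  ⟨b15, b8, b16, 3975, 19, 59, 18, .plain 5⟩,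
  ⟨b6, b7, b17, 3916, 29, 22, 6, .plain 1⟩,
  ⟨b11, b6, b17, 3904, 21, 54, 12, .plain 1⟩,
  ⟨b9, b10, b18, 3976, 25, 24, 11, .arc b110 2 5⟩,
  ⟨b16, b9, b18, 3973, 23, 30, 19, .plain 5⟩,
  ⟨b18, b10, b19, 3976, 43, 31, 23, .arc b110 2 5⟩,
  ⟨b7, b15, b20, 3933, 55, 34, 18, .plain 5⟩,
  ⟨b12, b14, b21, 3976, 38, 28, 17, .arc b68 1 0⟩,
  ⟨b13, b12, b21, 3976, 27, 36, 15, .arc b68 1 0⟩,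
  ⟨b17, b7, b22, 3916, 35, 69, 21, .plain 1⟩,
  ⟨b16, b18, b23, 3980, 32, 39, 24, .plain 5⟩,
  ⟨b18, b19, b24, 3992, 44, 32, 25, .arc b110 2 5⟩,
  ⟨b23, b18, b24, 3992, 31, 45, 30, .arc b110 2 5⟩,
  ⟨b14, b11, b25, 3856, 49, 37, 16, .plain 1⟩,
  ⟨b7, b20, b26, 3935, 58, 35, 26, .plain 5⟩,
  ⟨b22, b7, b26, 3935, 34, 70, 29, .plain 1⟩,
  ⟨b13, b21, b27, 3970, 52, 42, 28, .plain 0⟩,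
  ⟨b14, b25, b28, 3974, 50, 38, 33, .arc b68 1 0⟩,
  ⟨b21, b14, b28, 3974, 37, 51, 27, .arc b68 1 0⟩,
  ⟨b16, b23, b29, 3980, 46, 60, 30, .plain 5⟩,
  ⟨b5, b13, b30, 3858, 42, 41, 15, .plain 2⟩,
  ⟨b10, b5, b30, 3858, 40, 43, 11, .plain 2⟩,
  ⟨b13, b27, b30, 3918, 68, 40, 36, .plain 2⟩,
  ⟨b19, b10, b30, 3878, 41, 44, 25, .plain 2⟩,
  ⟨b24, b19, b30, 3871, 43, 47, 31, .plain 2⟩,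
  ⟨b23, b24, b31, 3985, 48, 46, 32, .arc b110 2 5⟩,
  ⟨b29, b23, b31, 3981, 45, 64, 39, .plain 5⟩,
  ⟨b24, b30, b32, 3847, 90, 48, 44, .plain 2⟩,
  ⟨b31, b24, b32, 3985, 47, 71, 45, .arc b110 2 5⟩,
  ⟨b25, b11, b33, 3832, 53, 50, 33, .plain 1⟩,
  ⟨b28, b25, b33, 3982, 49, 56, 37, .arc b68 1 0⟩,
  ⟨b21, b28, b34, 3968, 75, 52, 38, .plain 0⟩,
  ⟨b27, b21, b34, 3970, 51, 67, 36, .plain 0⟩,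
  ⟨b33, b11, b35, 3822, 77, 62, 49, .plain 1⟩,
  ⟨b11, b17, b36, 3887, 66, 88, 22, .plain 1⟩,
  ⟨b20, b15, b37, 3932, 61, 57, 26, .plain 5⟩,
  ⟨b28, b33, b38, 3982, 63, 74, 50, .arc b68 1 0⟩,
  ⟨b20, b37, b39, 3932, 93, 58, 55, .plain 5⟩,
  ⟨b26, b20, b39, 3944, 57, 100, 34, .plain 5⟩,
  ⟨b15, b16, b40, 3933, 60, 61, 20, .plain 5⟩,
  ⟨b16, b29, b40, 3948, 65, 59, 39, .plain 5⟩,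
  ⟨b37, b15, b40, 3933, 59, 79, 55, .plain 5⟩,
  ⟨b33, b35, b41, 3993, 78, 63, 53, .arc b68 1 0⟩,
  ⟨b38, b33, b41, 3993, 62, 76, 56, .arc b68 1 0⟩,
  ⟨b29, b31, b42, 3980, 73, 65, 46, .plain 5⟩,
  ⟨b40, b29, b42, 3981, 64, 87, 60, .plain 5⟩,
  ⟨b36, b17, b43, 3887, 86, 113, 54, .plain 1⟩,
  ⟨b27, b34, b44, 3968, 81, 68, 52, .plain 0⟩,
  ⟨b30, b27, b44, 3911, 67, 143, 42, .plain 2⟩,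
  ⟨b17, b22, b45, 3904, 70, 85, 29, .plain 1⟩,
  ⟨b22, b26, b45, 3923, 101, 69, 35, .plain 1⟩,
  ⟨b31, b32, b47, 3979, 72, 73, 48, .arc b110 2 5⟩,
  ⟨b32, b46, b47, 3979, 95, 71, 91, .arc b110 2 5⟩,
  ⟨b42, b31, b47, 3980, 71, 94, 64, .plain 5⟩,
  ⟨b28, b38, b48, 3976, 76, 75, 56, .plain 0⟩,
  ⟨b34, b28, b48, 3966, 74, 80, 51, .plain 0⟩,
  ⟨b38, b41, b48, 3973, 84, 74, 63, .plain 0⟩,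
  ⟨b35, b11, b49, 3762, 89, 78, 53, .plain 1⟩,
  ⟨b41, b35, b49, 3976, 77, 82, 62, .arc b68 1 0⟩,
  ⟨b37, b40, b50, 3968, 104, 92, 61, .plain 5⟩,
  ⟨b34, b48, b51, 3966, 98, 81, 75, .plain 0⟩,
  ⟨b44, b34, b51, 3967, 80, 122, 67, .plain 0⟩,
  ⟨b41, b49, b52, 3976, 107, 83, 78, .arc b68 1 0⟩,
  ⟨b41, b52, b53, 3973, 120, 84, 82, .plain 0⟩,
  ⟨b48, b41, b53, 3973, 83, 97, 76, .plain 0⟩,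
  ⟨b17, b45, b54, 3855, 102, 86, 69, .plain 1⟩,
  ⟨b43, b17, b54, 3849, 85, 110, 66, .plain 1⟩,
  ⟨b40, b42, b55, 3962, 96, 103, 65, .plain 5⟩,
  ⟨b11, b36, b56, 3738, 99, 89, 54, .plain 1⟩,
  ⟨b49, b11, b56, 3738, 88, 106, 77, .plain 1⟩,
  ⟨b32, b30, b57, 3839, 128, 91, 47, .plain 2⟩,
  ⟨b46, b32, b57, 3905, 90, 108, 72, .plain 2⟩,
  ⟨b37, b50, b58, 3954, 105, 93, 79, .plain 5⟩,
  ⟨b39, b37, b58, 3938, 92, 152, 57, .plain 5⟩,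
  ⟨b42, b47, b59, 3958, 95, 96, 73, .plain 5⟩,
  ⟨b47, b46, b59, 3960, 109, 94, 72, .plain 4⟩,
  ⟨b55, b42, b59, 3958, 94, 124, 87, .plain 5⟩,
  ⟨b48, b53, b60, 3973, 121, 98, 84, .plain 0⟩,
  ⟨b51, b48, b60, 3967, 97, 123, 80, .plain 0⟩,
  ⟨b56, b36, b61, 3854, 115, 131, 88, .plain 1⟩,
  ⟨b26, b39, b62, 3728, 153, 101, 58, .plain 3⟩,
  ⟨b45, b26, b62, 3837, 100, 102, 70, .plain 3⟩,
  ⟨b54, b45, b62, 3970, 101, 116, 85, .plain 3⟩,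
  ⟨b40, b55, b63, 3951, 130, 104, 87, .plain 5⟩,
  ⟨b50, b40, b63, 3951, 103, 105, 79, .plain 5⟩,
  ⟨b58, b50, b63, 3955, 104, 134, 92, .plain 5⟩,
  ⟨b49, b56, b64, 3897, 191, 107, 89, .plain 4⟩,
  ⟨b52, b49, b64, 3970, 106, 119, 82, .plain 4⟩,
  ⟨b46, b57, b65, 3945, 118, 109, 91, .plain 4⟩,
  ⟨b59, b46, b65, 3960, 108, 136, 95, .plain 4⟩,
  ⟨b43, b54, b67, 3849, 112, 111, 86, .plain 1⟩,
  ⟨b66, b43, b67, 3904, 110, 125, 114, .plain 1⟩,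
  ⟨b67, b54, b68, 3954, 117, 126, 110, .plain 1⟩,
  ⟨b36, b43, b69, 3899, 114, 115, 66, .plain 1⟩,
  ⟨b43, b66, b69, 3918, 127, 113, 111, .plain 1⟩,
  ⟨b61, b36, b69, 3899, 113, 132, 99, .plain 1⟩,
  ⟨b54, b62, b70, 3968, 133, 117, 102, .plain 3⟩,
  ⟨b68, b54, b70, 3968, 116, 140, 112, .plain 3⟩,
  ⟨b65, b57, b71, 3955, 139, 146, 108, .plain 4⟩,
  ⟨b52, b64, b72, 3932, 177, 120, 107, .plain 4⟩,
  ⟨b53, b52, b72, 3950, 119, 121, 83, .plain 0⟩,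
  ⟨b60, b53, b72, 3921, 120, 165, 97, .plain 0⟩,
  ⟨b44, b51, b73, 3899, 123, 144, 81, .plain 0⟩,
  ⟨b51, b60, b73, 3831, 157, 122, 98, .plain 0⟩,
  ⟨b55, b59, b74, 3962, 137, 129, 96, .plain 5⟩,
  ⟨b66, b67, b75, 3979, 126, 127, 111, .plain 6⟩,
  ⟨b67, b68, b75, 3967, 151, 125, 112, .plain 6⟩,
  ⟨b69, b66, b75, 3869, 125, 245, 114, .plain 6⟩,
  ⟨b57, b30, b76, 3772, 145, 138, 90, .plain 2⟩,
  ⟨b55, b74, b77, 3957, 159, 130, 124, .plain 5⟩,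
  ⟨b63, b55, b77, 3957, 129, 135, 103, .plain 5⟩,
  ⟨b56, b61, b78, 3896, 132, 180, 99, .plain 1⟩,
  ⟨b61, b69, b78, 3943, 247, 131, 115, .plain 1⟩,
  ⟨b70, b62, b79, 3970, 173, 141, 116, .plain 3⟩,
  ⟨b58, b63, b80, 3945, 135, 154, 105, .plain 5⟩,
  ⟨b63, b77, b80, 3960, 142, 134, 130, .plain 5⟩,
  ⟨b59, b65, b81, 3957, 148, 137, 109, .plain 4⟩,
  ⟨b74, b59, b81, 3957, 136, 160, 124, .plain 4⟩,
  ⟨b57, b76, b82, 3938, 171, 139, 128, .plain 4⟩,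
  ⟨b71, b57, b82, 3954, 138, 147, 118, .plain 4⟩,
  ⟨b68, b70, b83, 3968, 141, 150, 117, .plain 0⟩,
  ⟨b70, b79, b83, 3966, 253, 140, 133, .plain 0⟩,
  ⟨b80, b77, b84, 3960, 168, 155, 135, .plain 5⟩,
  ⟨b30, b44, b85, 3666, 144, 145, 68, .plain 2⟩,
  ⟨b44, b73, b85, 3807, 149, 143, 122, .plain 2⟩,
  ⟨b76, b30, b85, 3666, 143, 166, 128, .plain 2⟩,
  ⟨b65, b71, b86, 3951, 147, 148, 118, .plain 4⟩,
  ⟨b71, b82, b86, 3968, 185, 146, 139, .plain 4⟩,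
  ⟨b81, b65, b86, 3951, 146, 162, 136, .plain 4⟩,
  ⟨b85, b73, b87, 3970, 158, 181, 144, .plain 2⟩,
  ⟨b68, b83, b88, 3950, 212, 151, 140, .plain 0⟩,
  ⟨b75, b68, b88, 3950, 150, 211, 126, .plain 6⟩,
  ⟨b39, b58, b89, 3772, 156, 153, 93, .plain 3⟩,
  ⟨b62, b39, b89, 3666, 152, 172, 100, .plain 3⟩,
  ⟨b58, b80, b90, 3905, 155, 156, 134, .plain 3⟩,
  ⟨b80, b84, b90, 3979, 164, 154, 142, .arc b68 3 6⟩,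
  ⟨b89, b58, b90, 3839, 154, 175, 152, .plain 3⟩,
  ⟨b73, b60, b91, 3819, 214, 158, 123, .plain 0⟩,
  ⟨b87, b73, b91, 3966, 157, 187, 149, .plain 0⟩,
  ⟨b77, b74, b92, 3962, 161, 167, 129, .plain 6⟩,
  ⟨b74, b81, b93, 3962, 163, 161, 137, .plain 4⟩,
  ⟨b92, b74, b93, 3957, 160, 195, 159, .plain 6⟩,
  ⟨b81, b86, b94, 3962, 179, 163, 148, .plain 4⟩,
  ⟨b93, b81, b94, 3958, 162, 189, 160, .plain 4⟩,
  ⟨b90, b84, b95, 3979, 169, 176, 155, .arc b68 3 6⟩,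
  ⟨b60, b72, b96, 3844, 178, 213, 121, .plain 0⟩,
  ⟨b76, b85, b97, 3728, 174, 170, 145, .plain 2⟩,
  ⟨b77, b92, b98, 3958, 204, 168, 159, .plain 6⟩,
  ⟨b84, b77, b98, 3958, 167, 169, 142, .plain 6⟩,
  ⟨b95, b84, b98, 3980, 168, 193, 164, .plain 6⟩,
  ⟨b76, b97, b99, 3944, 240, 171, 166, .plain 4⟩,
  ⟨b82, b76, b99, 3932, 170, 184, 138, .plain 4⟩,
  ⟨b62, b89, b100, 3666, 199, 173, 153, .plain 3⟩,
  ⟨b79, b62, b100, 3807, 172, 206, 133, .plain 3⟩,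
  ⟨b97, b85, b101, 3837, 182, 202, 166, .plain 2⟩,
  ⟨b89, b90, b102, 3847, 176, 183, 156, .plain 3⟩,
  ⟨b90, b95, b102, 3985, 186, 175, 164, .arc b68 3 6⟩,
  ⟨b72, b64, b103, 3861, 192, 178, 119, .plain 4⟩,
  ⟨b96, b72, b103, 3910, 177, 267, 165, .plain 4⟩,
  ⟨b94, b86, b104, 3981, 201, 207, 162, .plain 4⟩,
  ⟨b56, b78, b105, 3788, 248, 190, 131, .plain 4⟩,
  ⟨b85, b87, b106, 3968, 188, 182, 149, .plain 2⟩,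
  ⟨b101, b85, b106, 3970, 181, 270, 174, .plain 2⟩,
  ⟨b89, b102, b107, 3871, 197, 216, 175, .plain 3⟩,
  ⟨b82, b99, b108, 3932, 241, 185, 171, .plain 4⟩,
  ⟨b86, b82, b108, 3933, 184, 200, 147, .plain 4⟩,
  ⟨b102, b95, b109, 3985, 194, 196, 176, .arc b68 3 6⟩,
  ⟨b87, b91, b110, 3968, 198, 188, 158, .plain 0⟩,
  ⟨b106, b87, b110, 3968, 187, 227, 181, .plain 2⟩,
  ⟨b93, b94, b111, 3958, 208, 209, 163, .plain 4⟩,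
  ⟨b56, b105, b112, 3754, 218, 191, 180, .plain 4⟩,
  ⟨b64, b56, b112, 3754, 190, 192, 106, .plain 4⟩,
  ⟨b103, b64, b112, 3818, 191, 243, 177, .plain 4⟩,
  ⟨b95, b98, b113, 3980, 205, 194, 169, .plain 6⟩,
  ⟨b109, b95, b113, 3981, 193, 221, 186, .plain 6⟩,
  ⟨b92, b93, b114, 3957, 210, 203, 161, .plain 6⟩,
  ⟨b102, b109, b115, 3992, 223, 197, 186, .arc b68 3 6⟩,
  ⟨b107, b102, b115, 3992, 196, 217, 183, .arc b68 3 6⟩,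
  ⟨b110, b91, b116, 3950, 215, 235, 187, .plain 0⟩,
  ⟨b100, b89, b117, 3911, 231, 224, 172, .plain 3⟩,
  ⟨b86, b108, b118, 3933, 234, 201, 185, .plain 4⟩,
  ⟨b104, b86, b118, 3948, 200, 219, 179, .plain 4⟩,
  ⟨b97, b101, b119, 3923, 271, 239, 174, .plain 3⟩,
  ⟨b92, b114, b120, 3951, 226, 204, 195, .plain 6⟩,
  ⟨b98, b92, b120, 3962, 203, 205, 167, .plain 6⟩,
  ⟨b113, b98, b120, 3981, 204, 222, 193, .plain 6⟩,
  ⟨b79, b100, b121, 3899, 225, 252, 173, .plain 0⟩,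
  ⟨b94, b104, b122, 3980, 220, 208, 179, .plain 4⟩,
  ⟨b111, b94, b122, 3980, 207, 229, 189, .plain 4⟩,
  ⟨b93, b111, b123, 3960, 230, 210, 189, .plain 6⟩,
  ⟨b114, b93, b123, 3960, 209, 274, 195, .plain 6⟩,
  ⟨b75, b88, b124, 3885, 212, 246, 151, .plain 6⟩,
  ⟨b88, b83, b124, 3856, 254, 211, 150, .plain 0⟩,
  ⟨b60, b96, b125, 3753, 238, 214, 165, .plain 0⟩,
  ⟨b91, b60, b125, 3753, 213, 215, 157, .plain 0⟩,
  ⟨b116, b91, b125, 3856, 214, 236, 198, .plain 0⟩,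
  ⟨b89, b107, b126, 3878, 217, 255, 183, .plain 3⟩,
  ⟨b107, b115, b126, 3976, 233, 216, 197, .arc b68 3 6⟩,
  ⟨b112, b105, b127, 3802, 260, 244, 190, .plain 4⟩,
  ⟨b104, b118, b128, 3980, 228, 220, 201, .plain 4⟩,
  ⟨b122, b104, b128, 3981, 219, 249, 207, .plain 4⟩,
  ⟨b109, b113, b129, 3980, 222, 223, 194, .plain 6⟩,
  ⟨b113, b120, b129, 3948, 285, 221, 205, .plain 6⟩,
  ⟨b115, b109, b129, 3980, 221, 232, 196, .plain 6⟩,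
  ⟨b100, b117, b130, 3968, 264, 225, 199, .plain 0⟩,
  ⟨b121, b100, b130, 3967, 224, 279, 206, .plain 0⟩,
  ⟨b120, b114, b131, 3951, 276, 273, 203, .plain 6⟩,
  ⟨b106, b110, b132, 3954, 237, 323, 188, .plain 3⟩,
  ⟨b128, b118, b133, 3980, 262, 250, 219, .plain 4⟩,
  ⟨b111, b122, b134, 3979, 251, 230, 208, .arc b297 1 4⟩,
  ⟨b123, b111, b134, 3979, 229, 275, 209, .arc b297 1 4⟩,
  ⟨b117, b89, b135, 3918, 257, 263, 199, .plain 3⟩,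
  ⟨b115, b129, b136, 3973, 282, 233, 223, .plain 6⟩,
  ⟨b126, b115, b136, 3976, 232, 256, 217, .arc b68 3 6⟩,
  ⟨b118, b108, b137, 3975, 242, 261, 200, .plain 4⟩,
  ⟨b110, b116, b138, 3950, 236, 237, 198, .plain 5⟩,
  ⟨b116, b125, b138, 3885, 364, 235, 215, .plain 5⟩,
  ⟨b132, b110, b138, 3967, 235, 281, 227, .plain 5⟩,
  ⟨b125, b96, b139, 3901, 269, 363, 213, .plain 0⟩,
  ⟨b97, b119, b140, 3935, 272, 240, 202, .plain 3⟩,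
  ⟨b99, b97, b140, 3935, 239, 241, 170, .plain 4⟩,
  ⟨b108, b99, b140, 3933, 240, 242, 184, .plain 4⟩,
  ⟨b137, b108, b140, 3933, 241, 266, 234, .plain 4⟩,
  ⟨b103, b112, b141, 3934, 244, 268, 192, .plain 4⟩,
  ⟨b112, b127, b141, 3914, 308, 243, 218, .plain 4⟩,
  ⟨b69, b75, b142, 3679, 246, 247, 127, .plain 6⟩,
  ⟨b75, b124, b142, 3679, 300, 245, 211, .plain 6⟩,
  ⟨b78, b69, b142, 3739, 245, 248, 132, .plain 6⟩,
  ⟨b105, b78, b142, 3739, 247, 295, 180, .plain 6⟩,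
  ⟨b122, b128, b143, 3985, 250, 251, 220, .arc b297 1 4⟩,
  ⟨b128, b133, b143, 3992, 258, 249, 228, .arc b297 1 4⟩,
  ⟨b134, b122, b143, 3985, 249, 377, 229, .arc b297 1 4⟩,
  ⟨b79, b121, b144, 3831, 280, 253, 206, .plain 0⟩,
  ⟨b83, b79, b144, 3819, 252, 254, 141, .plain 0⟩,
  ⟨b124, b83, b144, 3753, 253, 321, 212, .plain 0⟩,
  ⟨b89, b126, b145, 3858, 256, 257, 216, .plain 3⟩,
  ⟨b126, b136, b145, 3977, 278, 255, 233, .arc b68 3 6⟩,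
  ⟨b135, b89, b145, 3858, 255, 259, 231, .plain 3⟩,
  ⟨b143, b133, b146, 3992, 290, 378, 250, .arc b297 1 4⟩,
  ⟨b135, b145, b147, 3918, 293, 265, 257, .plain 3⟩,
  ⟨b127, b105, b148, 3915, 296, 287, 218, .plain 4⟩,
  ⟨b118, b137, b149, 3973, 298, 262, 234, .plain 4⟩,
  ⟨b133, b118, b149, 3973, 261, 289, 228, .plain 4⟩,
  ⟨b117, b135, b150, 3970, 265, 264, 231, .plain 0⟩,
  ⟨b130, b117, b150, 3970, 263, 301, 224, .plain 0⟩,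
  ⟨b135, b147, b150, 3976, 291, 263, 259, .arc b297 2 0⟩,
  ⟨b137, b140, b151, 3957, 288, 297, 242, .plain 4⟩,
  ⟨b96, b103, b152, 3895, 268, 269, 178, .plain 4⟩,
  ⟨b103, b141, b152, 3911, 304, 267, 243, .plain 4⟩,
  ⟨b139, b96, b152, 3895, 267, 365, 238, .plain 4⟩,
  ⟨b101, b106, b153, 3855, 325, 271, 182, .plain 3⟩,
  ⟨b119, b101, b153, 3904, 270, 272, 202, .plain 3⟩,
  ⟨b140, b119, b153, 3916, 271, 305, 239, .plain 3⟩,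
  ⟨b120, b131, b154, 3968, 277, 284, 226, .plain 6⟩,
  ⟨b114, b123, b155, 3945, 275, 276, 210, .plain 6⟩,
  ⟨b123, b134, b155, 3905, 380, 274, 230, .plain 1⟩,
  ⟨b131, b114, b155, 3955, 274, 277, 226, .plain 6⟩,
  ⟨b154, b131, b155, 3954, 276, 335, 273, .plain 6⟩,
  ⟨b145, b136, b156, 3977, 283, 292, 256, .arc b68 3 6⟩,
  ⟨b121, b130, b157, 3966, 303, 280, 225, .plain 0⟩,
  ⟨b144, b121, b157, 3967, 279, 312, 252, .plain 0⟩,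
  ⟨b132, b138, b158, 3979, 361, 324, 237, .plain 5⟩,
  ⟨b136, b129, b159, 3973, 286, 283, 232, .plain 6⟩,
  ⟨b156, b136, b159, 3976, 282, 316, 278, .plain 6⟩,
  ⟨b120, b154, b160, 3933, 339, 285, 273, .plain 6⟩,
  ⟨b129, b120, b160, 3933, 284, 286, 222, .plain 6⟩,
  ⟨b159, b129, b160, 3975, 285, 351, 282, .plain 6⟩,
  ⟨b127, b148, b161, 3955, 314, 299, 260, .plain 4⟩,
  ⟨b151, b140, b162, 3983, 306, 328, 266, .plain 4⟩,
  ⟨b133, b149, b163, 3976, 319, 290, 262, .arc b297 1 4⟩,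
  ⟨b146, b133, b163, 3976, 289, 379, 258, .arc b297 1 4⟩,
  ⟨b150, b147, b164, 3976, 294, 302, 265, .arc b297 2 0⟩,
  ⟨b145, b156, b165, 3978, 309, 293, 278, .arc b68 3 6⟩,
  ⟨b147, b145, b165, 3942, 292, 294, 259, .plain 3⟩,
  ⟨b164, b147, b165, 3926, 293, 405, 291, .plain 2⟩,
  ⟨b105, b142, b166, 3801, 326, 296, 248, .plain 6⟩,
  ⟨b148, b105, b166, 3902, 295, 313, 260, .plain 6⟩,
  ⟨b137, b151, b167, 3976, 330, 298, 266, .plain 4⟩,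
  ⟨b149, b137, b167, 3976, 297, 318, 261, .plain 4⟩,
  ⟨b127, b161, b168, 3961, 315, 307, 287, .plain 4⟩,
  ⟨b142, b124, b169, 3820, 322, 368, 246, .plain 6⟩,
  ⟨b130, b150, b170, 3968, 302, 303, 264, .plain 0⟩,
  ⟨b150, b164, b170, 3974, 320, 301, 291, .arc b297 2 0⟩,
  ⟨b157, b130, b170, 3966, 301, 331, 279, .plain 0⟩,
  ⟨b152, b141, b171, 3911, 311, 336, 268, .plain 4⟩,
  ⟨b140, b153, b172, 3916, 370, 306, 272, .plain 3⟩,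
  ⟨b162, b140, b172, 3963, 305, 329, 288, .plain 3⟩,
  ⟨b127, b168, b173, 3931, 388, 308, 299, .plain 4⟩,
  ⟨b141, b127, b173, 3914, 307, 310, 244, .plain 4⟩,
  ⟨b165, b156, b174, 3978, 317, 406, 292, .arc b68 3 6⟩,
  ⟨b141, b173, b175, 3946, 349, 311, 308, .plain 4⟩,
  ⟨b171, b141, b175, 3969, 310, 337, 304, .plain 4⟩,
  ⟨b144, b157, b176, 3973, 334, 346, 280, .plain 0⟩,
  ⟨b148, b166, b177, 3981, 327, 314, 296, .arc b68 6 3⟩,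
  ⟨b161, b148, b177, 3981, 313, 315, 287, .arc b68 6 3⟩,
  ⟨b168, b161, b177, 3953, 314, 367, 299, .plain 3⟩,
  ⟨b156, b159, b178, 3976, 353, 317, 283, .plain 6⟩,
  ⟨b174, b156, b178, 3975, 316, 332, 309, .plain 6⟩,
  ⟨b149, b167, b179, 3977, 342, 319, 298, .arc b297 1 4⟩,
  ⟨b163, b149, b179, 3977, 318, 381, 289, .arc b297 1 4⟩,
  ⟨b170, b164, b180, 3974, 408, 343, 302, .arc b297 2 0⟩,
  ⟨b124, b144, b181, 3753, 347, 322, 254, .plain 0⟩,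
  ⟨b169, b124, b181, 3901, 321, 369, 300, .plain 0⟩,
  ⟨b106, b132, b182, 3849, 324, 325, 227, .plain 3⟩,
  ⟨b132, b158, b182, 3904, 362, 323, 281, .plain 3⟩,
  ⟨b153, b106, b182, 3849, 323, 373, 270, .plain 3⟩,
  ⟨b166, b142, b183, 3804, 356, 327, 295, .plain 6⟩,
  ⟨b177, b166, b183, 3979, 326, 340, 313, .arc b68 6 3⟩,
  ⟨b151, b162, b184, 3975, 329, 330, 288, .plain 4⟩,
  ⟨b162, b172, b184, 3961, 371, 328, 306, .plain 3⟩,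
  ⟨b167, b151, b184, 3975, 328, 341, 297, .plain 4⟩,
  ⟨b157, b170, b185, 3976, 344, 333, 303, .plain 0⟩,
  ⟨b174, b178, b186, 3975, 354, 385, 317, .plain 6⟩,
  ⟨b157, b185, b187, 3973, 345, 334, 331, .plain 0⟩,
  ⟨b176, b157, b187, 3973, 333, 359, 312, .plain 0⟩,
  ⟨b154, b155, b188, 3938, 382, 338, 277, .plain 6⟩,
  ⟨b152, b171, b189, 3938, 337, 383, 304, .plain 5⟩,
  ⟨b171, b175, b189, 3981, 348, 336, 311, .arc b110 5 2⟩,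
  ⟨b154, b188, b190, 3932, 402, 339, 335, .plain 6⟩,
  ⟨b160, b154, b190, 3932, 338, 352, 284, .plain 6⟩,
  ⟨b177, b183, b191, 3979, 357, 393, 327, .arc b68 6 3⟩,
  ⟨b167, b184, b192, 3978, 372, 342, 330, .arc b297 1 4⟩,
  ⟨b179, b167, b192, 3978, 341, 404, 318, .arc b297 1 4⟩,
  ⟨b170, b180, b193, 3982, 409, 344, 320, .arc b297 2 0⟩,
  ⟨b185, b170, b193, 3982, 343, 345, 331, .arc b297 2 0⟩,
  ⟨b187, b185, b193, 3993, 344, 355, 333, .arc b297 2 0⟩,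
  ⟨b144, b176, b194, 3921, 360, 347, 312, .plain 0⟩,
  ⟨b181, b144, b194, 3844, 346, 419, 321, .plain 0⟩,
  ⟨b189, b175, b195, 3981, 350, 399, 337, .arc b110 5 2⟩,
  ⟨b175, b173, b196, 3968, 389, 350, 310, .plain 2⟩,
  ⟨b195, b175, b196, 3985, 349, 397, 348, .plain 2⟩,
  ⟨b159, b160, b197, 3933, 352, 353, 286, .plain 6⟩,
  ⟨b160, b190, b197, 3933, 403, 351, 339, .plain 6⟩,
  ⟨b178, b159, b197, 3957, 351, 354, 316, .plain 6⟩,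
  ⟨b186, b178, b197, 3983, 353, 386, 332, .plain 6⟩,
  ⟨b187, b193, b198, 3993, 410, 395, 345, .arc b297 2 0⟩,
  ⟨b183, b142, b199, 3841, 358, 357, 326, .plain 6⟩,
  ⟨b191, b183, b199, 3977, 356, 376, 340, .arc b68 6 3⟩,
  ⟨b199, b142, b200, 3854, 392, 390, 356, .plain 6⟩,
  ⟨b176, b187, b201, 3973, 396, 360, 334, .plain 0⟩,
  ⟨b194, b176, b201, 3950, 359, 426, 346, .plain 0⟩,
  ⟨b158, b138, b202, 3869, 366, 362, 281, .plain 5⟩,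
  ⟨b182, b158, b202, 3918, 361, 374, 324, .plain 3⟩,
  ⟨b125, b139, b203, 3820, 365, 364, 238, .plain 5⟩,
  ⟨b138, b125, b203, 3679, 363, 366, 236, .plain 5⟩,
  ⟨b139, b152, b203, 3811, 384, 363, 269, .plain 5⟩,
  ⟨b202, b138, b203, 3679, 364, 452, 361, .plain 5⟩,
  ⟨b168, b177, b204, 3951, 394, 387, 315, .plain 3⟩,
  ⟨b142, b169, b205, 3811, 369, 416, 300, .plain 6⟩,
  ⟨b169, b181, b205, 3895, 420, 368, 322, .plain 5⟩,
  ⟨b172, b153, b206, 3904, 375, 371, 305, .plain 3⟩,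
  ⟨b184, b172, b206, 3914, 370, 372, 329, .plain 3⟩,
  ⟨b192, b184, b206, 3896, 371, 443, 341, .plain 3⟩,
  ⟨b153, b182, b207, 3887, 374, 375, 325, .plain 3⟩,
  ⟨b182, b202, b207, 3899, 442, 373, 362, .plain 3⟩,
  ⟨b206, b153, b207, 3887, 373, 498, 370, .plain 3⟩,
  ⟨b191, b199, b208, 3977, 391, 414, 357, .arc b68 6 3⟩,
  ⟨b134, b143, b209, 3847, 378, 380, 251, .plain 1⟩,
  ⟨b143, b146, b209, 3871, 379, 377, 258, .plain 1⟩,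
  ⟨b146, b163, b209, 3878, 381, 378, 290, .plain 1⟩,
  ⟨b155, b134, b209, 3839, 377, 382, 275, .plain 1⟩,
  ⟨b163, b179, b209, 3858, 422, 379, 319, .plain 1⟩,
  ⟨b188, b155, b209, 3772, 380, 509, 335, .plain 1⟩,
  ⟨b152, b189, b210, 3899, 401, 384, 336, .plain 5⟩,
  ⟨b203, b152, b210, 3804, 383, 423, 365, .plain 5⟩,
  ⟨b174, b186, b211, 3961, 386, 407, 332, .plain 2⟩,
  ⟨b186, b197, b211, 3963, 448, 385, 354, .plain 2⟩,
  ⟨b168, b204, b212, 3942, 430, 388, 367, .plain 3⟩,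
  ⟨b173, b168, b212, 3942, 387, 389, 307, .plain 3⟩,
  ⟨b196, b173, b212, 3954, 388, 398, 349, .plain 2⟩,
  ⟨b199, b200, b213, 3994, 413, 391, 358, .arc b68 6 3⟩,
  ⟨b208, b199, b213, 3994, 390, 433, 376, .arc b68 6 3⟩,
  ⟨b200, b142, b214, 3842, 417, 412, 358, .plain 6⟩,
  ⟨b177, b191, b215, 3952, 415, 394, 340, .plain 3⟩,
  ⟨b204, b177, b215, 3952, 393, 429, 367, .plain 3⟩,
  ⟨b187, b198, b216, 3976, 411, 396, 355, .arc b297 2 0⟩,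
  ⟨b201, b187, b216, 3976, 395, 427, 359, .arc b297 2 0⟩,
  ⟨b195, b196, b217, 3966, 398, 400, 350, .plain 2⟩,
  ⟨b196, b212, b217, 3954, 432, 397, 389, .plain 2⟩,
  ⟨b189, b195, b218, 3979, 400, 401, 348, .arc b110 5 2⟩,
  ⟨b195, b217, b218, 3960, 425, 399, 397, .plain 2⟩,
  ⟨b210, b189, b218, 3979, 399, 437, 383, .arc b110 5 2⟩,
  ⟨b190, b188, b219, 3944, 511, 403, 338, .plain 6⟩,
  ⟨b197, b190, b219, 3935, 402, 424, 352, .plain 6⟩,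
  ⟨b179, b192, b220, 3942, 444, 421, 342, .plain 1⟩,
  ⟨b164, b165, b221, 3860, 406, 408, 294, .plain 2⟩,
  ⟨b165, b174, b221, 3896, 407, 405, 309, .plain 2⟩,
  ⟨b174, b211, b221, 3914, 449, 406, 385, .plain 2⟩,
  ⟨b180, b164, b221, 3856, 405, 409, 320, .plain 2⟩,
  ⟨b193, b180, b221, 3832, 408, 410, 343, .plain 2⟩,
  ⟨b198, b193, b221, 3822, 409, 411, 355, .plain 2⟩,
  ⟨b216, b198, b221, 3762, 410, 490, 395, .plain 2⟩,
  ⟨b200, b214, b222, 3980, 418, 413, 392, .arc b68 6 3⟩,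
  ⟨b213, b200, b222, 3980, 412, 434, 390, .arc b68 6 3⟩,
  ⟨b191, b208, b223, 3966, 435, 415, 376, .plain 3⟩,
  ⟨b215, b191, b223, 3958, 414, 431, 393, .plain 3⟩,
  ⟨b142, b205, b224, 3804, 436, 417, 368, .plain 6⟩,
  ⟨b214, b142, b224, 3804, 416, 418, 392, .plain 6⟩,
  ⟨b222, b214, b224, 3977, 417, 440, 412, .arc b68 6 3⟩,
  ⟨b181, b194, b225, 3910, 428, 420, 347, .plain 5⟩,
  ⟨b205, b181, b225, 3895, 419, 468, 369, .plain 5⟩,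
  ⟨b179, b220, b226, 3918, 459, 422, 404, .plain 1⟩,
  ⟨b209, b179, b226, 3858, 421, 446, 381, .plain 1⟩,
  ⟨b203, b210, b227, 3804, 439, 450, 384, .plain 5⟩,
  ⟨b197, b219, b228, 3935, 480, 447, 403, .plain 2⟩,
  ⟨b218, b217, b229, 3960, 456, 438, 400, .plain 2⟩,
  ⟨b194, b201, b230, 3932, 427, 428, 360, .plain 5⟩,
  ⟨b201, b216, b230, 3970, 491, 426, 396, .plain 5⟩,
  ⟨b225, b194, b230, 3861, 426, 488, 419, .plain 5⟩,
  ⟨b204, b215, b231, 3958, 431, 430, 394, .plain 3⟩,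
  ⟨b212, b204, b231, 3959, 429, 432, 387, .plain 3⟩,
  ⟨b215, b223, b231, 3921, 524, 429, 415, .plain 3⟩,
  ⟨b217, b212, b231, 3966, 430, 455, 398, .plain 2⟩,
  ⟨b208, b213, b232, 3978, 434, 435, 391, .plain 3⟩,
  ⟨b213, b222, b232, 3972, 462, 433, 413, .plain 3⟩,
  ⟨b223, b208, b232, 3967, 433, 478, 414, .plain 3⟩,
  ⟨b224, b205, b233, 3899, 445, 441, 416, .plain 6⟩,
  ⟨b210, b218, b234, 3977, 438, 439, 401, .arc b110 5 2⟩,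
  ⟨b218, b229, b234, 3976, 474, 437, 425, .plain 2⟩,
  ⟨b227, b210, b234, 3977, 437, 451, 423, .arc b110 5 2⟩,
  ⟨b222, b224, b235, 3977, 441, 461, 418, .arc b68 6 3⟩,
  ⟨b224, b233, b235, 3979, 454, 440, 436, .arc b68 6 3⟩,
  ⟨b207, b202, b236, 3899, 453, 499, 374, .plain 3⟩,
  ⟨b192, b206, b237, 3860, 471, 444, 372, .plain 3⟩,
  ⟨b220, b192, b237, 3926, 443, 458, 404, .plain 3⟩,
  ⟨b233, b205, b238, 3938, 469, 465, 436, .plain 6⟩,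
  ⟨b209, b226, b239, 3918, 460, 472, 422, .plain 1⟩,
  ⟨b197, b228, b240, 3916, 481, 448, 424, .plain 2⟩,
  ⟨b211, b197, b240, 3916, 447, 449, 386, .plain 2⟩,
  ⟨b221, b211, b240, 3904, 448, 506, 407, .plain 2⟩,
  ⟨b203, b227, b241, 3842, 451, 457, 423, .plain 5⟩,
  ⟨b227, b234, b241, 3980, 463, 450, 439, .arc b110 5 2⟩,
  ⟨b202, b203, b242, 3739, 497, 453, 366, .plain 5⟩,
  ⟨b236, b202, b242, 3943, 452, 500, 442, .plain 3⟩,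
  ⟨b235, b233, b243, 3979, 466, 493, 441, .arc b68 6 3⟩,
  ⟨b217, b231, b244, 3963, 525, 456, 432, .plain 2⟩,
  ⟨b229, b217, b244, 3963, 455, 473, 425, .plain 2⟩,
  ⟨b203, b241, b245, 3854, 464, 482, 450, .plain 5⟩,
  ⟨b220, b237, b246, 3976, 486, 459, 444, .arc b110 3 0⟩,
  ⟨b226, b220, b246, 3976, 458, 460, 421, .arc b110 3 0⟩,
  ⟨b239, b226, b246, 3970, 459, 483, 446, .plain 0⟩,
  ⟨b222, b235, b247, 3976, 495, 462, 440, .plain 3⟩,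
  ⟨b232, b222, b247, 3965, 461, 479, 434, .plain 3⟩,
  ⟨b241, b234, b248, 3980, 475, 464, 451, .arc b110 5 2⟩,
  ⟨b245, b241, b248, 3994, 463, 467, 457, .arc b110 5 2⟩,
  ⟨b233, b238, b249, 3981, 470, 466, 445, .arc b68 6 3⟩,
  ⟨b243, b233, b249, 3981, 465, 477, 454, .arc b68 6 3⟩,
  ⟨b245, b248, b250, 3994, 476, 504, 464, .arc b110 5 2⟩,
  ⟨b205, b225, b251, 3911, 489, 469, 420, .plain 5⟩,
  ⟨b238, b205, b251, 3911, 468, 470, 445, .plain 5⟩,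
  ⟨b249, b238, b251, 3969, 469, 519, 465, .plain 5⟩,
  ⟨b237, b206, b252, 3856, 502, 485, 443, .plain 3⟩,
  ⟨b209, b239, b253, 3911, 484, 510, 446, .plain 1⟩,
  ⟨b229, b244, b254, 3965, 516, 474, 456, .plain 2⟩,
  ⟨b234, b229, b254, 3965, 473, 475, 438, .plain 2⟩,
  ⟨b248, b234, b254, 3972, 474, 476, 463, .plain 2⟩,
  ⟨b250, b248, b254, 3978, 475, 515, 467, .plain 2⟩,
  ⟨b243, b249, b255, 3985, 520, 494, 466, .plain 3⟩,
  ⟨b223, b232, b256, 3924, 479, 523, 435, .plain 3⟩,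
  ⟨b232, b247, b256, 3965, 496, 478, 462, .plain 3⟩,
  ⟨b228, b219, b257, 3923, 512, 481, 424, .plain 2⟩,
  ⟨b240, b228, b257, 3904, 480, 527, 447, .plain 2⟩,
  ⟨b203, b245, b258, 3841, 505, 513, 457, .plain 5⟩,
  ⟨b239, b246, b259, 3970, 487, 484, 460, .plain 0⟩,
  ⟨b253, b239, b259, 3968, 483, 529, 472, .plain 0⟩,
  ⟨b237, b252, b260, 3974, 503, 486, 471, .arc b110 3 0⟩,
  ⟨b246, b237, b260, 3974, 485, 487, 458, .arc b110 3 0⟩,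
  ⟨b259, b246, b260, 3968, 486, 541, 483, .plain 0⟩,
  ⟨b225, b230, b261, 3818, 492, 489, 428, .plain 5⟩,
  ⟨b251, b225, b261, 3934, 488, 557, 468, .plain 5⟩,
  ⟨b216, b221, b262, 3738, 507, 491, 411, .plain 2⟩,
  ⟨b230, b216, b262, 3897, 490, 492, 427, .plain 5⟩,
  ⟨b261, b230, b262, 3754, 491, 595, 488, .plain 5⟩,
  ⟨b235, b243, b263, 3960, 494, 495, 454, .plain 3⟩,
  ⟨b243, b255, b263, 3966, 548, 493, 477, .plain 3⟩,
  ⟨b247, b235, b263, 3960, 493, 496, 461, .plain 3⟩,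
  ⟨b256, b247, b263, 3963, 495, 545, 479, .plain 3⟩,
  ⟨b242, b203, b264, 3739, 514, 501, 452, .plain 5⟩,
  ⟨b206, b207, b265, 3738, 499, 534, 375, .plain 3⟩,
  ⟨b207, b236, b265, 3854, 500, 498, 442, .plain 3⟩,
  ⟨b236, b242, b265, 3896, 501, 499, 453, .plain 3⟩,
  ⟨b242, b264, b265, 3788, 615, 500, 497, .plain 6⟩,
  ⟨b252, b206, b266, 3832, 508, 503, 471, .plain 3⟩,
  ⟨b260, b252, b266, 3982, 502, 518, 485, .arc b110 3 0⟩,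
  ⟨b245, b250, b267, 3977, 517, 505, 467, .arc b110 5 2⟩,
  ⟨b258, b245, b267, 3977, 504, 530, 482, .arc b110 5 2⟩,
  ⟨b221, b240, b268, 3887, 533, 507, 449, .plain 2⟩,
  ⟨b262, b221, b268, 3738, 506, 556, 490, .plain 2⟩,
  ⟨b266, b206, b269, 3822, 535, 521, 502, .plain 3⟩,
  ⟨b188, b209, b270, 3666, 510, 511, 382, .plain 1⟩,
  ⟨b209, b253, b270, 3666, 540, 509, 472, .plain 1⟩,
  ⟨b219, b188, b270, 3728, 509, 512, 402, .plain 1⟩,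
  ⟨b257, b219, b270, 3837, 511, 528, 480, .plain 1⟩,
  ⟨b203, b258, b271, 3804, 531, 514, 482, .plain 5⟩,
  ⟨b264, b203, b271, 3801, 513, 537, 497, .plain 5⟩,
  ⟨b250, b254, b272, 3967, 516, 517, 476, .plain 2⟩,
  ⟨b254, b244, b272, 3924, 526, 515, 473, .plain 2⟩,
  ⟨b267, b250, b272, 3966, 515, 552, 504, .plain 2⟩,
  ⟨b260, b266, b273, 3982, 522, 542, 503, .arc b110 3 0⟩,
  ⟨b249, b251, b274, 3946, 558, 520, 470, .plain 5⟩,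
  ⟨b255, b249, b274, 3968, 519, 547, 477, .plain 3⟩,
  ⟨b266, b269, b275, 3993, 536, 522, 508, .arc b110 3 0⟩,
  ⟨b273, b266, b275, 3993, 521, 543, 518, .arc b110 3 0⟩,
  ⟨b223, b256, b276, 3835, 546, 524, 478, .plain 3⟩,
  ⟨b231, b223, b276, 3835, 523, 525, 431, .plain 3⟩,
  ⟨b244, b231, b276, 3890, 524, 526, 455, .plain 2⟩,
  ⟨b272, b244, b276, 3835, 525, 580, 516, .plain 2⟩,
  ⟨b240, b257, b277, 3855, 528, 532, 481, .plain 2⟩,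
  ⟨b257, b270, b277, 3970, 551, 527, 512, .plain 1⟩,
  ⟨b253, b259, b278, 3967, 544, 539, 484, .plain 0⟩,
  ⟨b258, b267, b279, 3979, 553, 531, 505, .arc b110 5 2⟩,
  ⟨b271, b258, b279, 3979, 530, 538, 513, .arc b110 5 2⟩,
  ⟨b240, b277, b280, 3849, 573, 533, 527, .plain 2⟩,
  ⟨b268, b240, b280, 3887, 532, 589, 506, .plain 2⟩,
  ⟨b206, b265, b281, 3738, 561, 535, 498, .plain 3⟩,
  ⟨b269, b206, b281, 3762, 534, 536, 508, .plain 3⟩,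
  ⟨b275, b269, b281, 3976, 535, 554, 521, .arc b110 3 0⟩,
  ⟨b264, b271, b282, 3902, 538, 570, 514, .plain 5⟩,
  ⟨b271, b279, b282, 3981, 555, 537, 531, .arc b110 5 2⟩,
  ⟨b253, b278, b283, 3899, 568, 540, 529, .plain 0⟩,
  ⟨b270, b253, b283, 3807, 539, 550, 510, .plain 1⟩,
  ⟨b259, b260, b284, 3966, 542, 544, 487, .plain 0⟩,
  ⟨b260, b273, b284, 3976, 543, 541, 518, .plain 0⟩,
  ⟨b273, b275, b284, 3973, 565, 542, 522, .plain 0⟩,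
  ⟨b278, b259, b284, 3966, 541, 567, 529, .plain 0⟩,
  ⟨b256, b263, b285, 3963, 549, 546, 496, .plain 3⟩,
  ⟨b276, b256, b285, 3890, 545, 606, 523, .plain 3⟩,
  ⟨b255, b274, b286, 3954, 560, 548, 520, .plain 3⟩,
  ⟨b263, b255, b286, 3954, 547, 549, 494, .plain 3⟩,
  ⟨b285, b263, b286, 3966, 548, 574, 545, .plain 3⟩,
  ⟨b270, b283, b287, 3970, 577, 551, 540, .plain 1⟩,
  ⟨b277, b270, b287, 3968, 550, 566, 528, .plain 1⟩,
  ⟨b267, b272, b288, 3958, 581, 553, 517, .plain 2⟩,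
  ⟨b279, b267, b288, 3952, 552, 563, 530, .plain 2⟩,
  ⟨b275, b281, b289, 3976, 562, 564, 536, .arc b110 3 0⟩,
  ⟨b282, b279, b290, 3981, 584, 571, 538, .arc b110 5 2⟩,
  ⟨b262, b268, b291, 3854, 591, 579, 507, .plain 2⟩,
  ⟨b251, b261, b292, 3914, 597, 558, 489, .plain 5⟩,
  ⟨b274, b251, b292, 3914, 557, 559, 519, .plain 5⟩,
  ⟨b274, b292, b293, 3931, 588, 560, 558, .plain 5⟩,
  ⟨b286, b274, b293, 3942, 559, 575, 547, .plain 1⟩,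
  ⟨b281, b265, b294, 3897, 616, 562, 534, .plain 6⟩,
  ⟨b289, b281, b294, 3970, 561, 603, 554, .plain 6⟩,
  ⟨b279, b288, b295, 3952, 582, 583, 553, .plain 2⟩,
  ⟨b275, b289, b296, 3973, 604, 565, 554, .plain 0⟩,
  ⟨b284, b275, b296, 3973, 564, 569, 543, .plain 0⟩,
  ⟨b277, b287, b297, 3968, 578, 572, 551, .plain 1⟩,
  ⟨b278, b284, b298, 3967, 569, 568, 544, .plain 0⟩,
  ⟨b283, b278, b298, 3831, 567, 576, 539, .plain 0⟩,
  ⟨b284, b296, b298, 3973, 605, 567, 565, .plain 0⟩,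
  ⟨b264, b282, b299, 3915, 571, 614, 537, .plain 6⟩,
  ⟨b282, b290, b299, 3955, 585, 570, 555, .plain 6⟩,
  ⟨b277, b297, b300, 3954, 600, 573, 566, .plain 2⟩,
  ⟨b280, b277, b300, 3849, 572, 586, 532, .plain 2⟩,
  ⟨b285, b286, b301, 3959, 575, 587, 549, .plain 1⟩,
  ⟨b286, b293, b301, 3942, 611, 574, 560, .plain 1⟩,
  ⟨b283, b298, b302, 3819, 656, 577, 568, .plain 0⟩,
  ⟨b287, b283, b302, 3966, 576, 578, 550, .plain 0⟩,
  ⟨b297, b287, b302, 3968, 577, 617, 566, .plain 0⟩,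
  ⟨b262, b291, b303, 3896, 592, 596, 556, .plain 2⟩,
  ⟨b272, b276, b304, 3835, 609, 581, 526, .plain 2⟩,
  ⟨b288, b272, b304, 3921, 580, 582, 552, .plain 2⟩,
  ⟨b295, b288, b304, 3958, 581, 593, 563, .plain 2⟩,
  ⟨b279, b295, b305, 3951, 594, 584, 563, .plain 2⟩,
  ⟨b290, b279, b305, 3953, 583, 585, 555, .plain 2⟩,
  ⟨b299, b290, b305, 3961, 584, 619, 571, .plain 6⟩,
  ⟨b280, b300, b306, 3904, 601, 590, 573, .plain 2⟩,
  ⟨b285, b301, b307, 3958, 612, 607, 574, .plain 1⟩,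
  ⟨b293, b292, b308, 3961, 599, 610, 559, .plain 5⟩,
  ⟨b268, b280, b309, 3899, 590, 591, 533, .plain 2⟩,
  ⟨b280, b306, b309, 3918, 602, 589, 586, .plain 2⟩,
  ⟨b291, b268, b309, 3899, 589, 592, 556, .plain 2⟩,
  ⟨b303, b291, b309, 3943, 591, 670, 579, .plain 2⟩,
  ⟨b295, b304, b310, 3959, 625, 594, 582, .plain 2⟩,
  ⟨b305, b295, b310, 3942, 593, 620, 583, .plain 2⟩,
  ⟨b261, b262, b311, 3754, 596, 597, 492, .plain 5⟩,
  ⟨b262, b303, b311, 3788, 672, 595, 579, .plain 5⟩,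
  ⟨b292, b261, b311, 3802, 595, 598, 557, .plain 5⟩,
  ⟨b292, b311, b312, 3915, 621, 599, 597, .plain 5⟩,
  ⟨b308, b292, b312, 3955, 598, 613, 588, .plain 5⟩,
  ⟨b300, b297, b313, 3967, 618, 601, 572, .plain 4⟩,
  ⟨b306, b300, b313, 3979, 600, 602, 586, .plain 4⟩,
  ⟨b309, b306, b313, 3869, 601, 671, 590, .plain 4⟩,
  ⟨b289, b294, b314, 3932, 637, 604, 562, .plain 6⟩,
  ⟨b296, b289, b314, 3950, 603, 605, 564, .plain 0⟩,
  ⟨b298, b296, b314, 3921, 604, 642, 569, .plain 0⟩,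
  ⟨b276, b285, b315, 3835, 607, 608, 546, .plain 1⟩,
  ⟨b285, b307, b315, 3921, 627, 606, 587, .plain 1⟩,
  ⟨b276, b315, b316, 3835, 623, 609, 606, .plain 1⟩,
  ⟨b304, b276, b316, 3890, 608, 624, 580, .plain 1⟩,
  ⟨b293, b308, b317, 3953, 613, 611, 588, .plain 1⟩,
  ⟨b301, b293, b317, 3951, 610, 612, 575, .plain 1⟩,
  ⟨b307, b301, b317, 3952, 611, 626, 587, .plain 1⟩,
  ⟨b308, b312, b317, 3981, 622, 610, 599, .arc b297 4 1⟩,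
  ⟨b264, b299, b318, 3802, 635, 615, 570, .plain 6⟩,
  ⟨b265, b264, b318, 3754, 614, 616, 501, .plain 6⟩,
  ⟨b294, b265, b318, 3754, 615, 636, 561, .plain 6⟩,
  ⟨b297, b302, b319, 3950, 658, 618, 578, .plain 0⟩,
  ⟨b313, b297, b319, 3950, 617, 657, 600, .plain 4⟩,
  ⟨b299, b305, b320, 3931, 620, 634, 585, .plain 6⟩,
  ⟨b305, b310, b320, 3942, 633, 619, 594, .plain 2⟩,
  ⟨b312, b311, b321, 3902, 674, 622, 598, .plain 4⟩,
  ⟨b317, b312, b321, 3981, 621, 630, 613, .arc b297 4 1⟩,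
  ⟨b316, b315, b322, 3924, 640, 628, 608, .plain 1⟩,
  ⟨b304, b316, b323, 3963, 629, 625, 609, .plain 1⟩,
  ⟨b310, b304, b323, 3966, 624, 632, 593, .plain 1⟩,
  ⟨b307, b317, b324, 3952, 631, 627, 612, .plain 1⟩,
  ⟨b315, b307, b324, 3958, 626, 639, 607, .plain 1⟩,
  ⟨b316, b322, b325, 3965, 647, 629, 623, .plain 1⟩,
  ⟨b323, b316, b325, 3963, 628, 659, 624, .plain 1⟩,
  ⟨b317, b321, b326, 3979, 675, 631, 622, .arc b297 4 1⟩,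
  ⟨b324, b317, b326, 3979, 630, 648, 626, .arc b297 4 1⟩,
  ⟨b310, b323, b327, 3954, 653, 633, 625, .plain 1⟩,
  ⟨b320, b310, b327, 3954, 632, 644, 620, .plain 1⟩,
  ⟨b299, b320, b328, 3914, 645, 635, 619, .plain 6⟩,
  ⟨b318, b299, b328, 3914, 634, 638, 614, .plain 6⟩,
  ⟨b294, b318, b329, 3818, 638, 637, 616, .plain 6⟩,
  ⟨b314, b294, b329, 3861, 636, 643, 603, .plain 6⟩,
  ⟨b318, b328, b329, 3934, 683, 636, 635, .plain 6⟩,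
  ⟨b315, b324, b330, 3966, 649, 640, 627, .plain 1⟩,
  ⟨b322, b315, b330, 3967, 639, 641, 623, .plain 1⟩,
  ⟨b322, b330, b331, 3978, 650, 646, 640, .plain 1⟩,
  ⟨b298, b314, b332, 3844, 643, 655, 605, .plain 0⟩,
  ⟨b314, b329, b332, 3910, 684, 642, 637, .plain 6⟩,
  ⟨b320, b327, b333, 3968, 654, 645, 633, .plain 1⟩,
  ⟨b328, b320, b333, 3946, 644, 662, 634, .plain 6⟩,
  ⟨b322, b331, b334, 3972, 652, 647, 641, .plain 1⟩,
  ⟨b325, b322, b334, 3965, 646, 660, 628, .plain 1⟩,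
  ⟨b324, b326, b335, 3977, 676, 649, 631, .arc b297 4 1⟩,
  ⟨b330, b324, b335, 3977, 648, 650, 639, .arc b297 4 1⟩,
  ⟨b331, b330, b335, 3994, 649, 651, 641, .arc b297 4 1⟩,
  ⟨b331, b335, b336, 3994, 677, 652, 650, .arc b297 4 1⟩,
  ⟨b334, b331, b336, 3980, 651, 663, 646, .arc b297 4 1⟩,
  ⟨b327, b323, b337, 3966, 661, 654, 632, .plain 1⟩,
  ⟨b333, b327, b337, 3985, 653, 664, 644, .plain 1⟩,
  ⟨b298, b332, b338, 3753, 680, 656, 642, .plain 0⟩,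
  ⟨b302, b298, b338, 3753, 655, 658, 576, .plain 0⟩,
  ⟨b313, b319, b338, 3885, 658, 673, 618, .plain 4⟩,
  ⟨b319, b302, b338, 3856, 656, 657, 617, .plain 0⟩,
  ⟨b323, b325, b339, 3960, 660, 661, 629, .plain 1⟩,
  ⟨b325, b334, b339, 3976, 668, 659, 647, .plain 1⟩,
  ⟨b337, b323, b339, 3960, 659, 665, 653, .plain 1⟩,
  ⟨b328, b333, b340, 3969, 666, 682, 645, .plain 6⟩,
  ⟨b334, b336, b341, 3980, 678, 667, 652, .arc b297 4 1⟩,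
  ⟨b333, b337, b342, 3981, 665, 666, 654, .arc b297 4 1⟩,
  ⟨b337, b339, b342, 3979, 669, 664, 661, .arc b297 4 1⟩,
  ⟨b340, b333, b342, 3981, 664, 685, 662, .arc b297 4 1⟩,
  ⟨b334, b341, b343, 3977, 679, 668, 663, .arc b297 4 1⟩,
  ⟨b339, b334, b343, 3977, 667, 669, 660, .arc b297 4 1⟩,
  ⟨b342, b339, b343, 3979, 668, 686, 665, .arc b297 4 1⟩,
  ⟨b303, b309, b344, 3739, 671, 672, 592, .plain 4⟩,
  ⟨b309, b313, b344, 3679, 673, 670, 602, .plain 4⟩,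
  ⟨b311, b303, b344, 3739, 670, 674, 596, .plain 4⟩,
  ⟨b313, b338, b344, 3679, 681, 671, 657, .plain 4⟩,
  ⟨b321, b311, b344, 3801, 672, 675, 621, .plain 4⟩,
  ⟨b326, b321, b344, 3804, 674, 676, 630, .plain 4⟩,
  ⟨b335, b326, b344, 3841, 675, 677, 648, .plain 4⟩,
  ⟨b336, b335, b344, 3854, 676, 678, 651, .plain 4⟩,
  ⟨b341, b336, b344, 3842, 677, 679, 663, .plain 4⟩,
  ⟨b343, b341, b344, 3804, 678, 687, 667, .plain 4⟩,
  ⟨b338, b332, b345, 3901, 689, 681, 655, .plain 0⟩,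
  ⟨b344, b338, b345, 3820, 680, 688, 673, .plain 4⟩,
  ⟨b328, b340, b346, 3911, 685, 683, 662, .plain 6⟩,
  ⟨b329, b328, b346, 3911, 682, 684, 638, .plain 6⟩,
  ⟨b332, b329, b346, 3895, 683, 689, 643, .plain 6⟩,
  ⟨b340, b342, b346, 3938, 686, 682, 666, .plain 4⟩,
  ⟨b342, b343, b346, 3899, 687, 685, 669, .plain 4⟩,
  ⟨b343, b344, b346, 3804, 688, 686, 679, .plain 4⟩,
  ⟨b344, b345, b346, 3811, 689, 687, 681, .plain 4⟩,
  ⟨b345, b332, b346, 3895, 684, 688, 680, .plain 6⟩]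
def bL : List Facet := bL0
def bg : Cfg := ⟨[b68, b110, b297], 432, 372, 16004341, 6913876⟩
def c0 : V := ⟨4096, 4096, 8096, 66715648, rfl⟩
def c1 : V := ⟨6310, 4368, 7416, 74113024, rfl⟩
def c2 : V := ⟨4967, 6149, 7416, 75907072, rfl⟩
def c3 : V := ⟨2754, 5877, 7416, 65728512, rfl⟩
def c4 : V := ⟨1882, 3824, 7416, 53747712, rfl⟩
def c5 : V := ⟨3225, 2043, 7416, 51953664, rfl⟩
def c6 : V := ⟨5438, 2315, 7416, 62132224, rfl⟩
def c7 : V := ⟨4096, 4096, 96, 33947648, rfl⟩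
def c8 : V := ⟨5877, 5438, 776, 49524736, rfl⟩
def c9 : V := ⟨3824, 6310, 776, 44687360, rfl⟩
def c10 : V := ⟨2043, 4967, 776, 31891456, rfl⟩
def c11 : V := ⟨2315, 2754, 776, 23941120, rfl⟩
def c12 : V := ⟨4368, 1882, 776, 28778496, rfl⟩
def c13 : V := ⟨6149, 3225, 776, 41574400, rfl⟩
def c14 : V := ⟨6971, 6262, 5840, 78123008, rfl⟩
def c15 : V := ⟨5647, 7751, 4583, 73650176, rfl⟩
def c16 : V := ⟨7267, 6485, 3609, 71110656, rfl⟩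
def c17 : V := ⟨8037, 4580, 4583, 70451200, rfl⟩
def c18 : V := ⟨3657, 7669, 5840, 70311936, rfl⟩
def c19 : V := ⟨1707, 7267, 4583, 55529472, rfl⟩
def c20 : V := ⟨3612, 8037, 3609, 62496768, rfl⟩
def c21 : V := ⟨783, 5502, 5840, 49664000, rfl⟩
def c22 : V := ⟨155, 3612, 4583, 34201600, rfl⟩
def c23 : V := ⟨441, 5647, 3609, 39718912, rfl⟩
def c24 : V := ⟨1221, 1930, 5840, 36827136, rfl⟩
def c25 : V := ⟨2545, 441, 4583, 31002624, rfl⟩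
def c26 : V := ⟨925, 1707, 3609, 25563136, rfl⟩
def c27 : V := ⟨4535, 523, 5840, 44638208, rfl⟩
def c28 : V := ⟨6485, 925, 4583, 49123328, rfl⟩
def c29 : V := ⟨4580, 155, 3609, 34177024, rfl⟩
def c30 : V := ⟨7409, 2690, 5840, 65286144, rfl⟩
def c31 : V := ⟨7751, 2545, 3609, 56954880, rfl⟩
def c32 : V := ⟨5502, 7409, 2352, 62517248, rfl⟩
def c33 : V := ⟨1930, 6971, 2352, 46092288, rfl⟩
def c34 : V := ⟨523, 3657, 2352, 26755072, rfl⟩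
def c35 : V := ⟨2690, 783, 2352, 23859200, rfl⟩
def c36 : V := ⟨6262, 1221, 2352, 40284160, rfl⟩
def c37 : V := ⟨7669, 4535, 2352, 59621376, rfl⟩

def cL0 : List Facet := [
  ⟨c0, c1, c2, 3644, 12, 1, 5, .plain 0⟩,
  ⟨c0, c2, c3, 3644, 17, 2, 0, .plain 0⟩,
  ⟨c0, c3, c4, 3644, 22, 3, 1, .plain 0⟩,
  ⟨c0, c4, c5, 3644, 27, 4, 2, .plain 0⟩,
  ⟨c0, c5, c6, 3644, 32, 5, 3, .plain 0⟩,
  ⟨c0, c6, c1, 3644, 37, 0, 4, .plain 0⟩,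
  ⟨c7, c9, c8, 3644, 46, 11, 7, .plain 0⟩,
  ⟨c7, c10, c9, 3644, 51, 6, 8, .plain 0⟩,
  ⟨c7, c11, c10, 3644, 56, 7, 9, .plain 0⟩,
  ⟨c7, c12, c11, 3644, 61, 8, 10, .plain 0⟩,
  ⟨c7, c13, c12, 3644, 66, 9, 11, .plain 0⟩,
  ⟨c7, c8, c13, 3644, 71, 10, 6, .plain 0⟩,
  ⟨c14, c2, c1, 3569, 0, 16, 13, .plain 1⟩,
  ⟨c14, c15, c2, 3235, 21, 12, 14, .plain 1⟩,
  ⟨c14, c16, c15, 3636, 43, 13, 15, .plain 1⟩,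
  ⟨c14, c17, c16, 3637, 69, 14, 16, .plain 1⟩,
  ⟨c14, c1, c17, 3236, 38, 15, 12, .plain 1⟩,
  ⟨c18, c3, c2, 3569, 1, 21, 18, .plain 2⟩,
  ⟨c18, c19, c3, 3235, 26, 17, 19, .plain 2⟩,
  ⟨c18, c20, c19, 3637, 48, 18, 20, .plain 2⟩,
  ⟨c18, c15, c20, 3636, 44, 19, 21, .plain 2⟩,
  ⟨c18, c2, c15, 3235, 13, 20, 17, .plain 2⟩,
  ⟨c21, c4, c3, 3569, 2, 26, 23, .plain 3⟩,
  ⟨c21, c22, c4, 3236, 31, 22, 24, .plain 3⟩,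
  ⟨c21, c23, c22, 3636, 53, 23, 25, .plain 3⟩,
  ⟨c21, c19, c23, 3636, 49, 24, 26, .plain 3⟩,
  ⟨c21, c3, c19, 3235, 18, 25, 22, .plain 3⟩,
  ⟨c24, c5, c4, 3569, 3, 31, 28, .plain 4⟩,
  ⟨c24, c25, c5, 3235, 36, 27, 29, .plain 4⟩,
  ⟨c24, c26, c25, 3636, 58, 28, 30, .plain 4⟩,
  ⟨c24, c22, c26, 3637, 54, 29, 31, .plain 4⟩,
  ⟨c24, c4, c22, 3236, 23, 30, 27, .plain 4⟩,
  ⟨c27, c6, c5, 3569, 4, 36, 33, .plain 5⟩,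
  ⟨c27, c28, c6, 3235, 41, 32, 34, .plain 5⟩,
  ⟨c27, c29, c28, 3637, 63, 33, 35, .plain 5⟩,
  ⟨c27, c25, c29, 3636, 59, 34, 36, .plain 5⟩,
  ⟨c27, c5, c25, 3235, 28, 35, 32, .plain 5⟩,
  ⟨c30, c1, c6, 3569, 5, 41, 38, .plain 6⟩,
  ⟨c30, c17, c1, 3236, 16, 37, 39, .plain 6⟩,
  ⟨c30, c31, c17, 3636, 68, 38, 40, .plain 6⟩,
  ⟨c30, c28, c31, 3636, 64, 39, 41, .plain 6⟩,
  ⟨c30, c6, c28, 3235, 33, 40, 37, .plain 6⟩,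
  ⟨c32, c16, c8, 3235, 70, 46, 43, .plain 4⟩,
  ⟨c32, c15, c16, 3636, 14, 42, 44, .plain 4⟩,
  ⟨c32, c20, c15, 3636, 20, 43, 45, .plain 4⟩,
  ⟨c32, c9, c20, 3236, 47, 44, 46, .plain 4⟩,
  ⟨c32, c8, c9, 3569, 6, 45, 42, .plain 4⟩,
  ⟨c33, c20, c9, 3236, 45, 51, 48, .plain 5⟩,
  ⟨c33, c19, c20, 3637, 19, 47, 49, .plain 5⟩,
  ⟨c33, c23, c19, 3636, 25, 48, 50, .plain 5⟩,
  ⟨c33, c10, c23, 3235, 52, 49, 51, .plain 5⟩,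
  ⟨c33, c9, c10, 3569, 7, 50, 47, .plain 5⟩,
  ⟨c34, c23, c10, 3235, 50, 56, 53, .plain 6⟩,
  ⟨c34, c22, c23, 3636, 24, 52, 54, .plain 6⟩,
  ⟨c34, c26, c22, 3637, 30, 53, 55, .plain 6⟩,
  ⟨c34, c11, c26, 3235, 57, 54, 56, .plain 6⟩,
  ⟨c34, c10, c11, 3569, 8, 55, 52, .plain 6⟩,
  ⟨c35, c26, c11, 3235, 55, 61, 58, .plain 1⟩,
  ⟨c35, c25, c26, 3636, 29, 57, 59, .plain 1⟩,
  ⟨c35, c29, c25, 3636, 35, 58, 60, .plain 1⟩,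
  ⟨c35, c12, c29, 3236, 62, 59, 61, .plain 1⟩,
  ⟨c35, c11, c12, 3569, 9, 60, 57, .plain 1⟩,
  ⟨c36, c29, c12, 3236, 60, 66, 63, .plain 2⟩,
  ⟨c36, c28, c29, 3637, 34, 62, 64, .plain 2⟩,
  ⟨c36, c31, c28, 3636, 40, 63, 65, .plain 2⟩,
  ⟨c36, c13, c31, 3235, 67, 64, 66, .plain 2⟩,
  ⟨c36, c12, c13, 3569, 10, 65, 62, .plain 2⟩,
  ⟨c37, c31, c13, 3235, 65, 71, 68, .plain 3⟩,
  ⟨c37, c17, c31, 3636, 39, 67, 69, .plain 3⟩,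
  ⟨c37, c16, c17, 3637, 15, 68, 70, .plain 3⟩,
  ⟨c37, c8, c16, 3235, 42, 69, 71, .plain 3⟩,
  ⟨c37, c13, c8, 3569, 11, 70, 67, .plain 3⟩]
def cL : List Facet := cL0
def cg : Cfg := ⟨[], 372, 307, 16002906, 5953082⟩

/-! ### Running the tests -/
theorem a_c : cfgTest ag aL = true := by decide +kernel
theorem a_f : facetsTest ag aL aL = true := by decide +kernel
theorem a_p0 : colTest ag aL 0 = true := by decide +kernel
theorem a_p1 : colTest ag aL 1 = true := by decide +kernel
theorem a_p2 : colTest ag aL 2 = true := by decide +kernel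
theorem a_p3 : colTest ag aL 3 = true := by decide +kernel
theorem a_p4 : colTest ag aL 4 = true := by decide +kernel
theorem a_p5 : colTest ag aL 5 = true := by decide +kernel
theorem a_p6 : colTest ag aL 6 = true := by decide +kernel
theorem a_coloring (κ : ℝ) (h1 : (432 : ℝ) / 1000 ≤ κ) (h2 : κ ≤ (500 : ℝ) / 1000) :
    ∃ f : E → Fin 7, ∀ x y : E, x ≠ 0 → y ≠ 0 → inner ℝ x y = κ * (‖x‖ * ‖y‖) → f x ≠ f y := by
  refine coloring_of_tests ag aL (by unfold aL aL0; exact List.cons_ne_nil _ _) a_c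
    (List.all_eq_true.mp a_f) ?_ κ (by simpa [ag] using h1) (by simpa [ag] using h2)
  intro k hk
  interval_cases k
  exacts [a_p0, a_p1, a_p2, a_p3, a_p4, a_p5, a_p6]
theorem b_c : cfgTest bg bL = true := by decide +kernel
theorem b_f : facetsTest bg bL bL = true := by decide +kernel
theorem b_p0 : colTest bg bL 0 = true := by decide +kernel
theorem b_p1 : colTest bg bL 1 = true := by decide +kernel
theorem b_p2 : colTest bg bL 2 = true := by decide +kernel
theorem b_p3 : colTest bg bL 3 = true := by decide +kernel
theorem b_p4 : colTest bg bL 4 = true := by decide +kernel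
theorem b_p5 : colTest bg bL 5 = true := by decide +kernel
theorem b_p6 : colTest bg bL 6 = true := by decide +kernel
theorem b_coloring (κ : ℝ) (h1 : (372 : ℝ) / 1000 ≤ κ) (h2 : κ ≤ (432 : ℝ) / 1000) :
    ∃ f : E → Fin 7, ∀ x y : E, x ≠ 0 → y ≠ 0 → inner ℝ x y = κ * (‖x‖ * ‖y‖) → f x ≠ f y := by
  refine coloring_of_tests bg bL (by unfold bL bL0; exact List.cons_ne_nil _ _) b_c
    (List.all_eq_true.mp b_f) ?_ κ (by simpa [bg] using h1) (by simpa [bg] using h2)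
  intro k hk
  interval_cases k
  exacts [b_p0, b_p1, b_p2, b_p3, b_p4, b_p5, b_p6]
theorem c_c : cfgTest cg cL = true := by decide +kernel
theorem c_f : facetsTest cg cL cL = true := by decide +kernel
theorem c_p0 : colTest cg cL 0 = true := by decide +kernel
theorem c_p1 : colTest cg cL 1 = true := by decide +kernel
theorem c_p2 : colTest cg cL 2 = true := by decide +kernel
theorem c_p3 : colTest cg cL 3 = true := by decide +kernel
theorem c_p4 : colTest cg cL 4 = true := by decide +kernel
theorem c_p5 : colTest cg cL 5 = true := by decide +kernel
theorem c_p6 : colTest cg cL 6 = true := by decide +kernel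
theorem c_coloring (κ : ℝ) (h1 : (307 : ℝ) / 1000 ≤ κ) (h2 : κ ≤ (372 : ℝ) / 1000) :
    ∃ f : E → Fin 7, ∀ x y : E, x ≠ 0 → y ≠ 0 → inner ℝ x y = κ * (‖x‖ * ‖y‖) → f x ≠ f y := by
  refine coloring_of_tests cg cL (by unfold cL cL0; exact List.cons_ne_nil _ _) c_c
    (List.all_eq_true.mp c_f) ?_ κ (by simpa [cg] using h1) (by simpa [cg] using h2)
  intro k hk
  interval_cases k
  exacts [c_p0, c_p1, c_p2, c_p3, c_p4, c_p5, c_p6]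
end Sph7
theorem sphere_seven_coloring_small_radius :
    ∀ r : ℝ, (0.85 : ℝ) ≤ r → r ≤ 1 →
      ∃ f : {x : EuclideanSpace ℝ (Fin 3) // ‖x‖ = r} → Fin 7,
        ∀ x y : {x : EuclideanSpace ℝ (Fin 3) // ‖x‖ = r},
          ‖(x : EuclideanSpace ℝ (Fin 3)) - (y : EuclideanSpace ℝ (Fin 3))‖ = 1 →
            f x ≠ f y := by
  intro r hr1 hr2
  have hr0 : 0 < r := by linarith [show (0 : ℝ) < 0.85 by norm_num]
  have hr2p : 0 < r ^ 2 := by positivity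
  have hlow : (0.7225 : ℝ) ≤ r ^ 2 := by nlinarith
  have hupp : r ^ 2 ≤ 1 := by nlinarith
  obtain ⟨κ, hκ⟩ : ∃ κ : ℝ, κ * r ^ 2 = r ^ 2 - 1 / 2 :=
    ⟨(r ^ 2 - 1 / 2) / r ^ 2, by field_simp⟩
  have h1 : (307 : ℝ) / 1000 ≤ κ := by
    by_contra h
    push Not at h
    nlinarith
  have h2 : κ ≤ (500 : ℝ) / 1000 := by
    by_contra h
    push Not at h
    nlinarith
  have key : ∃ f : EuclideanSpace ℝ (Fin 3) → Fin 7, ∀ x y : EuclideanSpace ℝ (Fin 3),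
      x ≠ 0 → y ≠ 0 → inner ℝ x y = κ * (‖x‖ * ‖y‖) → f x ≠ f y := by
    rcases le_total κ ((372 : ℝ) / 1000) with h3 | h3
    · exact Sph7.c_coloring κ h1 h3
    rcases le_total κ ((432 : ℝ) / 1000) with h4 | h4
    · exact Sph7.b_coloring κ h3 h4
    · exact Sph7.a_coloring κ h4 h2
  obtain ⟨f, hf⟩ := key
  refine ⟨fun x => f x, ?_⟩
  rintro ⟨x, hx⟩ ⟨y, hy⟩ hxy
  have hxy' : ‖x - y‖ = 1 := hxy
  refine hf x y ?_ ?_ ?_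
  · rw [← norm_pos_iff, hx]; exact hr0
  · rw [← norm_pos_iff, hy]; exact hr0
  · have h := norm_sub_sq_real x y
    rw [hxy', hx, hy] at h
    rw [hx, hy]
    linarith [pow_two r]
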